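/- For all integers n ≥ 2 and d ≥ 1 there exists a real constant C > 0, depending only on n and d, with the following property. Let p be a prime, k ≥ 1, K = GaloisField p k, q = p^k, and let f ∈ MvPolynomial (Fin n) K have total degree d and be such that the image of f in MvPolynomial (Fin n) (AlgebraicClosure K) under the algebra map is irreducible (f is absolutely irreducible). Then the number N of points x ∈ K^n with f(x) = 0 satisfies |N − q^{n−1}| ≤ C·q^{n−1}/√q. -/

import Mathlib

open Polynomial

namespace LW

/-- A multiplicative filtration of a ring by additive subgroups. -/
structure Filt (R : Type*) [CommRing R] where
  S : ℤ → AddSubgroup R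
  one_mem : 1 ∈ S 0
  mul_mem : ∀ {a b : ℤ} {x y : R}, x ∈ S a → y ∈ S b → x * y ∈ S (a + b)
  mono : ∀ {a b : ℤ}, a ≤ b → S a ≤ S b

namespace Filt

variable {R : Type*} [CommRing R] (𝒮 : Filt R)

lemma pow_mem {a : ℤ} {x : R} (hx : x ∈ 𝒮.S a) (n : ℕ) : x ^ n ∈ 𝒮.S (n * a) := by
  induction n with
  | zero => simpa using 𝒮.one_mem
  | succ n ih =>
    rw [pow_succ]
    have := 𝒮.mul_mem ih hx
    convert this using 2
    push_cast; ring

lemma prod_mem {ι : Type*} (s : Finset ι) (f : ι → R) (w : ι → ℤ)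
    (h : ∀ i ∈ s, f i ∈ 𝒮.S (w i)) : ∏ i ∈ s, f i ∈ 𝒮.S (∑ i ∈ s, w i) := by
  classical
  induction s using Finset.induction with
  | empty => simpa using 𝒮.one_mem
  | insert a s ha ih =>
    rw [Finset.prod_insert ha, Finset.sum_insert ha]
    exact 𝒮.mul_mem (h a (by simp)) (ih fun i hi => h i (by simp [hi]))

lemma det_mem {ι : Type*} [Fintype ι] [DecidableEq ι] (M : Matrix ι ι R) (w : ι → ℤ)
    (h : ∀ i j, M i j ∈ 𝒮.S (w j)) : M.det ∈ 𝒮.S (∑ j, w j) := by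
  rw [Matrix.det_apply]
  refine AddSubgroup.sum_mem _ fun σ _ => ?_
  have := 𝒮.prod_mem Finset.univ (fun i => M (σ i) i) w (fun i _ => h _ _)
  rcases Int.units_eq_one_or (Equiv.Perm.sign σ) with h1 | h1 <;> rw [h1]
  · simpa using this
  · simpa using this

lemma resultant_mem (f g : R[X]) (m n : ℕ) {a b : ℤ} (hf : ∀ i, f.coeff i ∈ 𝒮.S a)
    (hg : ∀ i, g.coeff i ∈ 𝒮.S b) : resultant f g m n ∈ 𝒮.S (m * b + n * a) := by
  have := 𝒮.det_mem (sylvester f g m n) (fun j => j.addCases (fun _ => b) (fun _ => a)) ?_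
  · rw [resultant]; simpa [Fin.sum_univ_add] using this
  · intro i j
    induction j using Fin.addCases with
    | left j =>
      simp only [sylvester, Matrix.of_apply, Fin.addCases_left]
      split_ifs
      · exact hg _
      · exact AddSubgroup.zero_mem _
    | right j =>
      simp only [sylvester, Matrix.of_apply, Fin.addCases_right]
      split_ifs
      · exact hf _
      · exact AddSubgroup.zero_mem _

/-- The trivial filtration. -/
def triv (R : Type*) [CommRing R] : Filt R where
  S k := if 0 ≤ k then ⊤ else ⊥
  one_mem := by simp
  mul_mem := by
    intro a b x y hx hy
    by_cases ha : 0 ≤ a <;> by_cases hb : 0 ≤ b <;>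
      simp only [ha, hb, if_true, if_false, AddSubgroup.mem_bot] at hx hy
    · rw [if_pos (by omega)]; trivial
    · subst hy; simp
    · subst hx; simp
    · subst hx; simp
  mono := by
    intro a b hab
    by_cases ha : 0 ≤ a
    · simp [ha, ha.trans hab]
    · simp [ha]

lemma mem_triv {k : ℤ} {x : R} : x ∈ (triv R).S k ↔ x = 0 ∨ 0 ≤ k := by
  by_cases h : 0 ≤ k <;> simp [triv, h]

/-- Filtration on polynomials: the coefficient of `X^j` has to be in degree `T + c j`. -/
def poly (c : ℤ) : Filt R[X] where
  S T :=
    { carrier := {p | ∀ j : ℕ, p.coeff j ∈ 𝒮.S (T + c * j)}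
      add_mem' := fun {a b} ha hb j => by
        rw [coeff_add]; exact AddSubgroup.add_mem _ (ha j) (hb j)
      zero_mem' := fun j => by simp
      neg_mem' := fun {a} ha j => by
        rw [coeff_neg]; exact AddSubgroup.neg_mem _ (ha j) }
  one_mem := by
    intro j
    rw [coeff_one]
    split_ifs with h
    · subst h; simpa using 𝒮.one_mem
    · exact AddSubgroup.zero_mem _
  mul_mem := by
    intro a b x y hx hy j
    rw [coeff_mul]
    refine AddSubgroup.sum_mem _ fun ij hij => ?_
    rw [Finset.HasAntidiagonal.mem_antidiagonal] at hij
    have := 𝒮.mul_mem (hx ij.1) (hy ij.2)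
    convert this using 2
    rw [← hij]; push_cast; ring
  mono := by
    intro a b hab p hp j
    exact 𝒮.mono (by omega) (hp j)

lemma mem_poly {c : ℤ} {T : ℤ} {p : R[X]} :
    p ∈ (𝒮.poly c).S T ↔ ∀ j : ℕ, p.coeff j ∈ 𝒮.S (T + c * j) := Iff.rfl

/-- Filtration on power series. -/
def ps (c : ℤ) : Filt (PowerSeries R) where
  S T :=
    { carrier := {p | ∀ j : ℕ, PowerSeries.coeff j p ∈ 𝒮.S (T + c * j)}
      add_mem' := fun {a b} ha hb j => by
        rw [map_add]; exact AddSubgroup.add_mem _ (ha j) (hb j)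
      zero_mem' := fun j => by simp
      neg_mem' := fun {a} ha j => by
        rw [map_neg]; exact AddSubgroup.neg_mem _ (ha j) }
  one_mem := by
    intro j
    rw [PowerSeries.coeff_one]
    split_ifs with h
    · subst h; simpa using 𝒮.one_mem
    · exact AddSubgroup.zero_mem _
  mul_mem := by
    intro a b x y hx hy j
    rw [PowerSeries.coeff_mul]
    refine AddSubgroup.sum_mem _ fun ij hij => ?_
    rw [Finset.HasAntidiagonal.mem_antidiagonal] at hij
    have := 𝒮.mul_mem (hx ij.1) (hy ij.2)
    convert this using 2
    rw [← hij]; push_cast; ring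
  mono := by
    intro a b hab p hp j
    exact 𝒮.mono (by omega) (hp j)

lemma mem_ps {c : ℤ} {T : ℤ} {p : PowerSeries R} :
    p ∈ (𝒮.ps c).S T ↔ ∀ j : ℕ, PowerSeries.coeff j p ∈ 𝒮.S (T + c * j) := Iff.rfl

lemma ps_C {c T : ℤ} {x : R} (hx : x ∈ 𝒮.S T) : PowerSeries.C x ∈ (𝒮.ps c).S T := by
  intro j
  rw [PowerSeries.coeff_C]
  split_ifs with h
  · subst h; simpa using hx
  · exact AddSubgroup.zero_mem _

lemma ps_X {c : ℤ} : (PowerSeries.X : PowerSeries R) ∈ (𝒮.ps c).S (-c) := by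
  intro j
  rw [PowerSeries.coeff_X]
  split_ifs with h
  · subst h; simpa using 𝒮.one_mem
  · exact AddSubgroup.zero_mem _

lemma poly_C {c T : ℤ} {x : R} (hx : x ∈ 𝒮.S T) : C x ∈ (𝒮.poly c).S T := by
  intro j
  rw [coeff_C]
  split_ifs with h
  · subst h; simpa using hx
  · exact AddSubgroup.zero_mem _

lemma poly_X {c : ℤ} : (X : R[X]) ∈ (𝒮.poly c).S (-c) := by
  intro j
  rw [coeff_X]
  split_ifs with h
  · subst h; simpa using 𝒮.one_mem
  · exact AddSubgroup.zero_mem _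

/-- Evaluation respects the filtration. -/
lemma eval₂_mem {Q : Type*} [CommRing Q] (𝒬 : Filt Q) (φ : Q →+* R) (p : Q[X]) (x : R)
    {T c : ℤ} (hφ : ∀ k, ∀ a ∈ 𝒬.S k, φ a ∈ 𝒮.S k)
    (hp : p ∈ (𝒬.poly c).S T) (hx : x ∈ 𝒮.S (-c)) : p.eval₂ φ x ∈ 𝒮.S T := by
  rw [eval₂_eq_sum_range]
  refine AddSubgroup.sum_mem _ fun i _ => ?_
  have := 𝒮.mul_mem (hφ _ _ (hp i)) (𝒮.pow_mem hx i)
  convert this using 2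
  ring

/-- Degree filtration on `R[X]`. -/
abbrev deg (R : Type*) [CommRing R] : Filt R[X] := (triv R).poly (-1)

lemma mem_deg {T : ℕ} {p : R[X]} : p ∈ (deg R).S T ↔ p.natDegree ≤ T := by
  rw [mem_poly, natDegree_le_iff_coeff_eq_zero]
  simp only [mem_triv]
  constructor
  · intro h N hN
    rcases h N with h | h
    · exact h
    · omega
  · intro h j
    by_cases hj : T < j
    · exact Or.inl (h j hj)
    · right; omega

/-- Reduction modulo a monic polynomial respects the filtration. -/
lemma modByMonic_mem (F : R[X]) (hF : F.Monic) {c : ℤ}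
    (hFm : F ∈ (𝒮.poly c).S (-c * F.natDegree)) (n : ℕ) (p : R[X]) (T : ℤ) (hn : p.natDegree ≤ n)
    (hp : p ∈ (𝒮.poly c).S T) :
    p %ₘ F ∈ (𝒮.poly c).S T := by
  nontriviality R
  induction n using Nat.strong_induction_on generalizing p with
  | _ n ih =>
    by_cases hlt : p.natDegree < F.natDegree
    · rwa [(modByMonic_eq_self_iff hF).2 (degree_lt_degree hlt)]
    by_cases hp0 : p = 0
    · subst hp0; simp
    push Not at hlt
    by_cases hF0 : F.natDegree = 0
    · have := eq_one_of_monic_natDegree_zero hF hF0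
      subst this
      simp
    set k := p.natDegree - F.natDegree with hk
    set p' := p - F * (C p.leadingCoeff * X ^ k) with hp'
    have e : p %ₘ F = p' %ₘ F := by
      rw [hp', sub_modByMonic]
      rw [(modByMonic_eq_zero_iff_dvd hF).2 (Dvd.intro _ rfl), sub_zero]
    rw [e]
    have hdeg : p'.degree < p.degree := by
      have := div_wf_lemma ⟨by
        rw [degree_eq_natDegree hp0, degree_eq_natDegree hF.ne_zero]; exact_mod_cast hlt, hp0⟩ hF
      exact this
    have hpmem : p' ∈ (𝒮.poly c).S T := by
      refine AddSubgroup.sub_mem _ hp ?_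
      have h1 : C p.leadingCoeff ∈ (𝒮.poly c).S (T + c * p.natDegree) := 𝒮.poly_C (hp _)
      have h2 := (𝒮.poly c).pow_mem (𝒮.poly_X (c := c)) k
      have := (𝒮.poly c).mul_mem hFm ((𝒮.poly c).mul_mem h1 h2)
      convert this using 2
      rw [hk, Nat.cast_sub hlt]; ring
    by_cases h0 : p' = 0
    · rw [h0]; simp
    have hnd : p'.natDegree < p.natDegree := natDegree_lt_natDegree h0 hdeg
    exact ih p'.natDegree (by omega) p' le_rfl hpmem

end Filt

section hensel

variable {R : Type*} [CommRing R]

lemma ps_eval_const (f : (PowerSeries R)[X]) (a : PowerSeries R) :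
    PowerSeries.constantCoeff (f.eval a) =
      (f.map PowerSeries.constantCoeff).eval (PowerSeries.constantCoeff a) := by
  rw [eval_map, ← eval₂_hom]

/-- One step of the Picard iteration. -/
noncomputable def step (f : (PowerSeries R)[X]) (u : R) (a : PowerSeries R) : PowerSeries R :=
  a - PowerSeries.C u * f.eval a

lemma step_const (f : (PowerSeries R)[X]) (u a0 : R)
    (h0 : (f.map PowerSeries.constantCoeff).eval a0 = 0) (a : PowerSeries R)
    (ha : PowerSeries.constantCoeff a = a0) : PowerSeries.constantCoeff (step f u a) = a0 := by
  simp [step, ps_eval_const, ha, h0]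

lemma eval_sub_eq (f : (PowerSeries R)[X]) (a b : PowerSeries R) :
    ∃ z, f.eval a - f.eval b = (a - b) * (f.derivative.eval b + (a - b) * z) := by
  obtain ⟨z, hz⟩ := f.binomExpansion b (a - b)
  refine ⟨z, ?_⟩
  rw [add_sub_cancel] at hz
  rw [hz]; ring

lemma step_contract (f : (PowerSeries R)[X]) (u a0 : R)
    (hu : u * (f.map PowerSeries.constantCoeff).derivative.eval a0 = 1) (a b : PowerSeries R)
    (ha : PowerSeries.constantCoeff a = a0) (hb : PowerSeries.constantCoeff b = a0) (n : ℕ)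
    (hab : PowerSeries.X ^ n ∣ a - b) : PowerSeries.X ^ (n + 1) ∣ step f u a - step f u b := by
  obtain ⟨z, hz⟩ := eval_sub_eq f a b
  have : step f u a - step f u b =
      (a - b) * (1 - PowerSeries.C u * (f.derivative.eval b + (a - b) * z)) := by
    have : step f u a - step f u b = (a - b) - PowerSeries.C u * (f.eval a - f.eval b) := by
      simp only [step]; ring
    rw [this, hz]; ring
  rw [this, pow_succ]
  refine mul_dvd_mul hab ?_
  rw [PowerSeries.X_dvd_iff]
  simp only [map_sub, map_one, map_mul, map_add, PowerSeries.constantCoeff_C, ps_eval_const,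
    ha, hb, sub_self, zero_mul, add_zero]
  rw [← derivative_map, hu, sub_self]

/-- Hensel's lemma for power series over a commutative ring, with control on the coefficients. -/
lemma hensel_exists (f : (PowerSeries R)[X]) (u a0 : R)
    (h0 : (f.map PowerSeries.constantCoeff).eval a0 = 0)
    (hu : u * (f.map PowerSeries.constantCoeff).derivative.eval a0 = 1) :
    ∃ φ : PowerSeries R, f.eval φ = 0 ∧ PowerSeries.constantCoeff φ = a0 ∧
      ∀ n : ℕ, PowerSeries.coeff n φ =
        PowerSeries.coeff n ((step f u)^[n] (PowerSeries.C a0)) := by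
  set s : ℕ → PowerSeries R := fun n => (step f u)^[n] (PowerSeries.C a0) with hs
  have hsucc : ∀ n, s (n + 1) = step f u (s n) := fun n => by
    simp only [hs, Function.iterate_succ_apply']
  have hc : ∀ n, PowerSeries.constantCoeff (s n) = a0 := by
    intro n
    induction n with
    | zero => simp [hs]
    | succ n ih => rw [hsucc]; exact step_const f u a0 h0 _ ih
  have hdiff : ∀ n, PowerSeries.X ^ (n + 1) ∣ s (n + 1) - s n := by
    intro n
    induction n with
    | zero => 
      rw [zero_add, pow_one, PowerSeries.X_dvd_iff, map_sub, hc, hc, sub_self]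
    | succ n ih =>
      rw [hsucc (n + 1), hsucc n]
      rw [hsucc n] at ih
      exact step_contract f u a0 hu _ _ (by rw [← hsucc]; exact hc _) (hc _) _ ih
  have hdiff2 : ∀ n k, PowerSeries.X ^ (n + 1) ∣ s (n + k) - s n := by
    intro n k
    induction k with
    | zero => simp
    | succ k ih =>
      have h1 : s (n + (k + 1)) - s n = (s (n + k + 1) - s (n + k)) + (s (n + k) - s n) := by
        rw [← add_assoc]; ring
      rw [h1]
      exact dvd_add ((pow_dvd_pow _ (by omega)).trans (hdiff (n + k))) ih
  set φ : PowerSeries R := PowerSeries.mk fun n => PowerSeries.coeff n (s n) with hφ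
  have hφn : ∀ n, PowerSeries.X ^ (n + 1) ∣ φ - s n := by
    intro n
    rw [PowerSeries.X_pow_dvd_iff]
    intro m hm
    rw [map_sub, hφ, PowerSeries.coeff_mk]
    have := (PowerSeries.X_pow_dvd_iff.1 (hdiff2 m (n - m))) m (by omega)
    rw [show m + (n - m) = n by omega, map_sub] at this
    rw [← neg_eq_zero, neg_sub]; exact this
  have hφc : PowerSeries.constantCoeff φ = a0 := by
    have := hφn 0
    rw [zero_add, pow_one, PowerSeries.X_dvd_iff, map_sub, hc, sub_eq_zero] at this
    exact this
  refine ⟨φ, ?_, hφc, fun n => by rw [hφ, PowerSeries.coeff_mk]⟩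
  have hfix : step f u φ = φ := by
    ext n
    have h1 := step_contract f u a0 hu _ _ hφc (hc n) _ (hφn n)
    rw [← hsucc] at h1
    have h2 := dvd_sub h1 (hφn (n + 1))
    rw [PowerSeries.X_pow_dvd_iff] at h2
    have := h2 n (by omega)
    simp only [map_sub] at this
    linear_combination this
  have h2 : PowerSeries.C u * f.eval φ = 0 := by
    have : step f u φ = φ - PowerSeries.C u * f.eval φ := rfl
    rw [hfix] at this
    linear_combination this
  have h3 : PowerSeries.C ((f.map PowerSeries.constantCoeff).derivative.eval a0) *
      (PowerSeries.C u * f.eval φ) = 0 := by rw [h2, mul_zero]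
  rw [← mul_assoc, ← map_mul, mul_comm _ u, hu, map_one, one_mul] at h3
  exact h3

lemma hensel_mem (𝒮 : Filt (PowerSeries R)) (f : (PowerSeries R)[X]) (u a0 : R) (T : ℤ)
    (ha : PowerSeries.C a0 ∈ 𝒮.S T)
    (hstep : ∀ x ∈ 𝒮.S T, PowerSeries.C u * f.eval x ∈ 𝒮.S T) (n : ℕ) :
    (step f u)^[n] (PowerSeries.C a0) ∈ 𝒮.S T := by
  induction n with
  | zero => simpa using ha
  | succ n ih =>
    rw [Function.iterate_succ_apply']
    exact AddSubgroup.sub_mem _ ih (hstep _ ih)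

lemma hensel_unique (f : (PowerSeries R)[X]) (u : R) (a b : PowerSeries R)
    (ha : f.eval a = 0) (hb : f.eval b = 0)
    (hab : PowerSeries.constantCoeff a = PowerSeries.constantCoeff b)
    (hu : u * (f.map PowerSeries.constantCoeff).derivative.eval
      (PowerSeries.constantCoeff a) = 1) : a = b := by
  obtain ⟨z, hz⟩ := eval_sub_eq f a b
  rw [ha, hb, sub_self] at hz
  have hun : IsUnit (f.derivative.eval b + (a - b) * z) := by
    rw [PowerSeries.isUnit_iff_constantCoeff]
    simp only [map_sub, map_mul, map_add, ps_eval_const, hab, sub_self, zero_mul, add_zero]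
    rw [← derivative_map, ← hab]
    exact IsUnit.of_mul_eq_one_right _ hu
  have := hun.mul_left_eq_zero.1 hz.symm
  exact sub_eq_zero.1 this

end hensel

section res

variable {R : Type*} [CommRing R] [IsDomain R] [IsIntegrallyClosed R]

lemma resultant_ne_zero_of_irred (F g : R[X]) (hF : F.Monic) (hirr : Irreducible F)
    (hg : ¬ F ∣ g) (n : ℕ) (hn : g.natDegree ≤ n) : resultant F g F.natDegree n ≠ 0 := by
  obtain ⟨k, rfl⟩ := Nat.exists_eq_add_of_le hn
  rw [resultant_add_right_deg _ _ _ _ _ le_rfl, coeff_natDegree, hF.leadingCoeff, one_pow, one_mul]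
  intro h
  let K := FractionRing R
  have hinj : Function.Injective (algebraMap R K) := IsFractionRing.injective R K
  have h1 : resultant (F.map (algebraMap R K)) (g.map (algebraMap R K)) = 0 := by
    rw [natDegree_map_eq_of_injective hinj, natDegree_map_eq_of_injective hinj,
      resultant_map_map, h, map_zero]
  rw [resultant_eq_zero_iff] at h1
  have h2 : Irreducible (F.map (algebraMap R K)) :=
    (hF.irreducible_iff_irreducible_map_fraction_map).1 hirr
  apply h1.2
  rw [h2.coprime_iff_not_dvd]
  rwa [map_dvd_map _ hinj hF]

lemma not_dvd_of_natDegree_lt {R : Type*} [CommRing R] [Nontrivial R] (F g : R[X])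
    (hF : F.Monic) (hg : g ≠ 0)
    (h : g.degree < F.degree) : ¬ F ∣ g := by
  intro hd
  have := (modByMonic_eq_zero_iff_dvd hF).2 hd
  rw [(modByMonic_eq_self_iff hF).2 h] at this
  exact hg this

end res

end LW


open Polynomial

namespace LW

section ev

variable {L : Type*} [Field L]

/-- Evaluation of a bivariate polynomial. -/
noncomputable def ev {B : Type*} [CommRing B] [Algebra L B] (u v : B) : L[X][X] →+* B :=
  eval₂RingHom (aeval u : L[X] →ₐ[L] B).toRingHom v

variable {B : Type*} [CommRing B] [Algebra L B] (u v : B)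

@[simp] lemma ev_CC (a : L) : ev u v (C (C a)) = algebraMap L B a := by simp [ev]
@[simp] lemma ev_C (a : L[X]) : ev u v (C a) = aeval u a := by simp [ev]
@[simp] lemma ev_CX : ev u v (C (X : L[X])) = u := by simp [ev]
@[simp] lemma ev_X : ev u v (X : L[X][X]) = v := by simp [ev]

lemma ev_eq (p : L[X][X]) :
    ev u v p = (p.map (aeval u : L[X] →ₐ[L] B).toRingHom).eval v := by
  simp [ev, eval_map]

lemma ev_hom {B' : Type*} [CommRing B'] [Algebra L B'] (ψ : B →+* B')
    (hψ : ∀ a : L, ψ (algebraMap L B a) = algebraMap L B' a) (p : L[X][X]) :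
    ψ (ev u v p) = ev (ψ u) (ψ v) p := by
  have : ψ.comp (ev (L := L) u v) = ev (ψ u) (ψ v) := by
    refine Polynomial.ringHom_ext' (Polynomial.ringHom_ext' ?_ ?_) ?_
    · ext a; simp [hψ]
    · simp
    · simp
  exact congrArg (fun f : L[X][X] →+* B' => f p) this

lemma ev_self (p : L[X][X]) : ev (C (X : L[X])) (X : L[X][X]) p = p := by
  have : ev (C (X : L[X])) (X : L[X][X]) = RingHom.id _ := by
    refine Polynomial.ringHom_ext' (Polynomial.ringHom_ext' ?_ ?_) ?_
    · ext a; simp [Polynomial.algebraMap_apply]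
    · simp
    · simp
  rw [this]; rfl

lemma ev_field_eq (x y : L) (p : L[X][X]) : ev x y p = (p.map (evalRingHom x)).eval y := by
  rw [ev_eq]; congr 2

/-- Total degree filtration on bivariate polynomials. -/
noncomputable abbrev TD (L : Type*) [Field L] : Filt L[X][X] := (Filt.deg L).poly (-1)

lemma ev_mem (𝒮 : Filt B) (ha : ∀ a : L, algebraMap L B a ∈ 𝒮.S 0) (hu : u ∈ 𝒮.S 1)
    (hv : v ∈ 𝒮.S 1) (p : L[X][X]) (T : ℤ) (hp : p ∈ (TD L).S T) : ev u v p ∈ 𝒮.S T := by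
  refine Filt.eval₂_mem 𝒮 (Filt.deg L) _ p v (c := -1) ?_ hp (by simpa using hv)
  intro k a hak
  refine Filt.eval₂_mem 𝒮 (Filt.triv L) _ a u (c := -1) ?_ hak (by simpa using hu)
  intro k a hak
  rcases Filt.mem_triv.1 hak with rfl | h
  · simp
  · exact 𝒮.mono h (ha a)

lemma TD_CC (a : L) : C (C a) ∈ (TD L).S 0 :=
  Filt.poly_C _ (Filt.poly_C _ (Filt.mem_triv.2 (Or.inr le_rfl)))

lemma TD_CX : C (X : L[X]) ∈ (TD L).S 1 := Filt.poly_C _ (Filt.poly_X _)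
lemma TD_X : (X : L[X][X]) ∈ (TD L).S 1 := Filt.poly_X _

lemma TD_iff {T : ℤ} {p : L[X][X]} :
    p ∈ (TD L).S T ↔ ∀ i j : ℕ, (p.coeff j).coeff i ≠ 0 → (i + j : ℤ) ≤ T := by
  simp only [TD, Filt.mem_poly, Filt.mem_triv]
  constructor
  · intro h i j hne
    rcases h j i with h | h
    · exact absurd h hne
    · linarith
  · intro h j i
    by_cases hne : (p.coeff j).coeff i = 0
    · exact Or.inl hne
    · right; linarith [h i j hne]

lemma TD_derivative {T : ℤ} {p : L[X][X]} (hp : p ∈ (TD L).S T) :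
    derivative p ∈ (TD L).S (T - 1) := by
  rw [TD_iff] at hp ⊢
  intro i j hne
  rw [coeff_derivative] at hne
  have : (p.coeff (j + 1)).coeff i ≠ 0 := by
    intro h0
    apply hne
    have e : ((j : L[X]) + 1) = C ((j : L) + 1) := by simp
    rw [e, coeff_mul_C, h0, zero_mul]
  have := hp _ _ this
  push_cast at this
  linarith

variable (p : ℕ) [Fact p.Prime] [CharP L p] (k : ℕ)

lemma ev_pow_q [CharP B p] (F : L[X][X])
    (hfix : ∀ i j, ((F.coeff j).coeff i) ^ (p ^ k) = (F.coeff j).coeff i) :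
    (ev u v F) ^ (p ^ k) = ev (u ^ p ^ k) (v ^ p ^ k) F := by
  have : ExpChar B p := ExpChar.prime Fact.out
  have : ExpChar L p := ExpChar.prime Fact.out
  have h1 : (iterateFrobenius B p k).comp (ev u v) =
      (ev (u ^ p ^ k) (v ^ p ^ k)).comp (mapRingHom (mapRingHom (iterateFrobenius L p k))) := by
    refine Polynomial.ringHom_ext' (Polynomial.ringHom_ext' ?_ ?_) ?_
    · ext a; simp [iterateFrobenius_def]
    · simp [iterateFrobenius_def]
    · simp [iterateFrobenius_def]
  have h2 : mapRingHom (mapRingHom (iterateFrobenius L p k)) F = F := by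
    ext j i
    simp [iterateFrobenius_def, hfix]
  have := congrArg (fun f : L[X][X] →+* B => f F) h1
  simp only [RingHom.comp_apply, h2] at this
  simpa [iterateFrobenius_def] using this

end ev

end LW


open Polynomial

namespace LW

lemma Filt.poly_monomial {R : Type*} [CommRing R] (𝒮 : Filt R) {c T : ℤ} {x : R} (j : ℕ)
    (hx : x ∈ 𝒮.S (T + c * j)) : monomial j x ∈ (𝒮.poly c).S T := by
  intro i
  rw [coeff_monomial]
  split_ifs with h
  · subst h; exact hx
  · exact AddSubgroup.zero_mem _

section nv

variable {L : Type*} [Field L]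

lemma sep_sum (q N : ℕ) (g : ℕ → L[X]) (hg : ∀ k, (g k).natDegree < q)
    (h : ∑ k ∈ Finset.range N, X ^ (q * k) * g k = 0) (k0 : ℕ) (hk0 : k0 < N) : g k0 = 0 := by
  ext i
  by_cases hi : i < q
  · have := congrArg (fun f => f.coeff (q * k0 + i)) h
    simp only [finsetSum_coeff, coeff_zero, coeff_X_pow_mul'] at this
    rw [Finset.sum_eq_single k0] at this
    · simpa using this
    · intro k hk hne
      split_ifs with hle
      · apply coeff_eq_zero_of_natDegree_lt
        refine (hg k).trans_le ?_
        have hlt : k < k0 := by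
          by_contra hcon
          have : k0 + 1 ≤ k := by omega
          have := Nat.mul_le_mul_left q this
          rw [mul_add] at this
          omega
        have := Nat.mul_le_mul_left q (show k + 1 ≤ k0 by omega)
        rw [mul_add] at this
        omega
      · rfl
    · intro hk; simp at hk; omega
  · rw [coeff_eq_zero_of_natDegree_lt (lt_of_lt_of_le (hg k0) (by omega)), coeff_zero]

variable (A d Bn : ℕ)

/-- Index type for the coefficients of the auxiliary polynomial. -/
abbrev Idx := Fin A × Fin d × Fin Bn × Fin d

variable {A d Bn}

/-- The generic auxiliary polynomial. -/
noncomputable def bW (c : Idx A d Bn → L) : L[X][X][X][X] :=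
  ∑ ι, monomial (ι.2.2.2 : ℕ) (monomial (ι.2.2.1 : ℕ)
    (monomial (ι.2.1 : ℕ) (monomial (ι.1 : ℕ) (c ι))))

/-- The auxiliary polynomial. -/
noncomputable def beta (q : ℕ) (c : Idx A d Bn → L) : L[X][X] :=
  ∑ ι, C (C (c ι)) * (C X) ^ (ι.1 : ℕ) * X ^ (ι.2.1 : ℕ) *
    ((C X) ^ q) ^ (ι.2.2.1 : ℕ) * (X ^ q) ^ (ι.2.2.2 : ℕ)

lemma monomial_monomial (i j : ℕ) (a : L) :
    monomial j (monomial i a) = C (C a) * (C X) ^ i * X ^ j := by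
  rw [← C_mul_X_pow_eq_monomial, ← C_mul_X_pow_eq_monomial]
  simp

lemma bW_coeff (c : Idx A d Bn → L) (i0 : Fin A) (j0 : Fin d) (k0 : Fin Bn) (l0 : Fin d) :
    ((((bW c).coeff l0).coeff k0).coeff j0).coeff i0 = c (i0, j0, k0, l0) := by
  simp only [bW, finsetSum_coeff]
  rw [Finset.sum_eq_single (i0, j0, k0, l0)]
  · simp
  · rintro ⟨i, j, k, l⟩ _ hne
    simp only [coeff_monomial]
    by_cases h1 : (l : ℕ) = l0
    · by_cases h2 : (k : ℕ) = k0
      · by_cases h3 : (j : ℕ) = j0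
        · by_cases h4 : (i : ℕ) = i0
          · exfalso; apply hne; simp [Fin.ext_iff, h1, h2, h3, h4]
          · simp [h1, h2, h3, h4, coeff_monomial]
        · simp [h1, h2, h3, coeff_monomial]
      · simp [h1, h2, coeff_monomial]
    · simp [h1]
  · simp

lemma bW_coeff_Y (c : Idx A d Bn → L) (l0 k0 j : ℕ) (hj : d ≤ j) :
    (((bW c).coeff l0).coeff k0).coeff j = 0 := by
  simp only [bW, finsetSum_coeff]
  refine Finset.sum_eq_zero fun ι _ => ?_
  have h3 : ¬ ((ι.2.1 : ℕ) = j) := by have := ι.2.1.2; omega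
  by_cases h1 : (ι.2.2.2 : ℕ) = l0
  · by_cases h2 : (ι.2.2.1 : ℕ) = k0
    · simp [h1, h2, h3, coeff_monomial]
    · simp [h1, h2, coeff_monomial]
  · simp [h1, coeff_monomial]

lemma bW_coeff_W (c : Idx A d Bn → L) (j : ℕ) (hj : d ≤ j) : (bW c).coeff j = 0 := by
  simp only [bW, finsetSum_coeff]
  refine Finset.sum_eq_zero fun ι _ => ?_
  simp only [coeff_monomial]
  rw [if_neg (by have := ι.2.2.2.2; omega)]

lemma bW_mem (c : Idx A d Bn → L) (j : ℕ) : (bW c).coeff j ∈ ((TD L).poly 0).S (A + d) := by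
  have h : bW c ∈ (((TD L).poly 0).poly 0).S (A + d) := by
    refine AddSubgroup.sum_mem _ fun ι _ => ?_
    refine Filt.poly_monomial _ _ (Filt.poly_monomial _ _ (Filt.poly_monomial _ _
      (Filt.poly_monomial _ _ (Filt.mem_triv.2 (Or.inr ?_)))))
    have h1 := ι.1.2
    have h2 := ι.2.1.2
    push_cast
    omega
  simpa using h j

lemma elim_dvd {R S : Type*} [CommRing R] [CommRing S] (Θ : R[X] →+* S) (f g : R[X]) (d : ℕ)
    (hd : d ≠ 0) (hf : f.natDegree ≤ d) (hg : g.natDegree ≤ d) (x : S) (h1 : x ∣ Θ f)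
    (h2 : x ∣ Θ g) : x ∣ Θ (C (resultant f g d d)) := by
  obtain ⟨P, Q, -, -, e⟩ := exists_mul_add_mul_eq_C_resultant (m := d) (n := d) f g hf hg
      (Or.inl hd)
  rw [← e, map_add, map_mul, map_mul]
  exact dvd_add (h1.mul_right _) (h2.mul_right _)

lemma theta_map {R S : Type*} [CommRing R] [CommRing S] [Algebra L S] [Algebra L R]
    (ψ : R →+* S) (hψ : ∀ a : L, ψ (algebraMap L R a) = algebraMap L S a)
    (x : R) (z : S) (F : L[X][X]) :
    eval₂RingHom ψ z (F.map (aeval x : L[X] →ₐ[L] R).toRingHom) = ev (ψ x) z F := by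
  have e1 : (eval₂RingHom ψ z).comp (mapRingHom (aeval x : L[X] →ₐ[L] R).toRingHom) =
      ev (L := L) (ψ x) z := by
    refine Polynomial.ringHom_ext' (Polynomial.ringHom_ext' ?_ ?_) ?_
    · ext a; simp [hψ]
    · simp
    · simp
  exact congrArg (fun f : L[X][X] →+* S => f F) e1

lemma theta_bW (q : ℕ) (c : Idx A d Bn → L) :
    eval₂RingHom (evalRingHom ((C (X : L[X])) ^ q)) ((X : L[X][X]) ^ q) (bW c) = beta q c := by
  simp only [bW, beta, map_sum]
  refine Finset.sum_congr rfl fun ι _ => ?_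
  rw [coe_eval₂RingHom, eval₂_monomial, coe_evalRingHom, eval_monomial, monomial_monomial]

lemma coeff_dvd_of_eval (F : L[X][X]) (hF : F.Monic) (hTD : F ∈ (TD L).S F.natDegree)
    (q N : ℕ) (hN : N < q) (ρ : L[X][X][X]) (hρ : ∀ n, ρ.coeff n ∈ (TD L).S N)
    (hρdvd : F ∣ ρ.eval ((C X) ^ q)) (n : ℕ) : F ∣ ρ.coeff n := by
  by_cases hn : n < ρ.natDegree + 1
  swap
  · rw [coeff_eq_zero_of_natDegree_lt (by omega)]; exact dvd_zero _
  rw [← modByMonic_eq_zero_iff_dvd hF]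
  have hr : ∀ n, ρ.coeff n %ₘ F ∈ (TD L).S N := fun n =>
    (Filt.deg L).modByMonic_mem F hF (c := -1) (by simpa using hTD) _ _ _ le_rfl (hρ n)
  have hsum : ∑ n ∈ Finset.range (ρ.natDegree + 1),
      (X : L[X]) ^ (q * n) • (ρ.coeff n %ₘ F) = 0 := by
    rw [← modByMonic_eq_zero_iff_dvd hF, eval_eq_sum_range] at hρdvd
    have : ∀ f : L[X][X], f %ₘ F = modByMonicHom F f := fun f => rfl
    simp only [this, ← map_smul, ← map_sum] at hρdvd ⊢
    rw [← hρdvd]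
    congr 1
    refine Finset.sum_congr rfl fun n _ => ?_
    rw [smul_eq_C_mul, mul_comm, C_pow, pow_mul]
  ext1 j
  rw [coeff_zero]
  refine sep_sum q (ρ.natDegree + 1) (fun n => (ρ.coeff n %ₘ F).coeff j) ?_ ?_ n hn
  · intro n
    have h1 := hr n j
    have h2 : (ρ.coeff n %ₘ F).coeff j ∈ (Filt.deg L).S (N : ℤ) :=
      (Filt.deg L).mono (by omega) h1
    rw [Filt.mem_deg] at h2
    omega
  · have := congrArg (fun f => f.coeff j) hsum
    simpa [finsetSum_coeff] using this

/-- `F(X, W)`. -/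
noncomputable def FWp (F : L[X][X]) : L[X][X][X][X] :=
  F.map (aeval (X : L[X][X][X])).toRingHom

lemma FWp_mem (F : L[X][X]) (j : ℕ) : (FWp F).coeff j ∈ ((TD L).poly 0).S 0 := by
  rw [FWp, coeff_map]
  have : (aeval (X : L[X][X][X])).toRingHom (F.coeff j) =
      (F.coeff j).map (algebraMap L L[X][X]) := by
    simp [aeval_def, Polynomial.map, eval₂_eq_sum]
  rw [this]
  intro i
  rw [coeff_map]
  simpa using TD_CC ((F.coeff j).coeff i)

lemma FWp_map (F : L[X][X]) (x y : L) : (FWp F).map (mapRingHom (ev x y)) = F := by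
  have : (mapRingHom (ev (L := L) x y)).comp (aeval (X : L[X][X][X])).toRingHom =
      RingHom.id L[X] := by
    refine Polynomial.ringHom_ext' ?_ ?_
    · ext a
      simp [Polynomial.algebraMap_apply]
    · simp
  rw [FWp, Polynomial.map_map, this, Polynomial.map_id]

variable [IsAlgClosed L] (p : ℕ) [Fact p.Prime] [CharP L p] (k : ℕ)

lemma theta_FW (F : L[X][X])
    (hfix : ∀ i j, ((F.coeff j).coeff i) ^ (p ^ k) = (F.coeff j).coeff i) :
    eval₂RingHom (evalRingHom ((C (X : L[X])) ^ (p ^ k))) ((X : L[X][X]) ^ (p ^ k)) (FWp F) =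
      F ^ (p ^ k) := by
  have h := theta_map (R := L[X][X][X]) (S := L[X][X]) (evalRingHom ((C (X : L[X])) ^ (p ^ k)))
    (fun a => by simp [Polynomial.algebraMap_apply]) X ((X : L[X][X]) ^ (p ^ k)) F
  refine h.trans ?_
  rw [coe_evalRingHom, eval_X, ← ev_pow_q _ _ p k F hfix, ev_self]

lemma elim_final (F : L[X][X]) (hd : F.natDegree = d)
    (hd1 : 1 ≤ d)
    (hfix : ∀ i j, ((F.coeff j).coeff i) ^ (p ^ k) = (F.coeff j).coeff i)
    (c : Idx A d Bn → L) (hbdeg : (bW c).natDegree ≤ d)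
    (hdvd : F ∣ beta (p ^ k) c) :
    F ∣ (resultant (R := L[X][X][X]) (FWp F) (bW c) d d).eval ((C X) ^ (p ^ k)) := by
  have h1 : F ∣ eval₂RingHom (evalRingHom ((C (X : L[X])) ^ (p ^ k)))
      ((X : L[X][X]) ^ (p ^ k)) (FWp F) := by
    rw [theta_FW p k F hfix]
    exact dvd_pow_self F (pow_ne_zero _ (Fact.out : p.Prime).ne_zero)
  have h2 : F ∣ eval₂RingHom (evalRingHom ((C (X : L[X])) ^ (p ^ k)))
      ((X : L[X][X]) ^ (p ^ k)) (bW c) := by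
    rw [theta_bW]; exact hdvd
  have h0 : (FWp F).natDegree ≤ d := by rw [← hd]; exact natDegree_map_le
  have h3 := elim_dvd (R := L[X][X][X]) (S := L[X][X]) _ (FWp F) (bW c) d (by omega) h0 hbdeg F h1 h2
  rw [coe_eval₂RingHom, eval₂_C, coe_evalRingHom] at h3
  exact h3

/-- Nonvanishing of the auxiliary polynomial. -/
theorem nonvanish (F : L[X][X]) (hF : F.Monic) (hirr : Irreducible F) (hd : F.natDegree = d)
    (hd1 : 1 ≤ d)
    (hTD : F ∈ (TD L).S d)
    (hfix : ∀ i j, ((F.coeff j).coeff i) ^ (p ^ k) = (F.coeff j).coeff i)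
    (hA : d * (A + d) < p ^ k) (c : Idx A d Bn → L) (hc : c ≠ 0) :
    ¬ F ∣ beta (p ^ k) c := by
  intro hdvd
  set q := p ^ k with hq
  obtain ⟨⟨i0, j0, k0, l0⟩, hc0⟩ := Function.ne_iff.1 hc
  have hFdeg : F.degree = d := by rw [degree_eq_natDegree hF.ne_zero, hd]
  -- a coefficient that is not zero on the curve
  set g := ((bW c).coeff l0).coeff k0 with hg
  have hg0 : g ≠ 0 := by
    intro h0
    apply hc0
    rw [← bW_coeff c i0 j0 k0 l0, ← hg, h0]; simp
  have hgdeg : g.degree < d := by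
    rw [degree_lt_iff_coeff_zero]
    intro m hm
    exact bW_coeff_Y c _ _ _ hm
  have hgdvd : ¬ F ∣ g := not_dvd_of_natDegree_lt F g hF hg0 (by rw [hFdeg]; exact hgdeg)
  have hres := resultant_ne_zero_of_irred F g hF hirr hgdvd _ le_rfl
  obtain ⟨x1, hx1⟩ : ∃ x1, (resultant F g F.natDegree g.natDegree).eval x1 ≠ 0 := by
    by_contra hcon
    push Not at hcon
    exact hres (Polynomial.funext (by simpa using hcon))
  obtain ⟨y1, hy1⟩ : ∃ y1, ev x1 y1 F = 0 := by
    have := IsAlgClosed.exists_root (F.map (evalRingHom x1)) (by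
      rw [hF.degree_map, hFdeg]
      exact_mod_cast (by omega : d ≠ 0))
    obtain ⟨y, hy⟩ := this
    exact ⟨y, by rw [ev_field_eq]; exact hy⟩
  have hgxy : ev x1 y1 g ≠ 0 := by
    intro h0
    obtain ⟨P, Q, -, -, e⟩ := exists_mul_add_mul_eq_C_resultant (m := F.natDegree) (n := g.natDegree)
      F g le_rfl le_rfl (Or.inl (by omega))
    have := congrArg (ev x1 y1) e
    rw [map_add, map_mul, map_mul, hy1, h0, zero_mul, zero_mul, add_zero, ev_C] at this
    exact hx1 (by simpa [coe_aeval_eq_eval] using this.symm)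
  -- elimination of `W`
  have hρmem : resultant (R := L[X][X][X]) (FWp F) (bW c) d d ∈ ((TD L).poly 0).S ((d * (A + d) : ℕ) : ℤ) := by
    have := ((TD L).poly 0).resultant_mem (FWp F) (bW c) d d (a := 0) (b := A + d)
      (FWp_mem F) (bW_mem c)
    simpa using this
  have hbdeg : (bW c).natDegree ≤ d := by
    rw [natDegree_le_iff_coeff_eq_zero]
    intro N hN
    exact bW_coeff_W c N hN.le
  have hρdvd := elim_final p k F hd hd1 hfix c hbdeg hdvd
  have hρk := coeff_dvd_of_eval F hF (by rw [hd]; exact hTD) q _ hA _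
    (fun n => by simpa using hρmem n) hρdvd
  -- contradiction
  have hmap : resultant F ((bW c).map (mapRingHom (ev x1 y1))) d d = 0 := by
    have h1 := resultant_map_map (R := L[X][X][X]) (S := L[X]) (FWp F) (bW c) d d (mapRingHom (ev x1 y1))
    rw [FWp_map] at h1
    rw [h1]
    ext1 n
    rw [coe_mapRingHom, coeff_map, coeff_zero]
    obtain ⟨z, hz⟩ := hρk n
    rw [hz, map_mul, hy1, zero_mul]
  have hb1n : ((bW c).map (mapRingHom (ev x1 y1))).natDegree ≤ d :=
    natDegree_map_le.trans hbdeg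
  have hb10 : (bW c).map (mapRingHom (ev x1 y1)) ≠ 0 := by
    intro h0
    have : (((bW c).map (mapRingHom (ev x1 y1))).coeff l0).coeff k0 = 0 := by rw [h0]; simp
    rw [coeff_map, coe_mapRingHom, coeff_map] at this
    exact hgxy this
  have hb1deg : ((bW c).map (mapRingHom (ev x1 y1))).degree < d := by
    rw [degree_lt_iff_coeff_zero]
    intro m hm
    rw [coeff_map, bW_coeff_W c m hm, map_zero]
  have := resultant_ne_zero_of_irred F _ hF hirr
    (not_dvd_of_natDegree_lt F _ hF hb10 (by rw [hFdeg]; exact hb1deg)) d hb1n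
  rw [hd] at this
  exact this hmap

end nv

end LW


open Polynomial

namespace LW

section uroot

variable {L : Type*} [Field L] {A : Type*} [CommRing A] [Algebra L A] (x0 y0 : A)

/-- Taylor expansion of `F`. -/
noncomputable def Tay (F : L[X][X]) : A[X][X] :=
  ev (C (C x0) + C X) (C (C y0) + X) F

lemma Tay_mem (𝒮 : Filt A) (ha : ∀ a : L, algebraMap L A a ∈ 𝒮.S 0) (hx : x0 ∈ 𝒮.S 1)
    (hy : y0 ∈ 𝒮.S 1)
    (F : L[X][X]) {d : ℤ} (hTD : F ∈ (TD L).S d) :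
    Tay x0 y0 F ∈ ((𝒮.poly (-1)).poly (-1)).S d := by
  refine ev_mem _ _ _ ?_ ?_ ?_ F d hTD
  · intro a
    exact Filt.poly_C _ (Filt.poly_C _ (ha a))
  · exact AddSubgroup.add_mem _ (Filt.poly_C _ (Filt.poly_C _ hx))
      (Filt.poly_C _ (by simpa using Filt.poly_X 𝒮 (c := -1)))
  · exact AddSubgroup.add_mem _ (Filt.poly_C _ (Filt.poly_C _ hy))
      (by simpa using Filt.poly_X (𝒮.poly (-1)) (c := -1))

lemma Tay_mem' (𝒮 : Filt A) (ha : ∀ a : L, algebraMap L A a ∈ 𝒮.S 0) (hx : x0 ∈ 𝒮.S 1)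
    (hy : y0 ∈ 𝒮.S 1)
    (F : L[X][X]) {d : ℤ} (hTD : F ∈ (TD L).S d) (i j : ℕ) :
    ((Tay x0 y0 F).coeff j).coeff i ∈ 𝒮.S (d - i - j) :=
  𝒮.mono (by omega) (Tay_mem x0 y0 𝒮 ha hx hy F hTD j i)

lemma Tay_zero (F : L[X][X]) {d : ℤ} (hTD : F ∈ (TD L).S d) (i j : ℕ) (h : d < i + j) :
    ((Tay x0 y0 F).coeff j).coeff i = 0 := by
  have := Tay_mem' x0 y0 (Filt.triv A) (fun a => Filt.mem_triv.2 (Or.inr le_rfl))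
    (Filt.mem_triv.2 (Or.inr (by norm_num))) (Filt.mem_triv.2 (Or.inr (by norm_num))) F hTD i j
  rcases Filt.mem_triv.1 this with h1 | h1
  · exact h1
  · omega

lemma Tay_eval {B : Type*} [CommRing B] [Algebra L B] (ψ : A →+* B)
    (hψ : ∀ a : L, ψ (algebraMap L _ a) = algebraMap L B a) (u v : B) (F : L[X][X]) :
    (Tay x0 y0 F).eval₂ (eval₂RingHom ψ u) v = ev (ψ x0 + u) (ψ y0 + v) F := by
  have := ev_hom (L := L) (C (C x0) + C X)
    (C (C y0) + X) (eval₂RingHom (eval₂RingHom ψ u) v) (B' := B) (by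
    intro a
    rw [Polynomial.algebraMap_apply, Polynomial.algebraMap_apply]
    simp only [coe_eval₂RingHom, eval₂_C]
    exact hψ a) F
  simpa [Tay] using this

lemma Tay_eval_sum {B : Type*} [CommRing B] [Algebra L B] (ψ : A →+* B)
    (hψ : ∀ a : L, ψ (algebraMap L _ a) = algebraMap L B a) (u v : B) (F : L[X][X])
    {d : ℕ} (hTD : F ∈ (TD L).S d) :
    ev (ψ x0 + u) (ψ y0 + v) F = ∑ j ∈ Finset.range (d + 1), ∑ i ∈ Finset.range (d + 1),
      ψ (((Tay x0 y0 F).coeff j).coeff i) * u ^ i * v ^ j := by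
  rw [← Tay_eval x0 y0 ψ hψ]
  have hn : (Tay x0 y0 F).natDegree < d + 1 := by
    rw [Nat.lt_succ_iff, natDegree_le_iff_coeff_eq_zero]
    intro N hN
    ext1 i
    exact Tay_zero x0 y0 F hTD i N (by omega)
  rw [eval₂_eq_sum_range' _ hn]
  refine Finset.sum_congr rfl fun j _ => ?_
  rw [coe_eval₂RingHom, eval₂_eq_sum_range' _ (n := d + 1), Finset.sum_mul]
  rw [Nat.lt_succ_iff, natDegree_le_iff_coeff_eq_zero]
  intro N hN
  exact Tay_zero x0 y0 F hTD N j (by omega)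

lemma Tay_u0 (F : L[X][X]) : (Tay x0 y0 F).map (evalRingHom 0) =
    taylor y0 (F.map (aeval x0 : L[X] →ₐ[L] A).toRingHom) := by
  have e1 : (mapRingHom (evalRingHom 0)).comp (ev (L := L) (C (C x0) + C X) (C (C y0) + X)) =
     (taylorAlgHom (y0 : A)).toRingHom.comp (mapRingHom (aeval x0 : L[X] →ₐ[L] A).toRingHom) := by
    refine Polynomial.ringHom_ext' (Polynomial.ringHom_ext' ?_ ?_) ?_
    · ext a; simp [Polynomial.algebraMap_apply]
    · simp
    · simp [add_comm]
  exact congrArg (fun f : L[X][X] →+* A[X] => f F) e1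

lemma Tay_0j (F : L[X][X]) (j : ℕ) : ((Tay x0 y0 F).coeff j).coeff 0 =
    (taylor y0 (F.map (aeval x0 : L[X] →ₐ[L] A).toRingHom)).coeff j := by
  rw [← Tay_u0, coeff_map, coe_evalRingHom, coeff_zero_eq_eval_zero]

lemma Tay_00 (F : L[X][X]) : ((Tay x0 y0 F).coeff 0).coeff 0 = ev x0 y0 F := by
  rw [Tay_0j, taylor_coeff_zero, ev_eq]

lemma Tay_01 (F : L[X][X]) : ((Tay x0 y0 F).coeff 1).coeff 0 = ev x0 y0 (derivative F) := by
  rw [Tay_0j, taylor_coeff_one, ev_eq, derivative_map]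

/-- The universal Hensel equation. -/
noncomputable def Hp (F : L[X][X]) (d : ℕ) : (PowerSeries A)[X] :=
  X + ∑ j ∈ Finset.range (d + 1), ∑ i ∈ Finset.range (d + 1),
    if 2 ≤ 2 * i + j then
      C (PowerSeries.C (((Tay x0 y0 F).coeff j).coeff i *
        (ev x0 y0 (derivative F)) ^ (2 * i + j - 2)) * PowerSeries.X ^ i) * X ^ j
    else 0

lemma Hp_eval (F : L[X][X]) {d : ℕ} (hd : 1 ≤ d) (hTD : F ∈ (TD L).S d) (w : PowerSeries A) :
    PowerSeries.C (ev x0 y0 (derivative F)) ^ 2 * (Hp x0 y0 F d).eval w =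
    ev (PowerSeries.C x0 + PowerSeries.C (ev x0 y0 (derivative F)) ^ 2 * PowerSeries.X)
      (PowerSeries.C y0 + PowerSeries.C (ev x0 y0 (derivative F)) * w) F -
      PowerSeries.C (ev x0 y0 F) := by
  rw [Tay_eval_sum x0 y0 (PowerSeries.C) (fun a => by rw [PowerSeries.algebraMap_apply]) _ _ F hTD]
  set D := ev x0 y0 (derivative F) with hD
  have key : ∀ j i : ℕ, PowerSeries.C (((Tay x0 y0 F).coeff j).coeff i) *
      (PowerSeries.C D ^ 2 * PowerSeries.X) ^ i * (PowerSeries.C D * w) ^ j =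
      PowerSeries.C D ^ 2 * (if 2 ≤ 2 * i + j then
      (PowerSeries.C (((Tay x0 y0 F).coeff j).coeff i *
        D ^ (2 * i + j - 2)) * PowerSeries.X ^ i) * w ^ j
      else 0) + if i = 0 then ((if j = 0 then PowerSeries.C (ev x0 y0 F) else 0) +
        if j = 1 then PowerSeries.C D ^ 2 * w else 0) else 0 := by
    intro j i
    by_cases h : 2 ≤ 2 * i + j
    · rw [if_pos h]
      have : ¬ (i = 0 ∧ j = 0) ∧ ¬ (i = 0 ∧ j = 1) := by omega
      have e : (PowerSeries.C D) ^ (2 * i + j) =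
        PowerSeries.C D ^ 2 * PowerSeries.C (D ^ (2 * i + j - 2)) := by
        rw [map_pow, ← pow_add]; congr 1; omega
      have e2 : (if i = 0 then ((if j = 0 then PowerSeries.C (ev x0 y0 F) else 0) +
        if j = 1 then PowerSeries.C D ^ 2 * w else 0) else 0) = 0 := by
        by_cases hi : i = 0
        · rw [if_pos hi, if_neg (by omega), if_neg (by omega), add_zero]
        · rw [if_neg hi]
      rw [e2, add_zero, mul_pow, mul_pow, ← pow_mul, map_mul]
      rw [pow_add] at e
      linear_combination (PowerSeries.C (((Tay x0 y0 F).coeff j).coeff i) * PowerSeries.X ^ i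
        * w ^ j) * e
    · rw [if_neg h]
      have hi : i = 0 := by omega
      subst hi
      rcases (by omega : j = 0 ∨ j = 1) with rfl | rfl
      · simp [Tay_00]
      · simp [Tay_01, ← hD]; ring
  simp only [key, Finset.sum_add_distrib, ← Finset.mul_sum]
  simp only [Hp, eval_add, eval_X, eval_finsetSum]
  have hs : ∑ j ∈ Finset.range (d + 1), ∑ i ∈ Finset.range (d + 1),
      (if i = 0 then ((if j = 0 then PowerSeries.C (ev x0 y0 F) else 0) +
        if j = 1 then PowerSeries.C D ^ 2 * w else 0) else 0) =
      PowerSeries.C (ev x0 y0 F) + PowerSeries.C D ^ 2 * w := by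
    have h1 : 1 ∈ Finset.range (d + 1) := by simp; omega
    simp [Finset.sum_add_distrib, Finset.sum_ite_eq', h1]
  rw [hs]
  have hs2 : ∀ j i : ℕ, eval w (if 2 ≤ 2 * i + j then
      C (PowerSeries.C (((Tay x0 y0 F).coeff j).coeff i *
        (ev x0 y0 (derivative F)) ^ (2 * i + j - 2)) * PowerSeries.X ^ i) * X ^ j
    else 0) = (if 2 ≤ 2 * i + j then
      (PowerSeries.C (((Tay x0 y0 F).coeff j).coeff i *
        D ^ (2 * i + j - 2)) * PowerSeries.X ^ i) * w ^ j
      else 0) := by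
    intro j i
    split_ifs <;> simp [hD]
  simp only [hs2]
  ring

lemma Hp_const (F : L[X][X]) (d : ℕ) : ∃ Q : A[X],
    (Hp x0 y0 F d).map PowerSeries.constantCoeff = X + X ^ 2 * Q := by
  have : (X : A[X]) ^ 2 ∣ (Hp x0 y0 F d).map PowerSeries.constantCoeff - X := by
    simp only [Hp, Polynomial.map_add, Polynomial.map_X, add_sub_cancel_left, Polynomial.map_sum]
    refine Finset.dvd_sum fun j _ => Finset.dvd_sum fun i _ => ?_
    split_ifs with h
    · rcases Nat.eq_zero_or_pos i with rfl | hi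
      · simp only [Polynomial.map_mul, Polynomial.map_pow, Polynomial.map_X]
        exact (pow_dvd_pow X (by omega)).mul_left _
      · simp [hi.ne']
    · simp
  obtain ⟨Q, hQ⟩ := this
  exact ⟨Q, by rw [← hQ]; ring⟩

lemma Hp_mem (𝒮 : Filt A) (ha : ∀ a : L, algebraMap L A a ∈ 𝒮.S 0) (hx : x0 ∈ 𝒮.S 1)
    (hy : y0 ∈ 𝒮.S 1)
    (F : L[X][X]) {d : ℕ} (hTD : F ∈ (TD L).S d) (w : PowerSeries A)
    (hw : w ∈ (𝒮.ps (2 * d)).S (-d)) : (Hp x0 y0 F d).eval w ∈ (𝒮.ps (2 * d)).S (-d) := by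
  simp only [Hp, eval_add, eval_X, eval_finsetSum]
  refine AddSubgroup.add_mem _ hw (AddSubgroup.sum_mem _ fun j _ => AddSubgroup.sum_mem _ fun i _ => ?_)
  split_ifs with h
  · simp only [eval_mul, eval_C, eval_pow, eval_X]
    have h1 := 𝒮.mul_mem (Tay_mem' x0 y0 𝒮 ha hx hy F hTD i j)
      (𝒮.pow_mem (ev_mem x0 y0 𝒮 ha hx hy _ _ (TD_derivative hTD)) (2 * i + j - 2))
    have h2 := (𝒮.ps (2 * d)).mul_mem ((𝒮.ps (2 * d)).mul_mem (𝒮.ps_C h1)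
      ((𝒮.ps (2 * d)).pow_mem (𝒮.ps_X (c := 2 * d)) i)) ((𝒮.ps (2 * d)).pow_mem hw j)
    refine (𝒮.ps (2 * d)).mono ?_ h2
    obtain ⟨m, hm⟩ := Nat.exists_eq_add_of_le h
    have hj : (j : ℤ) = 2 + m - 2 * i := by omega
    rw [hm, Nat.add_sub_cancel_left, hj]
    have : (0 : ℤ) ≤ j := by positivity
    nlinarith
  · simp

/-- The universal root. -/
lemma uroot_exists (𝒮 : Filt A) (ha : ∀ a : L, algebraMap L A a ∈ 𝒮.S 0) (hx : x0 ∈ 𝒮.S 1)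
    (hy : y0 ∈ 𝒮.S 1)
    (F : L[X][X]) {d : ℕ} (hd : 1 ≤ d) (hTD : F ∈ (TD L).S d) :
    ∃ w : PowerSeries A, ev (PowerSeries.C x0 + PowerSeries.C (ev x0 y0 (derivative F)) ^ 2 * PowerSeries.X)
      (PowerSeries.C y0 + PowerSeries.C (ev x0 y0 (derivative F)) * w) F =
      PowerSeries.C (ev x0 y0 F) ∧ PowerSeries.constantCoeff w = 0 ∧
      w ∈ (𝒮.ps (2 * d)).S (-d) := by
  obtain ⟨Q, hQ⟩ := Hp_const x0 y0 F d
  obtain ⟨w, h1, h2, h3⟩ := hensel_exists (Hp x0 y0 F d) 1 0 (by simp [hQ])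
    (by simp [hQ])
  refine ⟨w, ?_, h2, ?_⟩
  · have := Hp_eval x0 y0 F hd hTD w
    rw [h1, mul_zero] at this
    exact (sub_eq_zero.1 this.symm)
  · intro n
    rw [h3 n]
    refine hensel_mem (𝒮.ps (2 * d)) (Hp x0 y0 F d) 1 0 (-d) (by simp) ?_ n n
    intro x hx'
    simpa using Hp_mem x0 y0 𝒮 ha hx hy F hTD x hx'

end uroot

section hasse

variable {L : Type*} [Field L]

lemma rescale_C (a x : L) : PowerSeries.rescale a (PowerSeries.C x) = PowerSeries.C x := by
  ext n
  rw [PowerSeries.coeff_rescale, PowerSeries.coeff_C]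
  split_ifs with h
  · simp [h]
  · simp

/-- Hasse derivatives of monomials along the curve. -/
lemma hasse_exists (F : L[X][X]) {d : ℕ} (hd : 1 ≤ d) (hTD : F ∈ (TD L).S d) :
    ∃ P : ℕ → ℕ → ℕ → L[X][X], (∀ l i j : ℕ, P l i j ∈ (TD L).S (i + j + 2 * d * l)) ∧
    ∀ (x y : L) (φ : PowerSeries L), ev x y F = 0 → ev x y (derivative F) ≠ 0 →
      ev (PowerSeries.C x + PowerSeries.X) φ F = 0 → PowerSeries.constantCoeff φ = y →
      ∀ l i j, PowerSeries.coeff l ((PowerSeries.C x + PowerSeries.X) ^ i * φ ^ j) *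
        ev x y (derivative F) ^ (2 * l) = ev x y (P l i j) := by
  obtain ⟨w, h1, h2, h3⟩ := uroot_exists (C (X : L[X])) (X : L[X][X]) (TD L)
    (fun a => TD_CC a) TD_CX TD_X F hd hTD
  simp only [ev_self] at h1
  set D := derivative F with hD
  have hDm := TD_derivative hTD
  rw [← hD] at hDm
  set U : PowerSeries L[X][X] := PowerSeries.C (C X) + PowerSeries.C D ^ 2 * PowerSeries.X with hU
  set V : PowerSeries L[X][X] := PowerSeries.C X + PowerSeries.C D * w with hV
  have hUm : U ∈ ((TD L).ps (2 * d)).S 1 := by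
    refine AddSubgroup.add_mem _ (Filt.ps_C _ TD_CX) ?_
    refine Filt.mono _ ?_ (Filt.mul_mem _ (Filt.pow_mem _ (Filt.ps_C _ hDm) 2) (Filt.ps_X _))
    push_cast; omega
  have hVm : V ∈ ((TD L).ps (2 * d)).S 1 := by
    refine AddSubgroup.add_mem _ (Filt.ps_C _ TD_X) ?_
    refine Filt.mono _ ?_ (Filt.mul_mem _ (Filt.ps_C _ hDm) h3)
    push_cast; omega
  refine ⟨fun l i j => PowerSeries.coeff l (U ^ i * V ^ j), ?_, ?_⟩
  · intro l i j
    have := (Filt.mul_mem _ (Filt.pow_mem _ hUm i) (Filt.pow_mem _ hVm j)) l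
    simpa using this
  · intro x y φ hF hδ hφ hφ0 l i j
    set δ := ev x y D with hδd
    set ψ : PowerSeries L[X][X] →+* PowerSeries L := PowerSeries.map (ev x y) with hψ
    have hψU : ψ U = PowerSeries.rescale (δ ^ 2) (PowerSeries.C x + PowerSeries.X) := by
      simp [hψ, hU, hδd, PowerSeries.rescale_X, rescale_C]
    have hψV : ψ V = PowerSeries.rescale (δ ^ 2) φ := by
      have e1 : ev (ψ U) (ψ V) F = 0 := by
        have := congrArg ψ h1
        rw [ev_hom U V ψ (fun a => by simp [hψ, PowerSeries.algebraMap_apply, Polynomial.algebraMap_apply])] at this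
        rw [this]
        simp [hψ, hF]
      have e2 : ev (ψ U) (PowerSeries.rescale (δ ^ 2) φ) F = 0 := by
        have := congrArg (PowerSeries.rescale (δ ^ 2)) hφ
        rw [ev_hom _ _ (PowerSeries.rescale (δ ^ 2)) (fun a => by simp [rescale_C]), map_zero, ← hψU] at this
        exact this
      have hV0 : PowerSeries.constantCoeff (ψ V) = y := by
        rw [← PowerSeries.coeff_zero_eq_constantCoeff_apply, hψ, PowerSeries.coeff_map,
          PowerSeries.coeff_zero_eq_constantCoeff_apply, hV]
        simp [h2]
      have hr0 : PowerSeries.constantCoeff (PowerSeries.rescale (δ ^ 2) φ) = y := by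
        rw [← PowerSeries.coeff_zero_eq_constantCoeff_apply, PowerSeries.coeff_rescale]
        simp [hφ0]
      rw [ev_eq] at e1 e2
      refine hensel_unique _ δ⁻¹ _ _ e1 e2 (hV0.trans hr0.symm) ?_
      rw [hV0, Polynomial.map_map]
      have e3 : (PowerSeries.constantCoeff (R := L)).comp (aeval (ψ U) : L[X] →ₐ[L] _).toRingHom =
          evalRingHom x := by
        refine Polynomial.ringHom_ext' ?_ ?_
        · ext a; simp [PowerSeries.algebraMap_apply]
        · simp [hψU, rescale_C]
      rw [e3, derivative_map, ← ev_field_eq, ← hD, ← hδd, inv_mul_cancel₀ hδ]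
    have e4 : ev x y (PowerSeries.coeff l (U ^ i * V ^ j)) =
        PowerSeries.coeff l (ψ (U ^ i * V ^ j)) := by
      rw [hψ, PowerSeries.coeff_map]
    rw [e4, map_mul ψ, map_pow ψ, map_pow ψ, hψU, hψV, ← map_pow (PowerSeries.rescale (δ ^ 2)),
      ← map_pow (PowerSeries.rescale (δ ^ 2)), ← map_mul (PowerSeries.rescale (δ ^ 2)),
      PowerSeries.coeff_rescale, pow_mul, mul_comm]

end hasse

end LW


open Polynomial

namespace LW

section split

lemma hensel_split {R : Type*} [CommRing R] [IsDomain R] (f : (PowerSeries R)[X]) (hf : f.Monic)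
    (s : Finset R) (hs : f.natDegree = s.card) (u : R → R)
    (h0 : ∀ a ∈ s, (f.map PowerSeries.constantCoeff).eval a = 0)
    (hu : ∀ a ∈ s, u a * (f.map PowerSeries.constantCoeff).derivative.eval a = 1) :
    ∃ Φ : R → PowerSeries R, (∀ a ∈ s, f.eval (Φ a) = 0 ∧ PowerSeries.constantCoeff (Φ a) = a ∧
      ∀ n : ℕ, PowerSeries.coeff n (Φ a) =
        PowerSeries.coeff n ((step f (u a))^[n] (PowerSeries.C a))) ∧
      f = ∏ a ∈ s, (X - C (Φ a)) := by
  classical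
  have key : ∀ a, ∃ φ : PowerSeries R, a ∈ s → (f.eval φ = 0 ∧ PowerSeries.constantCoeff φ = a ∧
      ∀ n : ℕ, PowerSeries.coeff n φ =
        PowerSeries.coeff n ((step f (u a))^[n] (PowerSeries.C a))) := by
    intro a
    by_cases ha : a ∈ s
    · obtain ⟨φ, h⟩ := hensel_exists f (u a) a (h0 a ha) (hu a ha)
      exact ⟨φ, fun _ => h⟩
    · exact ⟨0, fun h => absurd h ha⟩
  choose Φ hΦ using key
  refine ⟨Φ, hΦ, ?_⟩
  have hinj : Set.InjOn Φ s := by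
    intro a ha b hb hab
    rw [← (hΦ a ha).2.1, ← (hΦ b hb).2.1, hab]
  have hdvd : ∏ a ∈ s, (X - C (Φ a)) ∣ f := by
    have : ((s.image Φ).val.map fun a => X - C a).prod ∣ f := by
      rw [Multiset.prod_X_sub_C_dvd_iff_le_roots hf.ne_zero, Finset.val_le_iff_val_subset]
      intro r hr
      obtain ⟨a, ha, rfl⟩ := Finset.mem_image.1 hr
      rw [mem_roots hf.ne_zero]
      exact (hΦ a ha).1
    change ∏ r ∈ s.image Φ, (X - C r) ∣ f at this
    rwa [Finset.prod_image hinj] at this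
  refine (eq_of_monic_of_dvd_of_natDegree_le (monic_prod_of_monic _ _ fun a _ => monic_X_sub_C _)
    hf hdvd ?_)
  rw [hs, natDegree_prod_of_monic _ _ fun a _ => monic_X_sub_C _]
  simp

lemma resultant_prod_eval {R ι : Type*} [CommRing R] [IsDomain R] (f g : R[X]) (s : Finset ι)
    (Φ : ι → R) (hf : f = ∏ a ∈ s, (X - C (Φ a))) (m : ℕ) (hm : g.natDegree ≤ m) :
    resultant f g f.natDegree m = ∏ a ∈ s, g.eval (Φ a) := by
  have hmon : f.Monic := by rw [hf]; exact monic_prod_of_monic _ _ fun a _ => monic_X_sub_C _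
  have h2 := resultant_eq_prod_eval f g m hm
    (by rw [hf]; exact Splits.prod fun y _ => Splits.X_sub_C _)
  rw [hmon.leadingCoeff, one_pow, one_mul] at h2
  have hr : f.roots = s.val.map Φ := by
    have : f = ((s.val.map Φ).map fun a => X - C a).prod := by
      rw [hf, Multiset.map_map]; rfl
    rw [this, roots_multiset_prod_X_sub_C]
  rw [h2, hr, Multiset.map_map]
  rfl

variable {L : Type*} [Field L]

lemma aeval_shift (x : L) (n : L[X]) :
    aeval (PowerSeries.C x + PowerSeries.X) n = ((taylor x n : L[X]) : PowerSeries L) := by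
  have : (aeval (PowerSeries.C x + PowerSeries.X) : L[X] →ₐ[L] PowerSeries L).toRingHom =
      (coeToPowerSeries.ringHom).comp (taylorAlgHom x).toRingHom := by
    refine Polynomial.ringHom_ext' ?_ ?_
    · ext1 a; simp
    · simp [add_comm]
  exact congrArg (fun f : L[X] →+* PowerSeries L => f n) this

lemma le_rootMultiplicity_of_dvd (x : L) (n : L[X]) (hn : n ≠ 0) (m : ℕ)
    (h : PowerSeries.X ^ m ∣ aeval (PowerSeries.C x + PowerSeries.X) n) :
    m ≤ n.rootMultiplicity x := by
  rw [aeval_shift, PowerSeries.X_pow_dvd_iff] at h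
  have h1 : X ^ m ∣ taylor x n := by
    rw [X_pow_dvd_iff]
    intro i hi
    simpa using h i hi
  rw [le_rootMultiplicity_iff hn]
  obtain ⟨z, hz⟩ := h1
  have := congrArg (taylor (-x)) hz
  rw [taylor_taylor, neg_add_cancel, taylor_zero] at this
  rw [this, taylor_mul, taylor_pow, taylor_X]
  simp [sub_eq_add_neg]

lemma sum_rootMultiplicity_le (n : L[X]) (s : Finset L) :
    ∑ x ∈ s, n.rootMultiplicity x ≤ n.natDegree := by
  classical
  refine le_trans ?_ (card_roots' n)
  simp only [← count_roots]
  rw [← Multiset.sum_count_eq_card (s := s ∪ n.roots.toFinset) (m := n.roots)]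
  · exact Finset.sum_le_sum_of_subset Finset.subset_union_left
  · intro a ha; simp at ha ⊢; right; exact ha

end split

section system

lemma exists_kernel {L ι κ : Type*} [Field L] [Fintype ι] [Fintype κ] (a : κ → ι → L)
    (h : Fintype.card κ < Fintype.card ι) : ∃ c : ι → L, c ≠ 0 ∧ ∀ k, ∑ i, c i * a k i = 0 := by
  classical
  have := LinearMap.ker_ne_bot_of_finrank_lt (f := (Matrix.of a).mulVecLin) (by simpa using h)
  obtain ⟨c, hc, hc0⟩ := Submodule.exists_mem_ne_zero_of_ne_bot this
  refine ⟨c, hc0, fun k => ?_⟩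
  have := congrFun (LinearMap.mem_ker.1 hc) k
  simpa [Matrix.mulVec, dotProduct, mul_comm] using this

end system

section pts

variable {L : Type*} [Field L] [IsAlgClosed L]

lemma sep_roots (f : L[X]) (hf : f.Separable) (hm : f.Monic) [DecidableEq L] :
    f.natDegree = f.roots.toFinset.card ∧ ∀ a ∈ f.roots.toFinset, f.eval a = 0 ∧ f.derivative.eval a ≠ 0 := by
  constructor
  · rw [Multiset.toFinset_card_of_nodup (nodup_roots hf), (IsAlgClosed.splits f).natDegree_eq_card_roots]
  · intro a ha
    have h1 : f.eval a = 0 := by simpa [hm.ne_zero] using ha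
    refine ⟨h1, hf.eval₂_derivative_ne_zero (RingHom.id L) ?_⟩
    simpa using h1

/-- Local factorisation of `F`. -/
lemma local_split (F : L[X][X]) (hF : F.Monic) (x : L) [DecidableEq L]
    (hsep : (F.map (evalRingHom x)).Separable) :
    ∃ Φ : L → PowerSeries L,
      (∀ y ∈ (F.map (evalRingHom x)).roots.toFinset,
        ev (PowerSeries.C x + PowerSeries.X) (Φ y) F = 0 ∧ PowerSeries.constantCoeff (Φ y) = y) ∧
      F.map (aeval (PowerSeries.C x + PowerSeries.X) : L[X] →ₐ[L] _).toRingHom =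
        ∏ y ∈ (F.map (evalRingHom x)).roots.toFinset, (X - C (Φ y)) := by
  set f := F.map (aeval (PowerSeries.C x + PowerSeries.X) : L[X] →ₐ[L] PowerSeries L).toRingHom with hf
  have hf0 : f.map PowerSeries.constantCoeff = F.map (evalRingHom x) := by
    rw [hf, Polynomial.map_map]
    congr 1
    refine Polynomial.ringHom_ext' ?_ ?_
    · ext a; simp
    · simp
  have hmon : f.Monic := hF.map _
  obtain ⟨h1, h2⟩ := sep_roots _ hsep (hF.map _)
  obtain ⟨Φ, hΦ, hprod⟩ := hensel_split f hmon (F.map (evalRingHom x)).roots.toFinset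
    (by rw [← h1, hf, hF.natDegree_map, hF.natDegree_map])
    (fun y => ((F.map (evalRingHom x)).derivative.eval y)⁻¹)
    (fun a ha => by rw [hf0]; exact (h2 a ha).1)
    (fun a ha => by rw [hf0]; exact inv_mul_cancel₀ (h2 a ha).2)
  refine ⟨Φ, fun y hy => ⟨?_, (hΦ y hy).2.1⟩, hprod⟩
  rw [ev_eq]
  exact (hΦ y hy).1

/-- If `β` vanishes to order `M` at all points of `S`, then `S` is small. -/
lemma zeros_bound (F β : L[X][X]) (hF : F.Monic) (hirr : Irreducible F) (hβ : ¬ F ∣ β)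
    (m a b M : ℕ) (hm : β.natDegree ≤ m) (ha : ∀ j, (F.coeff j).natDegree ≤ a)
    (hb : ∀ j, (β.coeff j).natDegree ≤ b) (S : Finset (L × L))
    (hS : ∀ P ∈ S, ev P.1 P.2 F = 0 ∧ (F.map (evalRingHom P.1)).Separable ∧
      ∀ φ : PowerSeries L, ev (PowerSeries.C P.1 + PowerSeries.X) φ F = 0 →
        PowerSeries.constantCoeff φ = P.2 →
        PowerSeries.X ^ M ∣ ev (PowerSeries.C P.1 + PowerSeries.X) φ β) :
    M * S.card ≤ F.natDegree * b + m * a := by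
  classical
  set n := resultant F β F.natDegree m with hn
  have hn0 : n ≠ 0 := resultant_ne_zero_of_irred F β hF hirr hβ m hm
  have hdeg : n.natDegree ≤ F.natDegree * b + m * a := by
    have := (Filt.deg L).resultant_mem F β F.natDegree m (a := a) (b := b)
      (fun i => Filt.mem_deg.2 (ha i)) (fun i => Filt.mem_deg.2 (hb i))
    rw [← hn] at this
    exact Filt.mem_deg.1 (by exact_mod_cast this)
  have hx : ∀ x ∈ S.image Prod.fst, M * {P ∈ S | P.1 = x}.card ≤ n.rootMultiplicity x := by
    intro x hx
    obtain ⟨P0, hP0, rfl⟩ := Finset.mem_image.1 hx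
    set x := P0.1
    obtain ⟨-, hsep, -⟩ := hS P0 hP0
    obtain ⟨Φ, hΦ, hprod⟩ := local_split F hF x hsep
    apply le_rootMultiplicity_of_dvd x n hn0
    set τ := (aeval (PowerSeries.C x + PowerSeries.X) : L[X] →ₐ[L] PowerSeries L).toRingHom with hτ
    set Y0 := (F.map (evalRingHom x)).roots.toFinset with hY0
    have h1 : aeval (PowerSeries.C x + PowerSeries.X) n =
        ∏ y ∈ Y0, (β.map τ).eval (Φ y) := by
      change τ n = _
      rw [hn, ← resultant_map_map]
      have h2 := resultant_prod_eval (F.map τ) (β.map τ) Y0 Φ hprod m (natDegree_map_le.trans hm)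
      rw [hF.natDegree_map] at h2
      exact h2
    rw [h1, pow_mul]
    have hsub : ({P ∈ S | P.1 = x}.image Prod.snd) ⊆ Y0 := by
      intro y hy
      obtain ⟨P, hP, rfl⟩ := Finset.mem_image.1 hy
      obtain ⟨hPS, hPx⟩ := Finset.mem_filter.1 hP
      obtain ⟨h2, -, -⟩ := hS P hPS
      rw [ev_field_eq, hPx] at h2
      rw [hY0, Multiset.mem_toFinset, mem_roots (hF.map _).ne_zero]
      exact h2
    have hcard : {P ∈ S | P.1 = x}.card = ({P ∈ S | P.1 = x}.image Prod.snd).card := by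
      rw [Finset.card_image_of_injOn]
      rintro ⟨x1, y1⟩ h1 ⟨x2, y2⟩ h2 h
      simp at h1 h2 h
      simp [h1.2, h2.2, h]
    rw [hcard, ← Finset.prod_const, ]
    refine dvd_trans (Finset.prod_dvd_prod_of_dvd _ (fun y => (β.map τ).eval (Φ y)) ?_)
      (Finset.prod_dvd_prod_of_subset _ _ _ hsub)
    intro y hy
    obtain ⟨P, hP, rfl⟩ := Finset.mem_image.1 hy
    obtain ⟨hPS, hPx⟩ := Finset.mem_filter.1 hP
    obtain ⟨-, -, h3⟩ := hS P hPS
    have h4 := hΦ P.2 (hsub hy)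
    have := h3 (Φ P.2) (by rw [hPx]; exact h4.1) h4.2
    rw [hPx, ev_eq] at this
    exact this
  calc M * S.card = ∑ x ∈ S.image Prod.fst, M * {P ∈ S | P.1 = x}.card := by
        rw [← Finset.mul_sum, ← Finset.card_eq_sum_card_image]
    _ ≤ ∑ x ∈ S.image Prod.fst, n.rootMultiplicity x := Finset.sum_le_sum hx
    _ ≤ n.natDegree := sum_rootMultiplicity_le n _
    _ ≤ _ := hdeg

end pts

end LW


open Polynomial

namespace LW

section stepanov

variable {L : Type*} [Field L] {A d Bn : ℕ}

lemma beta_natDegree (q : ℕ) (c : Idx A d Bn → L) : (beta q c).natDegree ≤ d + q * d := by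
  rw [← Filt.mem_deg]
  refine AddSubgroup.sum_mem _ fun ι _ => ?_
  have hC : ∀ a : L[X], C a ∈ (Filt.deg L[X]).S 0 := fun a =>
    Filt.poly_C _ (Filt.mem_triv.2 (Or.inr le_rfl))
  have hX : (X : L[X][X]) ∈ (Filt.deg L[X]).S 1 := by
    simpa using (Filt.triv L[X]).poly_X (c := -1)
  refine Filt.mono _ ?_ (Filt.mul_mem _ (Filt.mul_mem _ (Filt.mul_mem _ (Filt.mul_mem _ (hC (C (c ι)))
    (Filt.pow_mem _ (hC X) ι.1)) (Filt.pow_mem _ hX ι.2.1))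
    (Filt.pow_mem _ (Filt.pow_mem _ (hC X) q) ι.2.2.1))
    (Filt.pow_mem _ (Filt.pow_mem _ hX q) ι.2.2.2))
  have h1 := ι.2.1.2
  have h2 : (ι.2.2.2 : ℕ) * q ≤ q * d := by
    rw [mul_comm]; exact Nat.mul_le_mul_left _ ι.2.2.2.2.le
  zify at h1 h2 ⊢
  linarith

lemma beta_coeff_natDegree (q : ℕ) (c : Idx A d Bn → L) (j : ℕ) :
    ((beta q c).coeff j).natDegree ≤ A + q * Bn := by
  rw [← Filt.mem_deg]
  have : beta q c ∈ ((Filt.deg L).poly 0).S ((A + q * Bn : ℕ) : ℤ) := by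
    refine AddSubgroup.sum_mem _ fun ι _ => ?_
    have hC : ∀ a : L, C (C a) ∈ ((Filt.deg L).poly 0).S 0 := fun a =>
      Filt.poly_C _ (Filt.poly_C _ (Filt.mem_triv.2 (Or.inr le_rfl)))
    have hCX : C (X : L[X]) ∈ ((Filt.deg L).poly 0).S 1 := Filt.poly_C _ (by
      simpa using (Filt.triv L).poly_X (c := -1))
    have hX : (X : L[X][X]) ∈ ((Filt.deg L).poly 0).S 0 := by
      simpa using (Filt.deg L).poly_X (c := 0)
    refine Filt.mono _ ?_ (Filt.mul_mem _ (Filt.mul_mem _ (Filt.mul_mem _ (Filt.mul_mem _ (hC (c ι))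
      (Filt.pow_mem _ hCX ι.1)) (Filt.pow_mem _ hX ι.2.1))
      (Filt.pow_mem _ (Filt.pow_mem _ hCX q) ι.2.2.1))
      (Filt.pow_mem _ (Filt.pow_mem _ hX q) ι.2.2.2))
    have h1 := ι.1.2
    have h2 : (ι.2.2.1 : ℕ) * q ≤ q * Bn := by
      rw [mul_comm]; exact Nat.mul_le_mul_left _ ι.2.2.1.2.le
    zify at h1 h2 ⊢
    linarith
  simpa using this j

lemma ev_beta {B : Type*} [CommRing B] [Algebra L B] (u v : B) (q : ℕ) (c : Idx A d Bn → L) :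
    ev u v (beta q c) = ∑ ι, algebraMap L B (c ι) * u ^ (ι.1 : ℕ) * v ^ (ι.2.1 : ℕ) *
    (u ^ q) ^ (ι.2.2.1 : ℕ) * (v ^ q) ^ (ι.2.2.2 : ℕ) := by
  simp [beta]

lemma frob_ps (p k : ℕ) [Fact p.Prime] [CharP L p] (φ : PowerSeries L) :
    PowerSeries.X ^ (p ^ k) ∣ φ ^ (p ^ k) -
      PowerSeries.C ((PowerSeries.constantCoeff φ) ^ (p ^ k)) := by
  have : CharP (PowerSeries L) p :=
    charP_of_injective_ringHom (f := (PowerSeries.C : L →+* PowerSeries L)) PowerSeries.C_injective p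
  have : ExpChar (PowerSeries L) p := ExpChar.prime Fact.out
  rw [map_pow, ← sub_pow_expChar_pow]
  apply pow_dvd_pow_of_dvd
  rw [PowerSeries.X_dvd_iff]
  simp

/-- Stepanov's method. -/
theorem stepanov [IsAlgClosed L] (p k : ℕ) [Fact p.Prime] [CharP L p]
    (F : L[X][X]) (hF : F.Monic) (hirr : Irreducible F) (hd : F.natDegree = d)
    (hd1 : 1 ≤ d) (hTD : F ∈ (TD L).S d)
    (hfix : ∀ i j, ((F.coeff j).coeff i) ^ (p ^ k) = (F.coeff j).coeff i)
    (e : ℕ) (h : Fin d → Fin e → L[X][X]) (hh : ∀ l r, h l r ∈ (TD L).S d)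
    (S : Finset (L × L))
    (hS : ∀ P ∈ S, ev P.1 P.2 F = 0 ∧ P.1 ^ (p ^ k) = P.1 ∧
      (F.map (evalRingHom P.1)).Separable ∧
      ∀ l : Fin d, (P.2 ^ (p ^ k)) ^ (l : ℕ) =
        ∑ r, ev P.1 P.2 (h l r) * (P.2 ^ (p ^ k)) ^ (r : ℕ))
    (M : ℕ) (hM : M ≤ p ^ k) (hA : d * (A + d) < p ^ k)
    (hcount : M * e * d * (A + Bn + 2 * d * M + 2 * d + 1) < A * d * Bn * d) :
    M * S.card ≤ d * (A + p ^ k * Bn) + (d + p ^ k * d) * d := by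
  classical
  obtain ⟨P, hPmem, hP⟩ := hasse_exists F hd1 hTD
  set q := p ^ k with hq
  set N := A + Bn + 2 * d * M + 2 * d with hN
  -- the building blocks
  let Q : Fin M → Fin e → Idx A d Bn → L[X][X] := fun l' r ι =>
    P l' ι.1 ι.2.1 * (C X) ^ (ι.2.2.1 : ℕ) * h ι.2.2.2 r
  have hQ : ∀ l' r ι, Q l' r ι %ₘ F ∈ (TD L).S N := by
    intro l' r ι
    refine (Filt.deg L).modByMonic_mem F hF (c := -1) (by rw [hd]; simpa using hTD) _ _ _ le_rfl ?_
    refine Filt.mono _ ?_ (Filt.mul_mem _ (Filt.mul_mem _ (hPmem l' ι.1 ι.2.1)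
      (Filt.pow_mem _ TD_CX ι.2.2.1)) (hh ι.2.2.2 r))
    have h1 := ι.1.2
    have h2 := ι.2.1.2
    have h3 := ι.2.2.1.2
    have h4 := Nat.mul_le_mul_left (2 * d) l'.2.le
    rw [hN]
    zify at h1 h2 h3 h4 ⊢
    linarith
  obtain ⟨c, hc0, hc⟩ := exists_kernel (L := L) (ι := Idx A d Bn)
    (κ := Fin M × Fin e × Fin d × Fin (N + 1))
    (fun κ ι => ((Q κ.1 κ.2.1 ι %ₘ F).coeff κ.2.2.1).coeff κ.2.2.2) (by
      simp only [Fintype.card_prod, Fintype.card_fin]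
      rw [← mul_assoc, ← mul_assoc, ← mul_assoc, ← mul_assoc]
      exact hcount)
  have hdvd : ∀ l' r, F ∣ ∑ ι, C (C (c ι)) * Q l' r ι := by
    intro l' r
    rw [← modByMonic_eq_zero_iff_dvd hF]
    have e1 : (∑ ι, C (C (c ι)) * Q l' r ι) %ₘ F = ∑ ι, C (C (c ι)) * (Q l' r ι %ₘ F) := by
      have : ∀ f : L[X][X], f %ₘ F = modByMonicHom F f := fun f => rfl
      simp only [this, ← smul_eq_C_mul, map_sum, map_smul]
    rw [e1]
    ext j i
    rw [finsetSum_coeff, finsetSum_coeff, coeff_zero, coeff_zero]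
    simp only [coeff_C_mul]
    by_cases hj : j < d
    · by_cases hi : i < N + 1
      · exact hc (l', r, ⟨j, hj⟩, ⟨i, hi⟩)
      · refine Finset.sum_eq_zero fun ι _ => ?_
        by_contra hne
        have := TD_iff.1 (hQ l' r ι) i j (right_ne_zero_of_mul hne)
        omega
    · refine Finset.sum_eq_zero fun ι _ => ?_
      rw [coeff_eq_zero_of_degree_lt (p := Q l' r ι %ₘ F), coeff_zero, mul_zero]
      refine (degree_modByMonic_lt _ hF).trans_le ?_
      rw [degree_eq_natDegree hF.ne_zero, hd]
      exact_mod_cast (by omega)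
  have hnv := nonvanish p k F hF hirr hd hd1 hTD hfix hA c hc0
  have hb := zeros_bound F (beta q c) hF hirr hnv (d + q * d) d (A + q * Bn) M
    (beta_natDegree q c) (fun j => by
      rw [← Filt.mem_deg]
      exact Filt.mono _ (by omega) (hTD j)) (beta_coeff_natDegree q c) S ?_
  · rw [hd] at hb; exact hb
  intro pt hpt
  obtain ⟨h1, h2, h3, h4⟩ := hS pt hpt
  refine ⟨h1, h3, fun φ hφ hφ0 => ?_⟩
  obtain ⟨x, y⟩ := pt
  simp only at h1 h2 h3 h4 hφ hφ0 ⊢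
  set δ := ev x y (derivative F) with hδ
  have hδ0 : δ ≠ 0 := by
    rw [hδ, ev_field_eq, ← derivative_map]
    refine h3.eval₂_derivative_ne_zero (RingHom.id L) ?_
    rw [ev_field_eq] at h1
    simpa using h1
  have hPp := hP x y φ h1 hδ0 hφ hφ0
  set U : PowerSeries L := PowerSeries.C x + PowerSeries.X with hU
  rw [ev_beta]
  have hMq : (PowerSeries.X : PowerSeries L) ^ M ∣ PowerSeries.X ^ q := pow_dvd_pow _ hM
  have hUq : PowerSeries.X ^ M ∣ U ^ q - PowerSeries.C x := by
    have := frob_ps p k U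
    have e0 : PowerSeries.constantCoeff U = x := by simp [hU]
    rw [e0, ← hq, h2] at this
    exact hMq.trans this
  have hφq : PowerSeries.X ^ M ∣ φ ^ q - PowerSeries.C (y ^ q) := by
    have := frob_ps p k φ
    rw [hφ0, ← hq] at this
    exact hMq.trans this
  have hred : PowerSeries.X ^ M ∣ ∑ ι : Idx A d Bn, algebraMap L (PowerSeries L) (c ι) * U ^ (ι.1 : ℕ) *
      φ ^ (ι.2.1 : ℕ) * (U ^ q) ^ (ι.2.2.1 : ℕ) * (φ ^ q) ^ (ι.2.2.2 : ℕ) -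
      ∑ ι : Idx A d Bn, algebraMap L (PowerSeries L) (c ι) * U ^ (ι.1 : ℕ) *
      φ ^ (ι.2.1 : ℕ) * (PowerSeries.C x) ^ (ι.2.2.1 : ℕ) *
        (PowerSeries.C (y ^ q)) ^ (ι.2.2.2 : ℕ) := by
    rw [← Finset.sum_sub_distrib]
    refine Finset.dvd_sum fun ι _ => ?_
    exact dvd_mul_sub_mul (dvd_mul_sub_mul (by simp) (hUq.trans (sub_dvd_pow_sub_pow _ _ _)))
      (hφq.trans (sub_dvd_pow_sub_pow _ _ _))
  refine (dvd_iff_dvd_of_dvd_sub hred).2 ?_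
  rw [PowerSeries.X_pow_dvd_iff]
  intro l' hl'
  have hcoef : ∀ ι : Idx A d Bn, PowerSeries.coeff l' (algebraMap L (PowerSeries L) (c ι) * U ^ (ι.1 : ℕ) *
      φ ^ (ι.2.1 : ℕ) * (PowerSeries.C x) ^ (ι.2.2.1 : ℕ) *
        (PowerSeries.C (y ^ q)) ^ (ι.2.2.2 : ℕ)) * δ ^ (2 * l') =
      ∑ r : Fin e, (y ^ q) ^ (r : ℕ) * ev x y (C (C (c ι)) * Q ⟨l', hl'⟩ r ι) := by
    intro ι
    have e1 : algebraMap L (PowerSeries L) (c ι) * U ^ (ι.1 : ℕ) *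
      φ ^ (ι.2.1 : ℕ) * (PowerSeries.C x) ^ (ι.2.2.1 : ℕ) *
        (PowerSeries.C (y ^ q)) ^ (ι.2.2.2 : ℕ) =
        PowerSeries.C (c ι * x ^ (ι.2.2.1 : ℕ) * (y ^ q) ^ (ι.2.2.2 : ℕ)) *
        (U ^ (ι.1 : ℕ) * φ ^ (ι.2.1 : ℕ)) := by
      have : algebraMap L (PowerSeries L) (c ι) = PowerSeries.C (c ι) := rfl
      rw [this]
      simp only [map_mul, map_pow]
      ring
    rw [e1, PowerSeries.coeff_C_mul, mul_assoc, hPp, h4 ι.2.2.2, Finset.mul_sum, Finset.sum_mul]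
    refine Finset.sum_congr rfl fun r _ => ?_
    simp only [Q, map_mul, ev_CC, map_pow, ev_CX]
    simp only [Algebra.algebraMap_self, RingHom.id_apply]
    ring
  have hfin : (PowerSeries.coeff l' (∑ ι : Idx A d Bn, algebraMap L (PowerSeries L) (c ι) * U ^ (ι.1 : ℕ) *
      φ ^ (ι.2.1 : ℕ) * (PowerSeries.C x) ^ (ι.2.2.1 : ℕ) *
        (PowerSeries.C (y ^ q)) ^ (ι.2.2.2 : ℕ))) * δ ^ (2 * l') = 0 := by
    rw [map_sum, Finset.sum_mul, Finset.sum_congr rfl fun ι _ => hcoef ι, Finset.sum_comm]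
    refine Finset.sum_eq_zero fun r _ => ?_
    rw [← Finset.mul_sum, ← map_sum]
    obtain ⟨z, hz⟩ := hdvd ⟨l', hl'⟩ r
    rw [hz, map_mul, h1, zero_mul, mul_zero]
  exact (mul_eq_zero.1 hfin).resolve_right (pow_ne_zero _ hδ0)

end stepanov

end LW


open Polynomial

namespace LW

section curve

variable {L : Type*} [Field L]

lemma params (d e q M : ℕ) (hd : 1 ≤ d) (he : e ≤ d) (hM : 100 * d ^ 3 ≤ M) (h1 : M * M ≤ q) :
    let A := M * M / (4 * d) + 1
    let B := e * M / d + (12 * d ^ 2 + 2)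
    d * (A + d) < q ∧ M * e * d * (A + B + 2 * d * M + 2 * d + 1) < A * d * B * d ∧
    d * (A + q * B) + (d + q * d) * d ≤ M * (e * q) + 17 * d ^ 3 * q := by
  intro A B
  have hd2 : d ≤ d ^ 2 := by nlinarith
  have hd3 : d ^ 2 ≤ d ^ 3 := by nlinarith
  have hA1 : M * M < 4 * d * A := by
    have := Nat.lt_mul_div_succ (M * M) (show 0 < 4 * d by omega)
    exact this
  have hA2 : 4 * d * (A - 1) ≤ M * M := Nat.mul_div_le _ _
  have hA3 : 4 * d * A ≤ M * M + 4 * d := by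
    have : A - 1 + 1 = A := rfl
    nlinarith
  have hB1 : e * M + d * (12 * d ^ 2 + 1) < d * B := by
    have := Nat.lt_mul_div_succ (e * M) (show 0 < d by omega)
    have e1 : d * B = d * (e * M / d + 1) + d * (12 * d ^ 2 + 1) := by simp only [B]; ring
    omega
  have hB2 : d * B ≤ e * M + d * (12 * d ^ 2 + 2) := by
    have := Nat.mul_div_le (e * M) d
    have e1 : d * B = d * (e * M / d) + d * (12 * d ^ 2 + 2) := by simp only [B]; ring
    omega
  have hB3 : B ≤ M + (12 * d ^ 2 + 2) := by
    have h9 : e * M / d ≤ M := Nat.div_le_of_le_mul (Nat.mul_le_mul_right _ he)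
    simp only [B]
    omega
  clear_value A B
  have hMM : 100 * d ^ 3 * M ≤ M * M := Nat.mul_le_mul_right _ hM
  have hMpos : 100 ≤ M := by omega
  refine ⟨?_, ?_, ?_⟩
  · nlinarith
  · -- reduce
    have key : M * e * (A + B + 2 * d * M + 2 * d + 1) < A * (d * B) := by
      have s1 : 4 * d * e * (B + 2 * d * M + 2 * d + 1) < M * (d * (12 * d ^ 2 + 1)) := by
        have t1 : 4 * d * e * (B + 2 * d * M + 2 * d + 1) ≤
            4 * d * d * (M + (12 * d ^ 2 + 2) + 2 * d * M + 2 * d + 1) := by gcongr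
        have t2 : 4 * d * d * (M + (12 * d ^ 2 + 2) + 2 * d * M + 2 * d + 1) =
            M * (4 * d ^ 2 + 8 * d ^ 3) + d * (4 * d * (12 * d ^ 2 + 2 * d + 3)) := by ring
        have t3 : 4 * d * (12 * d ^ 2 + 2 * d + 3) < M := by
          have : 4 * d * (12 * d ^ 2 + 2 * d + 3) = 48 * d ^ 3 + 8 * d ^ 2 + 12 * d := by ring
          omega
        have t4 : d * (4 * d * (12 * d ^ 2 + 2 * d + 3)) < d * M :=
          Nat.mul_lt_mul_of_pos_left t3 (by omega)
        have t5 : M * (4 * d ^ 2 + 8 * d ^ 3) ≤ M * (12 * d ^ 3) :=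
          Nat.mul_le_mul_left _ (by omega)
        have t6 : M * (d * (12 * d ^ 2 + 1)) = M * (12 * d ^ 3) + d * M := by ring
        omega
      have s2 : M * e * (B + 2 * d * M + 2 * d + 1) * (4 * d) <
          A * (d * (12 * d ^ 2 + 1)) * (4 * d) := by
        calc M * e * (B + 2 * d * M + 2 * d + 1) * (4 * d)
            = M * (4 * d * e * (B + 2 * d * M + 2 * d + 1)) := by ring
          _ < M * (M * (d * (12 * d ^ 2 + 1))) := Nat.mul_lt_mul_of_pos_left s1 (by omega)
          _ = (M * M) * (d * (12 * d ^ 2 + 1)) := by ring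
          _ ≤ (4 * d * A) * (d * (12 * d ^ 2 + 1)) := Nat.mul_le_mul_right _ hA1.le
          _ = _ := by ring
      have s3 := lt_of_mul_lt_mul_right s2 (by omega)
      calc M * e * (A + B + 2 * d * M + 2 * d + 1)
          = A * (e * M) + M * e * (B + 2 * d * M + 2 * d + 1) := by ring
        _ < A * (e * M) + A * (d * (12 * d ^ 2 + 1)) := by omega
        _ = A * (e * M + d * (12 * d ^ 2 + 1)) := by ring
        _ ≤ _ := Nat.mul_le_mul_left _ hB1.le
    calc M * e * d * (A + B + 2 * d * M + 2 * d + 1)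
        = d * (M * e * (A + B + 2 * d * M + 2 * d + 1)) := by ring
      _ < d * (A * (d * B)) := Nat.mul_lt_mul_of_pos_left key (by omega)
      _ = _ := by ring
  · have u1 : d * A ≤ q := by nlinarith
    have u2 : q * (d * B) ≤ q * (e * M + d * (12 * d ^ 2 + 2)) := Nat.mul_le_mul_left _ hB2
    have u3 : d * d ≤ q := by nlinarith
    have u4 : q * 1 ≤ q * d ^ 3 := Nat.mul_le_mul_left _ (by omega)
    have u5 : q * d ≤ q * d ^ 3 := Nat.mul_le_mul_left _ (by omega)
    have u6 : q * d ^ 2 ≤ q * d ^ 3 := Nat.mul_le_mul_left _ (by omega)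
    calc d * (A + q * B) + (d + q * d) * d = d * A + q * (d * B) + d * d + q * d ^ 2 := by ring
      _ ≤ q + q * (e * M + d * (12 * d ^ 2 + 2)) + q + q * d ^ 2 := by omega
      _ = M * (e * q) + (2 * (q * 1) + 12 * (q * d ^ 3) + 2 * (q * d) + q * d ^ 2) := by ring
      _ ≤ M * (e * q) + 17 * (q * d ^ 3) := by omega
      _ = _ := by ring

end curve
end LW


open Polynomial

namespace LW

section curve2

lemma sep_of_disc {R K : Type*} [CommRing R] [Field K] (φ : R →+* K) (F : R[X]) (d : ℕ) (hd1 : 1 ≤ d)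
    (hd : F.natDegree = d) (h : φ (resultant F F.derivative d d) ≠ 0) : (F.map φ).Separable := by
  obtain ⟨P, Q, -, -, e⟩ := exists_mul_add_mul_eq_C_resultant (m := d) (n := d) F F.derivative hd.le
      ((natDegree_derivative_le F).trans (by omega)) (Or.inl (by omega))
  have e1 := congrArg (Polynomial.map φ) e
  rw [Polynomial.map_add, Polynomial.map_mul, Polynomial.map_mul, map_C, ← derivative_map] at e1
  refine ⟨C (φ (resultant F F.derivative d d))⁻¹ * P.map φ, C (φ (resultant F F.derivative d d))⁻¹ * Q.map φ, ?_⟩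
  have e2 : C (φ (resultant F F.derivative d d))⁻¹ * C (φ (resultant F F.derivative d d)) = 1 := by
    rw [← C_mul, inv_mul_cancel₀ h, C_1]
  linear_combination e2 + C (φ (resultant F F.derivative d d))⁻¹ * e1

variable {L : Type*} [Field L]

lemma curve_S [IsAlgClosed L] (p k d : ℕ) [Fact p.Prime] [CharP L p]
    (F : L[X][X]) (hF : F.Monic) (hirr : Irreducible F) (hd : F.natDegree = d)
    (hd1 : 1 ≤ d) (hTD : F ∈ (TD L).S d)
    (hfix : ∀ i j, ((F.coeff j).coeff i) ^ (p ^ k) = (F.coeff j).coeff i)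
    (e : ℕ) (he : e ≤ d) (h : Fin d → Fin e → L[X][X]) (hh : ∀ l r, h l r ∈ (TD L).S d)
    (S : Finset (L × L))
    (hS : ∀ P ∈ S, ev P.1 P.2 F = 0 ∧ P.1 ^ (p ^ k) = P.1 ∧
      (F.map (evalRingHom P.1)).Separable ∧
      ∀ l : Fin d, (P.2 ^ (p ^ k)) ^ (l : ℕ) =
        ∑ r, ev P.1 P.2 (h l r) * (P.2 ^ (p ^ k)) ^ (r : ℕ))
    (hM : 100 * d ^ 3 ≤ Nat.sqrt (p ^ k)) :
    S.card ≤ e * p ^ k + 51 * d ^ 3 * Nat.sqrt (p ^ k) := by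
  set M := Nat.sqrt (p ^ k) with hMdef
  have h1 : M * M ≤ p ^ k := Nat.sqrt_le _
  have h2 : p ^ k ≤ M * M + M + M := Nat.sqrt_le_add _
  obtain ⟨a1, a2, a3⟩ := params d e (p ^ k) M hd1 he hM h1
  have hd3 : 1 ≤ d ^ 3 := Nat.one_le_pow _ _ hd1
  have hMpos : 1 ≤ M := by omega
  have h3 := stepanov p k F hF hirr hd hd1 hTD hfix e h hh S hS M (by nlinarith) a1 a2
  have h4 : M * S.card ≤ M * (e * p ^ k + 51 * d ^ 3 * M) := by
    refine h3.trans (a3.trans ?_)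
    have : 17 * d ^ 3 * p ^ k ≤ 17 * d ^ 3 * (3 * (M * M)) :=
      Nat.mul_le_mul_left _ (by nlinarith)
    calc _ ≤ M * (e * p ^ k) + 17 * d ^ 3 * (3 * (M * M)) := by omega
      _ = _ := by ring
  exact le_of_mul_le_mul_left h4 (by omega)

lemma TD_sum_mem (F : L[X][X]) (d : ℕ) (hTD : F ∈ (TD L).S d) (m s : ℕ) (hs : s ≤ m) :
    C (F.coeff m) * X ^ s ∈ (TD L).S d := by
  rw [TD_iff] at hTD ⊢
  intro i j hij
  rw [coeff_C_mul, coeff_X_pow] at hij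
  split_ifs at hij with hjs
  · have := hTD i m (by simpa using hij)
    omega
  · simp at hij

/-- The polynomial `G(x,y,z)= (F(x,z)-F(x,y))/(z-y)`, coefficient of `z^r`. -/
noncomputable def gq (F : L[X][X]) (d r : ℕ) : L[X][X] :=
  ∑ m ∈ Finset.Ioc r d, C (F.coeff m) * X ^ (m - 1 - r)

lemma gq_mem (F : L[X][X]) (d r : ℕ) (hTD : F ∈ (TD L).S d) : gq F d r ∈ (TD L).S d := by
  refine AddSubgroup.sum_mem _ fun m hm => TD_sum_mem F d hTD m _ ?_
  omega

lemma gq_eval (F : L[X][X]) (d : ℕ) (hd : F.natDegree = d) (x y z : L) :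
    (z - y) * ∑ r ∈ Finset.range d, ev x y (gq F d r) * z ^ r = ev x z F - ev x y F := by
  have e1 : ∀ w, ev x w F = ∑ m ∈ Finset.range (d + 1), aeval x (F.coeff m) * w ^ m := by
    intro w
    conv_lhs => rw [F.as_sum_range_C_mul_X_pow, hd]
    simp
  rw [e1, e1, ← Finset.sum_sub_distrib]
  have e2 : ∀ m, aeval x (F.coeff m) * z ^ m - aeval x (F.coeff m) * y ^ m =
      (z - y) * (aeval x (F.coeff m) * ∑ r ∈ Finset.range m, z ^ r * y ^ (m - 1 - r)) := by
    intro m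
    have := Commute.mul_geom_sum₂ (Commute.all z y) m
    rw [← mul_sub, ← this]; ring
  rw [Finset.sum_congr rfl fun m _ => e2 m, ← Finset.mul_sum]
  congr 1
  simp only [gq, map_sum, map_mul, map_pow, ev_C, ev_X, Finset.sum_mul, Finset.mul_sum]
  rw [Finset.sum_sigma', Finset.sum_sigma']
  refine Finset.sum_bij' (fun a _ => ⟨a.2, a.1⟩) (fun a _ => ⟨a.2, a.1⟩) ?_ ?_ ?_ ?_ ?_
  · rintro ⟨a, b⟩ h; simp at h ⊢; omega
  · rintro ⟨a, b⟩ h; simp at h ⊢; omega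
  · simp
  · simp
  · rintro ⟨a, b⟩ h; simp only; ring

lemma gq_top (F : L[X][X]) (hF : F.Monic) (d : ℕ) (hd1 : 1 ≤ d) (hd : F.natDegree = d) :
    gq F d (d - 1) = 1 := by
  have : Finset.Ioc (d - 1) d = {d} := by ext; simp; omega
  rw [gq, this, Finset.sum_singleton, ← hd, coeff_natDegree, hF.leadingCoeff, hd]
  simp

theorem curve [IsAlgClosed L] (p k d : ℕ) [Fact p.Prime] [CharP L p]
    (𝒦 : Finset L) (hK : ∀ x, x ∈ 𝒦 ↔ x ^ (p ^ k) = x) (hKc : 𝒦.card = p ^ k)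
    (F : L[X][X]) (hF : F.Monic) (hirr : Irreducible F) (hd : F.natDegree = d)
    (hd1 : 1 ≤ d) (hTD : F ∈ (TD L).S d) (hder : derivative F ≠ 0)
    (hfix : ∀ i j, ((F.coeff j).coeff i) ^ (p ^ k) = (F.coeff j).coeff i)
    (N : ℕ) (hN : N = Set.ncard {P : L × L | P.1 ∈ 𝒦 ∧ P.2 ∈ 𝒦 ∧ ev P.1 P.2 F = 0})
    (hM : 100 * d ^ 3 ≤ Nat.sqrt (p ^ k)) :
    N ≤ p ^ k + 53 * d ^ 3 * Nat.sqrt (p ^ k) ∧ p ^ k ≤ N + 53 * d ^ 3 * Nat.sqrt (p ^ k) := by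
  classical
  set M := Nat.sqrt (p ^ k) with hMdef
  have hd3 : 1 ≤ d ^ 3 := Nat.one_le_pow _ _ hd1
  set Δ : L[X] := resultant F F.derivative d d with hΔ
  have hderdeg : F.derivative.natDegree ≤ d := (natDegree_derivative_le F).trans (by omega)
  have hΔ0 : Δ ≠ 0 := by
    have := resultant_ne_zero_of_irred F F.derivative hF hirr
      (not_dvd_of_natDegree_lt F _ hF hder (degree_derivative_lt hF.ne_zero)) d hderdeg
    rwa [hd] at this
  have hcoef : ∀ i, F.coeff i ∈ (Filt.deg L).S d := by
    intro i
    rw [Filt.mem_deg, natDegree_le_iff_coeff_eq_zero]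
    intro j hj
    by_contra hne
    have := (TD_iff.1 hTD) j i hne
    omega
  have hΔdeg : Δ.natDegree ≤ 2 * d ^ 2 := by
    have := (Filt.deg L).resultant_mem F F.derivative d d (a := d) (b := d) hcoef ?_
    · rw [← Filt.mem_deg]
      convert this using 1
      push_cast; ring
    · intro i
      rw [coeff_derivative]
      have h0 : ((i : L[X]) + 1) ∈ (Filt.deg L).S 0 := by
        rw [show (0 : ℤ) = ((0 : ℕ) : ℤ) from rfl, Filt.mem_deg]
        have : ((i : L[X]) + 1) = ((i + 1 : ℕ) : L[X]) := by push_cast; rfl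
        rw [this, natDegree_natCast]
      simpa using (Filt.deg L).mul_mem (hcoef (i + 1)) h0
  set G := 𝒦.filter (fun x => Δ.eval x ≠ 0) with hG
  set Bd := 𝒦.filter (fun x => Δ.eval x = 0) with hBd
  have hBc : Bd.card ≤ 2 * d ^ 2 := by
    refine le_trans ?_ (le_trans (card_roots' Δ) hΔdeg)
    refine le_trans (Finset.card_le_card (t := Δ.roots.toFinset) ?_) (Multiset.toFinset_card_le _)
    intro x hx
    rw [hBd, Finset.mem_filter] at hx
    simp [hΔ0, hx.2]
  have hGB : G.card + Bd.card = p ^ k := by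
    rw [← hKc, add_comm]; exact Finset.card_filter_add_card_filter_not _
  have hsep : ∀ x ∈ G, (F.map (evalRingHom x)).Separable := by
    intro x hx
    refine sep_of_disc _ F d hd1 hd ?_
    rw [hG, Finset.mem_filter] at hx
    simpa using hx.2
  have hmon : ∀ x, (F.map (evalRingHom x)).Monic := fun x => hF.map _
  have hroots : ∀ x ∈ G, (F.map (evalRingHom x)).roots.toFinset.card = d := by
    intro x hx
    have := (sep_roots _ (hsep x hx) (hmon x)).1
    rw [← this, hF.natDegree_map, hd]
  have hroots' : ∀ x, (F.map (evalRingHom x)).roots.toFinset.card ≤ d := by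
    intro x
    refine (Multiset.toFinset_card_le _).trans ((card_roots' _).trans ?_)
    rw [hF.natDegree_map, hd]
  have hmemr : ∀ x y, y ∈ (F.map (evalRingHom x)).roots.toFinset ↔ ev x y F = 0 := by
    intro x y
    rw [Multiset.mem_toFinset, mem_roots (hmon x).ne_zero, IsRoot, ev_field_eq]
  -- the sets
  let pr : (Σ _ : L, L) ↪ L × L := ⟨fun a => (a.1, a.2), by
    rintro ⟨a, b⟩ ⟨c, d⟩ h; simpa using h⟩
  let S : Finset (L × L) := (G.sigma fun x => (F.map (evalRingHom x)).roots.toFinset).map pr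
  have hSmem : ∀ P, P ∈ S ↔ P.1 ∈ G ∧ ev P.1 P.2 F = 0 := by
    rintro ⟨x, y⟩
    simp only [S, Finset.mem_map, Finset.mem_sigma]
    constructor
    · rintro ⟨⟨a, b⟩, ⟨h1, h2⟩, h3⟩
      simp only [pr, Function.Embedding.coeFn_mk, Prod.mk.injEq] at h3
      obtain ⟨rfl, rfl⟩ := h3
      exact ⟨h1, (hmemr _ _).1 h2⟩
    · rintro ⟨h1, h2⟩
      exact ⟨⟨x, y⟩, ⟨h1, (hmemr _ _).2 h2⟩, rfl⟩
  have hScard : S.card = G.card * d := by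
    simp only [S, Finset.card_map, Finset.card_sigma]
    rw [Finset.sum_congr rfl hroots, Finset.sum_const, smul_eq_mul]
  let T : Finset (L × L) := (Bd.sigma fun x => (F.map (evalRingHom x)).roots.toFinset).map pr
  have hTcard : T.card ≤ 2 * d ^ 3 := by
    simp only [T, Finset.card_map, Finset.card_sigma]
    calc _ ≤ Bd.card * d := by
          rw [← smul_eq_mul]; exact Finset.sum_le_card_nsmul _ _ _ fun x _ => hroots' x
      _ ≤ 2 * d ^ 2 * d := Nat.mul_le_mul_right _ hBc
      _ = _ := by ring
  set S1 := S.filter (fun P => P.2 ^ (p ^ k) = P.2) with hS1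
  set S2 := S.filter (fun P => ¬ P.2 ^ (p ^ k) = P.2) with hS2
  have hS12 : S1.card + S2.card = S.card := Finset.card_filter_add_card_filter_not _
  have c1 : S1.card ≤ 1 * p ^ k + 51 * d ^ 3 * M := by
    refine curve_S p k d F hF hirr hd hd1 hTD hfix 1 hd1 (fun l _ => X ^ (l : ℕ)) ?_ S1 ?_ hM
    · intro l r
      rw [TD_iff]
      intro i j hij
      rw [coeff_X_pow] at hij
      have := l.2
      split_ifs at hij with hj
      · rw [coeff_one] at hij
        split_ifs at hij with hi
        · omega
        · exact absurd rfl hij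
      · simp at hij
    · intro P hP
      rw [hS1, Finset.mem_filter, hSmem] at hP
      refine ⟨hP.1.2, ?_, hsep _ hP.1.1, ?_⟩
      · exact (hK _).1 (Finset.mem_filter.1 hP.1.1).1
      · intro l
        simp [hP.2]
  have c2 : S2.card ≤ (d - 1) * p ^ k + 51 * d ^ 3 * M := by
    refine curve_S p k d F hF hirr hd hd1 hTD hfix (d - 1) (by omega)
      (fun l r => if (l : ℕ) = d - 1 then - gq F d r else if (l : ℕ) = r then 1 else 0) ?_ S2 ?_ hM
    · intro l r
      split_ifs
      · exact AddSubgroup.neg_mem _ (gq_mem F d r hTD)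
      · exact (TD L).mono (by positivity) (TD L).one_mem
      · exact AddSubgroup.zero_mem _
    · intro P hP
      rw [hS2, Finset.mem_filter, hSmem] at hP
      have hx := (hK _).1 (Finset.mem_filter.1 hP.1.1).1
      refine ⟨hP.1.2, hx, hsep _ hP.1.1, ?_⟩
      intro l
      by_cases hl : (l : ℕ) = d - 1
      · simp only [hl, if_true, map_neg, neg_mul, Finset.sum_neg_distrib]
        have e1 := gq_eval F d hd P.1 P.2 (P.2 ^ (p ^ k))
        have e2 := ev_pow_q P.1 P.2 p k F hfix
        rw [hP.1.2, zero_pow (pow_ne_zero _ (Fact.out : p.Prime).ne_zero), hx] at e2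
        rw [hP.1.2, ← e2, sub_zero] at e1
        have e3 := (mul_eq_zero.1 e1).resolve_left (sub_ne_zero.2 hP.2)
        obtain ⟨d', rfl⟩ : ∃ d', d = d' + 1 := ⟨d - 1, by omega⟩
        have e4 := gq_top F hF _ hd1 hd
        simp only [Nat.add_sub_cancel] at e4 ⊢
        rw [Finset.sum_range_succ, e4, map_one, one_mul, Finset.sum_range] at e3
        exact eq_neg_of_add_eq_zero_right e3
      · have hl' : (l : ℕ) < d - 1 := by have := l.2; omega
        simp only [hl, if_false]
        rw [Finset.sum_eq_single (⟨l, hl'⟩ : Fin (d - 1))]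
        · simp
        · intro b _ hb
          rw [if_neg (fun h => hb (Fin.ext h.symm))]; simp
        · simp
  have hN1 : N ≤ S1.card + T.card := by
    rw [hN]
    refine le_trans ?_ (Finset.card_union_le _ _)
    rw [← Set.ncard_coe_finset]
    refine Set.ncard_le_ncard ?_ (Finset.finite_toSet _)
    rintro ⟨x, y⟩ ⟨h1, h2, h3⟩
    simp only at h1 h2 h3
    rw [Finset.mem_coe, Finset.mem_union]
    by_cases hx : Δ.eval x = 0
    · right
      simp only [T, Finset.mem_map, Finset.mem_sigma]
      exact ⟨⟨x, y⟩, ⟨Finset.mem_filter.2 ⟨h1, hx⟩, (hmemr _ _).2 h3⟩, rfl⟩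
    · left
      rw [hS1, Finset.mem_filter, hSmem]
      exact ⟨⟨Finset.mem_filter.2 ⟨h1, hx⟩, h3⟩, (hK _).1 h2⟩
  have hN2 : S1.card ≤ N := by
    rw [hN, ← Set.ncard_coe_finset]
    refine Set.ncard_le_ncard ?_ ?_
    · rintro ⟨x, y⟩ h
      rw [Finset.mem_coe, hS1, Finset.mem_filter, hSmem] at h
      exact ⟨(Finset.mem_filter.1 h.1.1).1, (hK _).2 h.2, h.1.2⟩
    · refine (Finset.finite_toSet (𝒦 ×ˢ 𝒦)).subset ?_
      rintro ⟨x, y⟩ ⟨h1, h2, -⟩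
      simpa using ⟨h1, h2⟩
  have hM1 : d ^ 3 * 1 ≤ d ^ 3 * M := Nat.mul_le_mul_left _ (by omega)
  constructor
  · nlinarith
  · obtain ⟨d', hd'⟩ : ∃ d', d = d' + 1 := ⟨d - 1, by omega⟩
    have f1 : p ^ k * d ≤ G.card * d + 2 * d ^ 3 := by
      rw [← hGB, add_mul]
      have : Bd.card * d ≤ 2 * d ^ 2 * d := Nat.mul_le_mul_right _ hBc
      have e : 2 * d ^ 2 * d = 2 * d ^ 3 := by ring
      omega
    have f2 : p ^ k * d = (d - 1) * p ^ k + p ^ k := by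
      rw [hd', Nat.add_sub_cancel]; ring
    have f3 : 53 * d ^ 3 * M = 51 * d ^ 3 * M + 2 * (d ^ 3 * M) := by ring
    omega

end curve2
end LW


open Polynomial

namespace LW

section mvf

variable {σ L : Type*} [Field L]

/-- Total degree filtration on multivariable polynomials. -/
def MvF (σ L : Type*) [Field L] : Filt (MvPolynomial σ L) where
  S T :=
    { carrier := {p | ∀ s : σ →₀ ℕ, p.coeff s ≠ 0 → (s.degree : ℤ) ≤ T}
      add_mem' := fun {a b} ha hb s hs => by
        by_cases h : a.coeff s = 0
        · exact hb s (fun h' => hs (by rw [MvPolynomial.coeff_add, h, h', add_zero]))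
        · exact ha s h
      zero_mem' := fun s hs => absurd (MvPolynomial.coeff_zero s) hs
      neg_mem' := fun {a} ha s hs => ha s (fun h => hs (by rw [MvPolynomial.coeff_neg, h, neg_zero])) }
  one_mem := by
    classical
    intro s hs
    rw [MvPolynomial.coeff_one] at hs
    split_ifs at hs with h
    · subst h; simp
    · exact absurd rfl hs
  mul_mem := by
    classical
    intro a b x y hx hy s hs
    rw [MvPolynomial.coeff_mul] at hs
    obtain ⟨⟨u, v⟩, huv, h⟩ := Finset.exists_ne_zero_of_sum_ne_zero hs
    rw [Finset.HasAntidiagonal.mem_antidiagonal] at huv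
    have h1 := hx u (left_ne_zero_of_mul h)
    have h2 := hy v (right_ne_zero_of_mul h)
    simp only at huv
    rw [← huv, map_add]; push_cast; omega
  mono := fun {a b} hab x hx s hs => (hx s hs).trans hab

lemma mem_MvF {T : ℤ} {p : MvPolynomial σ L} :
    p ∈ (MvF σ L).S T ↔ ∀ s : σ →₀ ℕ, p.coeff s ≠ 0 → (s.degree : ℤ) ≤ T := Iff.rfl

lemma mem_MvF_nat {T : ℕ} {p : MvPolynomial σ L} :
    p ∈ (MvF σ L).S T ↔ p.totalDegree ≤ T := by
  rw [mem_MvF, MvPolynomial.totalDegree_eq, Finset.sup_le_iff]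
  simp only [MvPolynomial.mem_support_iff, Nat.cast_le, Finsupp.card_toMultiset]
  rfl

lemma MvF_C (c : L) : MvPolynomial.C c ∈ (MvF σ L).S 0 := by
  have := (mem_MvF_nat (T := 0) (p := (MvPolynomial.C c : MvPolynomial σ L))).2 (by simp)
  simpa using this

lemma MvF_X (i : σ) : MvPolynomial.X i ∈ (MvF σ L).S 1 := by
  have := (mem_MvF_nat (T := 1) (p := (MvPolynomial.X i : MvPolynomial σ L))).2 (by simp)
  simpa using this

lemma mv_hom_mem {B : Type*} [CommRing B] (𝒮 : Filt B) (g : MvPolynomial σ L →+* B)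
    (hC : ∀ c, g (MvPolynomial.C c) ∈ 𝒮.S 0) (hX : ∀ i, g (MvPolynomial.X i) ∈ 𝒮.S 1)
    (T : ℤ) (p : MvPolynomial σ L) (hp : p ∈ (MvF σ L).S T) : g p ∈ 𝒮.S T := by
  rw [p.as_sum, map_sum]
  refine AddSubgroup.sum_mem _ fun s hs => ?_
  have h1 := hp s (MvPolynomial.mem_support_iff.1 hs)
  refine 𝒮.mono h1 ?_
  rw [MvPolynomial.monomial_eq, map_mul, Finsupp.prod, map_prod]
  have h2 := 𝒮.prod_mem s.support (fun i => g (MvPolynomial.X i ^ s i)) (fun i => s i) (fun i _ => by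
    simpa using 𝒮.pow_mem (hX i) (s i))
  have h3 := 𝒮.mul_mem (hC (p.coeff s)) h2
  rw [zero_add] at h3
  convert h3 using 2
  rw [Finsupp.degree_apply]; push_cast; rfl

lemma mv_hom_mem0 {B : Type*} [CommRing B] (𝒮 : Filt B) (g : MvPolynomial σ L →+* B)
    (hC : ∀ c, g (MvPolynomial.C c) ∈ 𝒮.S 0) (hX : ∀ i, g (MvPolynomial.X i) ∈ 𝒮.S 0)
    (p : MvPolynomial σ L) : g p ∈ 𝒮.S 0 := by
  induction p using MvPolynomial.induction_on with
  | C a => exact hC a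
  | add p q hp hq => rw [map_add]; exact AddSubgroup.add_mem _ hp hq
  | mul_X p i hp => rw [map_mul]; simpa using 𝒮.mul_mem hp (hX i)

end mvf

section aux

lemma monic_dvd_prod {A ι : Type*} [CommRing A] [IsDomain A] (s : Finset ι) (φ : ι → A) (g : A[X])
    (hg : g.Monic) (h : g ∣ ∏ i ∈ s, (X - C (φ i))) : ∃ S ⊆ s, g = ∏ i ∈ S, (X - C (φ i)) := by
  classical
  induction s using Finset.induction generalizing g with
  | empty =>
    refine ⟨∅, le_rfl, ?_⟩
    simp only [Finset.prod_empty] at h ⊢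
    exact hg.eq_one_of_isUnit (isUnit_of_dvd_one h)
  | insert i s hi ih =>
    rw [Finset.prod_insert hi] at h
    by_cases hd : X - C (φ i) ∣ g
    · obtain ⟨g', rfl⟩ := hd
      have hg' : g'.Monic := (monic_X_sub_C _).of_mul_monic_left hg
      obtain ⟨S, hS, rfl⟩ := ih g' hg' ((mul_dvd_mul_iff_left (X_sub_C_ne_zero _)).1 h)
      refine ⟨insert i S, Finset.insert_subset_insert _ hS, ?_⟩
      rw [Finset.prod_insert (fun h => hi (hS h))]
    · obtain ⟨h', hh⟩ := h
      have hp := prime_X_sub_C (φ i)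
      have : X - C (φ i) ∣ g * h' := ⟨_, hh.symm⟩
      obtain ⟨h'', rfl⟩ := (hp.dvd_or_dvd this).resolve_left hd
      have : g ∣ ∏ i ∈ s, (X - C (φ i)) := ⟨h'', by
        apply mul_left_cancel₀ (X_sub_C_ne_zero (φ i))
        rw [hh]; ring⟩
      obtain ⟨S, hS, rfl⟩ := ih g hg this
      exact ⟨S, hS.trans (Finset.subset_insert _ _), rfl⟩

variable {L : Type*} [Field L]

lemma swap_coeff (f : L[X][X]) (i j : ℕ) :
    ((Bivariate.swap f).coeff i).coeff j = (f.coeff j).coeff i := by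
  induction f using Polynomial.induction_on' with
  | add p q hp hq => simp only [map_add, coeff_add, hp, hq]
  | monomial n a =>
    induction a using Polynomial.induction_on' with
    | add p q hp hq => simp only [map_add, coeff_add, hp, hq]
    | monomial m r =>
      rw [Bivariate.swap_monomial_monomial]
      simp only [coeff_monomial]
      split_ifs <;> simp_all [coeff_monomial]

lemma swap_natDegree_le (f : L[X][X]) (d : ℕ) :
    (Bivariate.swap f).natDegree ≤ d ↔ ∀ j, (f.coeff j).natDegree ≤ d := by
  simp only [natDegree_le_iff_coeff_eq_zero]
  constructor
  · intro h j N hN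
    rw [← swap_coeff, h N hN, coeff_zero]
  · intro h N hN
    ext j
    rw [swap_coeff, h j N hN, coeff_zero]

lemma factor_degree (f g : L[X][X]) (hf : f ≠ 0) (hg : g ∣ f) (d : ℕ)
    (h : ∀ j, (f.coeff j).natDegree ≤ d) (j : ℕ) : (g.coeff j).natDegree ≤ d := by
  revert j
  rw [← swap_natDegree_le] at h ⊢
  obtain ⟨k, rfl⟩ := hg
  rw [map_mul, natDegree_mul] at h
  · omega
  · simpa using left_ne_zero_of_mul hf
  · simpa using right_ne_zero_of_mul hf

end aux
end LW


open Polynomial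

namespace LW

section trunc

lemma dvd_eval_of_dvd_coeff {A : Type*} [CommRing A] (c : A) (p : A[X]) (h : ∀ j, c ∣ p.coeff j)
    (x : A) : c ∣ p.eval x := by
  rw [← C_dvd_iff_dvd_coeff] at h
  obtain ⟨q, rfl⟩ := h
  simp

lemma coe_eq_zero_of_dvd {R : Type*} [CommRing R] (r : R[X]) (n : ℕ) (hr : r.natDegree < n)
    (h : PowerSeries.X ^ n ∣ (r : PowerSeries R)) : r = 0 := by
  rw [PowerSeries.X_pow_dvd_iff] at h
  ext k
  rcases lt_or_ge k n with hk | hk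
  · simpa using h k hk
  · rw [coeff_eq_zero_of_natDegree_lt (by omega)]; simp

lemma trunc_lemma {R ι : Type*} [CommRing R] [IsDomain R] (fa : R[X][X]) (d : ℕ)
    (hmon : fa.Monic) (hd : fa.natDegree = d) (hdeg : ∀ j, (fa.coeff j).natDegree ≤ d)
    (s : Finset ι) (Φ : ι → PowerSeries R)
    (hfac : fa.map (coeToPowerSeries.ringHom (R := R)) = ∏ a ∈ s, (X - C (Φ a))) (S : Finset ι)
    (hSs : S ⊆ s) (hS : S.Nonempty) (hSd : S.card ≤ d)
    (hvan : ∀ j k, d < k → k ≤ 2 * d ^ 2 →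
      PowerSeries.coeff k ((∏ a ∈ S, (X - C (Φ a))).coeff j) = 0) :
    ∃ g : R[X][X], g.Monic ∧ g.natDegree = S.card ∧ resultant fa g d S.card = 0 := by
  classical
  set G := ∏ a ∈ S, (X - C (Φ a)) with hG
  have hGm : G.Monic := monic_prod_of_monic _ _ fun a _ => monic_X_sub_C _
  have hGd : G.natDegree = S.card := by
    rw [hG, natDegree_prod_of_monic _ _ fun a _ => monic_X_sub_C _]; simp
  let g : R[X][X] := ∑ j ∈ Finset.range (S.card + 1), C (PowerSeries.trunc (d + 1) (G.coeff j)) * X ^ j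
  have hgc : ∀ j, g.coeff j = PowerSeries.trunc (d + 1) (G.coeff j) := by
    intro j
    simp only [g, finsetSum_coeff, coeff_C_mul, coeff_X_pow]
    simp only [mul_ite, mul_one, mul_zero, Finset.sum_ite_eq, Finset.mem_range]
    split_ifs with h
    · rfl
    · rw [coeff_eq_zero_of_natDegree_lt (by omega)]; simp
  have hgn : g.natDegree ≤ S.card := by
    rw [natDegree_le_iff_coeff_eq_zero]
    intro N hN
    rw [hgc, coeff_eq_zero_of_natDegree_lt (by omega)]; simp
  have hg1 : g.coeff S.card = 1 := by
    rw [hgc, ← hGd, coeff_natDegree, hGm.leadingCoeff, PowerSeries.trunc_one]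
  refine ⟨g, monic_of_natDegree_le_of_coeff_eq_one _ hgn hg1, ?_, ?_⟩
  · refine le_antisymm hgn (le_natDegree_of_ne_zero ?_)
    rw [hg1]; exact one_ne_zero
  have hcl : ∀ j, PowerSeries.X ^ (2 * d ^ 2 + 1) ∣
      (g.map (coeToPowerSeries.ringHom (R := R)) - G).coeff j := by
    intro j
    rw [PowerSeries.X_pow_dvd_iff]
    intro k hk
    rw [coeff_sub, coeff_map, hgc, map_sub]
    simp only [coeToPowerSeries.ringHom_apply, coeff_coe, PowerSeries.coeff_trunc]
    split_ifs with h
    · simp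
    · rw [hvan j k (by omega) (by omega), sub_zero]
  apply coe_eq_zero_of_dvd _ (2 * d ^ 2 + 1)
  · have h1 := (Filt.deg R).resultant_mem fa g d S.card (a := d) (b := d)
      (fun i => Filt.mem_deg.2 (hdeg i)) (fun i => Filt.mem_deg.2 ?_)
    · have h2 : (d : ℤ) * d + S.card * d ≤ ((2 * d ^ 2 : ℕ) : ℤ) := by
        have : S.card * d ≤ d * d := Nat.mul_le_mul_right _ hSd
        zify at this
        push_cast
        nlinarith
      have := Filt.mem_deg.1 ((Filt.deg R).mono h2 h1)
      omega
    · rw [hgc]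
      exact Nat.lt_succ_iff.1 (PowerSeries.natDegree_trunc_lt _ _)
  · have e1 := resultant_map_map fa g d S.card (coeToPowerSeries.ringHom (R := R))
    rw [coeToPowerSeries.ringHom_apply] at e1
    rw [← e1]
    have e2 := resultant_prod_eval (fa.map (coeToPowerSeries.ringHom (R := R)))
      (g.map (coeToPowerSeries.ringHom (R := R))) s Φ hfac S.card
      ((natDegree_map_le).trans hgn)
    rw [hmon.natDegree_map, hd] at e2
    rw [e2]
    obtain ⟨a, ha⟩ := hS
    refine dvd_trans ?_ (Finset.dvd_prod_of_mem _ (hSs ha))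
    have e3 : G.eval (Φ a) = 0 := by
      rw [hG, eval_prod]
      exact Finset.prod_eq_zero ha (by simp)
    have e4 := dvd_eval_of_dvd_coeff _ _ hcl (Φ a)
    rwa [eval_sub, e3, sub_zero] at e4

end trunc

section bertini

variable {σ L : Type*} [Field L]

/-- Restriction to a line. -/
noncomputable def line (a b : σ → L) : MvPolynomial σ L →+* L[X] :=
  MvPolynomial.eval₂Hom C (fun i => C (a i) + C (b i) * X)

/-- The generic line through `a`. -/
noncomputable def gline (a : σ → L) : MvPolynomial σ L →+* (MvPolynomial σ L)[X] :=
  MvPolynomial.eval₂Hom (C.comp MvPolynomial.C)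
    (fun i => C (MvPolynomial.C (a i)) + C (MvPolynomial.X i) * X)

lemma gline_spec (a b : σ → L) (r : MvPolynomial σ L) :
    (gline a r).map (MvPolynomial.eval b) = line a b r := by
  have : (mapRingHom (MvPolynomial.eval b)).comp (gline a) = line a b := by
    refine MvPolynomial.ringHom_ext ?_ ?_
    · intro c; simp [gline, line]
    · intro i; simp [gline, line]
  exact congrArg (fun f : MvPolynomial σ L →+* L[X] => f r) this

lemma gline_zero (a : σ → L) (r : MvPolynomial σ L) :
    (gline a r).eval 0 = MvPolynomial.C (MvPolynomial.eval a r) := by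
  have : (evalRingHom 0).comp (gline a) = MvPolynomial.C.comp (MvPolynomial.eval a) := by
    refine MvPolynomial.ringHom_ext ?_ ?_
    · intro c; simp [gline]
    · intro i; simp [gline]
  exact congrArg (fun f : MvPolynomial σ L →+* MvPolynomial σ L => f r) this

lemma gline_mem (a : σ → L) (r : MvPolynomial σ L) : gline a r ∈ ((MvF σ L).poly 1).S 0 := by
  refine mv_hom_mem0 _ _ ?_ ?_ r
  · intro c
    simpa [gline] using Filt.poly_C _ (MvF_C c)
  · intro i
    simp only [gline, MvPolynomial.coe_eval₂Hom, MvPolynomial.eval₂_X]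
    refine AddSubgroup.add_mem _ (Filt.poly_C _ (MvF_C _)) ?_
    have := ((MvF σ L).poly 1).mul_mem (Filt.poly_C (c := 1) _ (MvF_X i)) (Filt.poly_X (c := 1) _)
    simpa using this

lemma gline_deg (a : σ → L) (r : MvPolynomial σ L) (T : ℕ) (hr : r.totalDegree ≤ T) :
    (gline a r).natDegree ≤ T := by
  rw [← Filt.mem_deg]
  have hC : ∀ c : MvPolynomial σ L, C c ∈ (Filt.deg (MvPolynomial σ L)).S 0 := fun c =>
    Filt.poly_C _ (Filt.mem_triv.2 (Or.inr le_rfl))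
  have hX : (X : (MvPolynomial σ L)[X]) ∈ (Filt.deg (MvPolynomial σ L)).S 1 := by
    simpa using (Filt.triv (MvPolynomial σ L)).poly_X (c := -1)
  refine mv_hom_mem _ _ ?_ ?_ T r (mem_MvF_nat.2 hr)
  · intro c
    simpa [gline] using hC _
  · intro i
    simp only [gline, MvPolynomial.coe_eval₂Hom, MvPolynomial.eval₂_X]
    refine AddSubgroup.add_mem _ (Filt.mono _ (by norm_num) (hC _)) ?_
    simpa using (Filt.deg (MvPolynomial σ L)).mul_mem (hC (MvPolynomial.X i)) hX

/-- Translation. -/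
noncomputable def transl (a : σ → L) : MvPolynomial σ L →ₐ[L] MvPolynomial σ L :=
  MvPolynomial.aeval (fun i => MvPolynomial.C (a i) + MvPolynomial.X i)

noncomputable def translEquiv (a : σ → L) : MvPolynomial σ L ≃ₐ[L] MvPolynomial σ L :=
  AlgEquiv.ofAlgHom (transl a) (transl (-a))
    (MvPolynomial.algHom_ext fun i => by simp [transl, MvPolynomial.algebraMap_eq])
    (MvPolynomial.algHom_ext fun i => by simp [transl, MvPolynomial.algebraMap_eq])

lemma gline_one (a : σ → L) (r : MvPolynomial σ L) :
    (gline a r).eval 1 = translEquiv a r := by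
  have : (evalRingHom 1).comp (gline a) = (translEquiv a : MvPolynomial σ L →+* MvPolynomial σ L) := by
    refine MvPolynomial.ringHom_ext ?_ ?_
    · intro c; simp [gline, translEquiv, transl, MvPolynomial.algebraMap_eq]
    · intro i; simp [gline, translEquiv, transl]
  exact congrArg (fun f : MvPolynomial σ L →+* MvPolynomial σ L => f r) this

end bertini
end LW


open Polynomial

namespace LW

section bertini2

variable {σ L : Type*} [Field L]

lemma eval_mem0 {B : Type*} [CommRing B] (𝒮 : Filt B) (f : B[X]) (hf : ∀ j, f.coeff j ∈ 𝒮.S 0) (x : B)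
    (hx : x ∈ 𝒮.S 0) : f.eval x ∈ 𝒮.S 0 := by
  rw [eval_eq_sum_range]
  refine AddSubgroup.sum_mem _ fun i _ => ?_
  have := 𝒮.mul_mem (hf i) (𝒮.pow_mem hx i)
  simpa using this

theorem bertini [IsAlgClosed L] [Finite σ] (f : (MvPolynomial σ L)[X]) (d : ℕ) (hd1 : 1 ≤ d)
    (hf : f.Monic) (hirr : Irreducible f) (hd : f.natDegree = d)
    (hdeg : ∀ j, (f.coeff j).totalDegree ≤ d) (a : σ → L)
    (hsep : (f.map (MvPolynomial.eval a)).Separable) :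
    ∃ P : MvPolynomial σ L, P ≠ 0 ∧ P.totalDegree ≤ 2 ^ d * (2 * d ^ 2) ∧
      ∀ b, MvPolynomial.eval b P ≠ 0 → Irreducible (f.map (line a b)) := by
  classical
  set fa := f.map (gline a) with hfa
  have hfam : fa.Monic := hf.map _
  have hfad : fa.natDegree = d := by rw [hfa, hf.natDegree_map, hd]
  have hfadeg : ∀ j, (fa.coeff j).natDegree ≤ d := by
    intro j; rw [hfa, coeff_map]; exact gline_deg a _ d (hdeg j)
  set fh := fa.map (coeToPowerSeries.ringHom (R := MvPolynomial σ L)) with hfh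
  have hfhm : fh.Monic := hfam.map _
  have hfhd : fh.natDegree = d := by rw [hfh, hfam.natDegree_map, hfad]
  set f0 := f.map (MvPolynomial.eval a) with hf0
  have hf0m : f0.Monic := hf.map _
  have hf0d : f0.natDegree = d := by rw [hf0, hf.natDegree_map, hd]
  have hcc : fh.map PowerSeries.constantCoeff = f0.map MvPolynomial.C := by
    rw [hfh, hfa, hf0, map_map, map_map, map_map]
    congr 1
    refine RingHom.ext fun r => ?_
    have := gline_zero a r
    simp only [RingHom.comp_apply, coeToPowerSeries.ringHom_apply]
    rw [← this, constantCoeff_coe, ← coeff_zero_eq_eval_zero]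
  obtain ⟨hc, hr⟩ := sep_roots f0 hsep hf0m
  set s : Finset (MvPolynomial σ L) := f0.roots.toFinset.image MvPolynomial.C with hs
  have hscard : s.card = d := by
    rw [hs, Finset.card_image_of_injective _ (MvPolynomial.C_injective σ L), ← hc, hf0d]
  let u : MvPolynomial σ L → MvPolynomial σ L := fun α =>
    MvPolynomial.C ((f0.derivative.eval (MvPolynomial.constantCoeff α))⁻¹)
  obtain ⟨Φ, hΦ, hfac⟩ := hensel_split fh hfhm s (by rw [hfhd, hscard]) u (by
    intro α hα
    obtain ⟨x, hx, rfl⟩ := Finset.mem_image.1 hα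
    rw [hcc, eval_map, eval₂_at_apply, (hr x hx).1, map_zero]) (by
    intro α hα
    obtain ⟨x, hx, rfl⟩ := Finset.mem_image.1 hα
    rw [hcc, derivative_map, eval_map, eval₂_at_apply]
    simp only [u, MvPolynomial.constantCoeff_C]
    rw [← map_mul, inv_mul_cancel₀ (hr x hx).2, map_one])
  have hΦm : ∀ α ∈ s, Φ α ∈ ((MvF σ L).ps 1).S 0 := by
    intro α hα n
    rw [(hΦ α hα).2.2 n]
    refine hensel_mem ((MvF σ L).ps 1) fh (u α) α 0 ?_ ?_ n n
    · obtain ⟨x, hx, rfl⟩ := Finset.mem_image.1 hα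
      exact Filt.ps_C _ (MvF_C x)
    · intro x hx
      have h1 : fh.eval x ∈ ((MvF σ L).ps 1).S 0 := by
        refine eval_mem0 _ _ ?_ x hx
        intro j n
        rw [hfh, coeff_map, hfa, coeff_map, coeToPowerSeries.ringHom_apply, coeff_coe]
        exact gline_mem a _ n
      have h2 : PowerSeries.C (u α) ∈ ((MvF σ L).ps 1).S 0 := Filt.ps_C _ (MvF_C _)
      simpa using ((MvF σ L).ps 1).mul_mem h2 h1
  -- the polynomials attached to proper subsets
  have key : ∀ S : Finset (MvPolynomial σ L), ∃ Q : MvPolynomial σ L, Q ≠ 0 ∧ Q.totalDegree ≤ 2 * d ^ 2 ∧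
      (S ⊆ s → S.Nonempty → S.card < d → ∃ j k, d < k ∧
        PowerSeries.coeff k ((∏ a ∈ S, (X - C (Φ a))).coeff j) = Q) := by
    intro S
    by_cases hS : S ⊆ s ∧ S.Nonempty ∧ S.card < d
    swap
    · exact ⟨1, one_ne_zero, by simp, fun h1 h2 h3 => absurd ⟨h1, h2, h3⟩ hS⟩
    obtain ⟨h1, h2, h3⟩ := hS
    by_cases hvan : ∀ j k, d < k → k ≤ 2 * d ^ 2 →
      PowerSeries.coeff k ((∏ a ∈ S, (X - C (Φ a))).coeff j) = 0
    · exfalso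
      obtain ⟨g, hgm, hgd, hres⟩ := trunc_lemma fa d hfam hfad hfadeg s Φ hfac S h1 h2 h3.le hvan
      have e1 := resultant_map_map fa g d S.card (evalRingHom 1)
      rw [hres, map_zero] at e1
      have e2 : fa.map (evalRingHom 1) = f.map (translEquiv a : MvPolynomial σ L →+* MvPolynomial σ L) := by
        rw [hfa, map_map]
        congr 1
        refine RingHom.ext fun r => ?_
        exact gline_one a r
      rw [e2] at e1
      set ft := f.map (translEquiv a : MvPolynomial σ L →+* MvPolynomial σ L) with hft
      have hftm : ft.Monic := hf.map _
      have hftd : ft.natDegree = d := by rw [hft, hf.natDegree_map, hd]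
      have hirr' : Irreducible ft := by
        have : ft = Polynomial.mapEquiv (translEquiv a : MvPolynomial σ L ≃+* MvPolynomial σ L) f := rfl
        rw [this]
        exact (MulEquiv.irreducible_iff _).2 hirr
      have hgm' : (g.map (evalRingHom (1 : MvPolynomial σ L))).Monic := hgm.map _
      have hgd' : (g.map (evalRingHom (1 : MvPolynomial σ L))).natDegree = S.card := by
        rw [hgm.natDegree_map, hgd]
      refine resultant_ne_zero_of_irred ft (g.map (evalRingHom 1)) hftm hirr' ?_ S.card hgd'.le ?_
      · refine not_dvd_of_natDegree_lt _ _ hftm hgm'.ne_zero ?_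
        rw [degree_eq_natDegree hgm'.ne_zero, degree_eq_natDegree hftm.ne_zero, hgd', hftd]
        exact_mod_cast h3
      · rw [hftd]; exact e1
    · push Not at hvan
      obtain ⟨j, k, hk1, hk2, hne⟩ := hvan
      refine ⟨_, hne, ?_, fun _ _ _ => ⟨j, k, hk1, rfl⟩⟩
      have hmem : ∏ a ∈ S, (X - C (Φ a)) ∈ (((MvF σ L).ps 1).poly 0).S 0 := by
        have := (((MvF σ L).ps 1).poly 0).prod_mem S (fun a => X - C (Φ a)) (fun _ => 0) ?_
        · simpa using this
        · intro α hα
          refine AddSubgroup.sub_mem _ ?_ (Filt.poly_C _ (hΦm α (h1 hα)))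
          simpa using ((MvF σ L).ps 1).poly_X (c := 0)
      have h4 := hmem j k
      refine le_trans ?_ hk2
      rw [← mem_MvF_nat]
      simpa using h4
  choose Q hQ0 hQd hQ using key
  refine ⟨∏ S ∈ s.powerset, Q S, Finset.prod_ne_zero_iff.2 fun S _ => hQ0 S, ?_, ?_⟩
  · refine (MvPolynomial.totalDegree_finsetProd _ _).trans ?_
    refine (Finset.sum_le_card_nsmul _ _ _ fun S _ => hQd S).trans ?_
    rw [Finset.card_powerset, hscard, smul_eq_mul]
  intro b hb
  have hfbm : (f.map (line a b)).Monic := hf.map _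
  have hfbd : (f.map (line a b)).natDegree = d := by rw [hf.natDegree_map, hd]
  rw [hfbm.irreducible_iff_lt_natDegree_lt (by
    intro h; rw [h, natDegree_one] at hfbd; omega)]
  intro g hgm hgd hdvd
  rw [hfbd, Finset.mem_Ioc] at hgd
  have hfb : (f.map (line a b)) = fa.map (mapRingHom (MvPolynomial.eval b)) := by
    rw [hfa, map_map]
    congr 1
    refine RingHom.ext fun r => ?_
    exact (gline_spec a b r).symm
  have hgdeg : ∀ j, (g.coeff j).natDegree ≤ d := by
    refine factor_degree _ g hfbm.ne_zero hdvd d ?_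
    intro j
    rw [hfb, coeff_map]
    exact (natDegree_map_le).trans (hfadeg j)
  have hcomp : (coeToPowerSeries.ringHom (R := L)).comp (mapRingHom (MvPolynomial.eval b)) =
      (PowerSeries.map (MvPolynomial.eval b)).comp
        (coeToPowerSeries.ringHom (R := MvPolynomial σ L)) := by
    refine RingHom.ext fun r => ?_
    ext n
    simp
  have hfbp : (f.map (line a b)).map (coeToPowerSeries.ringHom (R := L)) =
      ∏ α ∈ s, (X - C (PowerSeries.map (MvPolynomial.eval b) (Φ α))) := by
    rw [hfb, map_map, hcomp, ← map_map, ← hfh, hfac, Polynomial.map_prod]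
    simp
  have hgdvd := Polynomial.map_dvd (coeToPowerSeries.ringHom (R := L)) hdvd
  rw [hfbp] at hgdvd
  obtain ⟨S, hSs, hgS⟩ := monic_dvd_prod s _ _ (hgm.map _) hgdvd
  have hSc : S.card = g.natDegree := by
    rw [← hgm.natDegree_map (coeToPowerSeries.ringHom (R := L)), hgS,
      natDegree_prod_of_monic _ _ fun a _ => monic_X_sub_C _]
    simp
  obtain ⟨j, k, hk, hjk⟩ := hQ S hSs (Finset.card_pos.1 (by omega)) (by omega)
  have hgS' : g.map (coeToPowerSeries.ringHom (R := L)) =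
      (∏ α ∈ S, (X - C (Φ α))).map (PowerSeries.map (MvPolynomial.eval b)) := by
    rw [hgS, Polynomial.map_prod]; simp
  have e5 := congrArg (fun p => PowerSeries.coeff k (p.coeff j)) hgS'
  simp only [coeff_map, coeToPowerSeries.ringHom_apply, coeff_coe, PowerSeries.coeff_map] at e5
  rw [hjk, coeff_eq_zero_of_natDegree_lt (lt_of_le_of_lt (hgdeg j) hk)] at e5
  rw [map_prod, Finset.prod_ne_zero_iff] at hb
  exact hb S (Finset.mem_powerset.2 hSs) e5.symm

end bertini2
end LW


open Polynomial

namespace LW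

section average

variable {L : Type*} [Field L]

lemma sz [DecidableEq L] {m : ℕ} (P : MvPolynomial (Fin m) L) (hP : P ≠ 0) (D : ℕ) (hD : P.totalDegree ≤ D)
    (𝒦 : Finset L) (h0 : 0 < 𝒦.card) :
    (((Fintype.piFinset fun _ : Fin m => 𝒦).filter (fun b => MvPolynomial.eval b P = 0)).card : ℝ) ≤
      D * (𝒦.card : ℝ) ^ m / 𝒦.card := by
  have h := MvPolynomial.schwartz_zippel_totalDegree hP 𝒦
  have hpos : (0 : ℝ) < 𝒦.card := by exact_mod_cast h0
  have h' : ((((Fintype.piFinset fun _ : Fin m => 𝒦).filter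
      (fun b => MvPolynomial.eval b P = 0)).card : ℝ)) / (𝒦.card : ℝ) ^ m ≤
      P.totalDegree / 𝒦.card := by
    have := (NNRat.cast_le (K := ℝ)).2 h
    push_cast at this
    exact this
  rw [div_le_iff₀ (by positivity)] at h'
  refine h'.trans ?_
  rw [div_mul_eq_mul_div]
  have : (P.totalDegree : ℝ) ≤ D := by exact_mod_cast hD
  gcongr

lemma line_ev {m : ℕ} (f : (MvPolynomial (Fin m) L)[X]) (a b : Fin m → L) (t y : L) :
    ev t y (f.map (line a b)) = (f.map (MvPolynomial.eval (fun i => a i + b i * t))).eval y := by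
  rw [ev_field_eq, map_map]
  congr 2
  refine MvPolynomial.ringHom_ext ?_ ?_
  · intro c; simp [line]
  · intro i; simp [line]

lemma line_mem {m : ℕ} (a b : Fin m → L) (T : ℤ) (r : MvPolynomial (Fin m) L)
    (hr : r ∈ (MvF (Fin m) L).S T) : line a b r ∈ (Filt.deg L).S T := by
  have hC : ∀ c : L, C c ∈ (Filt.deg L).S 0 := fun c =>
    Filt.poly_C _ (Filt.mem_triv.2 (Or.inr le_rfl))
  have hX : (X : L[X]) ∈ (Filt.deg L).S 1 := by
    simpa using (Filt.triv L).poly_X (c := -1)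
  refine mv_hom_mem _ _ ?_ ?_ T r hr
  · intro c
    simpa [line] using hC _
  · intro i
    simp only [line, MvPolynomial.coe_eval₂Hom, MvPolynomial.eval₂_X]
    refine AddSubgroup.add_mem _ (Filt.mono _ (by norm_num) (hC _)) ?_
    simpa using (Filt.deg L).mul_mem (hC (b i)) hX

lemma line_frob {m : ℕ} (φ : L →+* L) (a b : Fin m → L) (ha : ∀ i, φ (a i) = a i)
    (hb : ∀ i, φ (b i) = b i) (r : MvPolynomial (Fin m) L) (hr : MvPolynomial.map φ r = r) :
    (line a b r).map φ = line a b r := by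
  have : (mapRingHom φ).comp (line a b) = (line a b).comp (MvPolynomial.map φ) := by
    refine MvPolynomial.ringHom_ext ?_ ?_
    · intro c; simp [line]
    · intro i; simp [line, ha, hb]
  have := congrArg (fun g : MvPolynomial (Fin m) L →+* L[X] => g r) this
  simp only [RingHom.comp_apply, hr, coe_mapRingHom] at this
  exact this

set_option maxHeartbeats 1000000 in
theorem average [IsAlgClosed L] [DecidableEq L] (p k d m : ℕ) [Fact p.Prime] [CharP L p]
    (𝒦 : Finset L) (hK : ∀ x, x ∈ 𝒦 ↔ x ^ (p ^ k) = x) (hKc : 𝒦.card = p ^ k)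
    (f : (MvPolynomial (Fin m) L)[X]) (hd1 : 1 ≤ d)
    (hf : f.Monic) (hirr : Irreducible f) (hd : f.natDegree = d)
    (hTD : f ∈ ((MvF (Fin m) L).poly (-1)).S d) (hder : derivative f ≠ 0)
    (hfix : ∀ j, MvPolynomial.map (iterateFrobenius L p k) (f.coeff j) = f.coeff j)
    (hM : 100 * d ^ 3 ≤ Nat.sqrt (p ^ k)) :
    |((((Fintype.piFinset fun _ : Fin m => 𝒦) ×ˢ 𝒦).filter
        (fun P => (f.map (MvPolynomial.eval P.1)).eval P.2 = 0)).card : ℝ) - ((p : ℝ) ^ k) ^ m| ≤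
      (53 * d ^ 3 + d * (2 ^ d * (2 * d ^ 2) + 2 * d ^ 2)) * ((p : ℝ) ^ k) ^ m / Real.sqrt ((p : ℝ) ^ k) := by
  set V := Fintype.piFinset fun _ : Fin m => 𝒦 with hV
  set q : ℝ := (p : ℝ) ^ k with hq
  have hqc : (𝒦.card : ℝ) = q := by rw [hKc]; push_cast; rfl
  have hq1 : 1 ≤ q := by
    rw [hq]; exact one_le_pow₀ (by exact_mod_cast (Fact.out : p.Prime).one_lt.le)
  have hKpos : 0 < 𝒦.card := by rw [hKc]; exact pow_pos (Fact.out : p.Prime).pos _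
  have hVc : (V.card : ℝ) = q ^ m := by
    rw [hV, Fintype.card_piFinset]; simp [hqc]
  have hVmem : ∀ a, a ∈ V ↔ ∀ i, a i ∈ 𝒦 := fun a => by simp [hV]
  have hfrob : ∀ x ∈ 𝒦, iterateFrobenius L p k x = x := fun x hx => by
    rw [iterateFrobenius_def]; exact (hK x).1 hx
  have hadd : ∀ x ∈ 𝒦, ∀ y ∈ 𝒦, x + y ∈ 𝒦 := by
    intro x hx y hy
    rw [hK, ← iterateFrobenius_def, map_add, hfrob x hx, hfrob y hy]
  have hmul : ∀ x ∈ 𝒦, ∀ y ∈ 𝒦, x * y ∈ 𝒦 := by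
    intro x hx y hy
    rw [hK, ← iterateFrobenius_def, map_mul, hfrob x hx, hfrob y hy]
  have hsub : ∀ x ∈ 𝒦, ∀ y ∈ 𝒦, x - y ∈ 𝒦 := by
    intro x hx y hy
    rw [hK, ← iterateFrobenius_def, map_sub, hfrob x hx, hfrob y hy]
  set N := ((V ×ˢ 𝒦).filter (fun P => (f.map (MvPolynomial.eval P.1)).eval P.2 = 0)).card with hN
  -- fibre counts
  obtain ⟨ν, hν⟩ : ∃ ν : (Fin m → L) → ℕ,
    ∀ a, ν a = (𝒦.filter (fun y => (f.map (MvPolynomial.eval a)).eval y = 0)).card := ⟨_, fun _ => rfl⟩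
  have hNν : N = ∑ a ∈ V, ν a := by
    rw [hN, Finset.card_filter, Finset.sum_product]
    refine Finset.sum_congr rfl fun a _ => ?_
    simp only [hν, Finset.card_filter]
  have hνd : ∀ a, ν a ≤ d := by
    intro a
    have hm : (f.map (MvPolynomial.eval a)).Monic := hf.map _
    rw [hν]
    calc _ ≤ (f.map (MvPolynomial.eval a)).roots.toFinset.card := by
          refine Finset.card_le_card fun y hy => ?_
          rw [Multiset.mem_toFinset, mem_roots hm.ne_zero]
          exact (Finset.mem_filter.1 hy).2
      _ ≤ _ := (Multiset.toFinset_card_le _).trans (card_roots' _)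
      _ = d := by rw [hf.natDegree_map, hd]
  obtain ⟨n, hn⟩ : ∃ n : (Fin m → L) → (Fin m → L) → ℕ,
    ∀ a b, n a b = ∑ t ∈ 𝒦, ν (fun i => a i + b i * t) := ⟨_, fun _ _ => rfl⟩
  have hsum : ∑ b ∈ V, ∑ a ∈ V, n a b = V.card * (𝒦.card * N) := by
    rw [← smul_eq_mul (a := V.card)]
    refine Finset.sum_eq_card_nsmul fun b hb => ?_
    simp only [hn]
    rw [Finset.sum_comm, ← smul_eq_mul (a := 𝒦.card)]
    refine Finset.sum_eq_card_nsmul fun t ht => ?_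
    rw [hNν]
    refine Finset.sum_bij' (fun a _ => fun i => a i + b i * t) (fun a _ => fun i => a i - b i * t)
      ?_ ?_ ?_ ?_ ?_
    · intro a ha
      rw [hVmem] at ha hb ⊢
      exact fun i => hadd _ (ha i) _ (hmul _ (hb i) _ ht)
    · intro a ha
      rw [hVmem] at ha hb ⊢
      exact fun i => hsub _ (ha i) _ (hmul _ (hb i) _ ht)
    · intro a ha; funext i; ring
    · intro a ha; funext i; ring
    · intro a ha; rfl
  have hnd : ∀ a b, (n a b : ℝ) ≤ d * q := by
    intro a b
    have : n a b ≤ 𝒦.card • d := by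
      rw [hn]
      exact Finset.sum_le_card_nsmul _ _ _ fun t _ => hνd _
    rw [smul_eq_mul] at this
    calc (n a b : ℝ) ≤ ((𝒦.card * d : ℕ) : ℝ) := by exact_mod_cast this
      _ = _ := by push_cast; rw [hqc]; ring
  have hd1' : (1 : ℝ) ≤ d := by exact_mod_cast hd1
  have hbad : ∀ a b, |(n a b : ℝ) - q| ≤ d * q := by
    intro a b
    have h1 := hnd a b
    have h2 : (0 : ℝ) ≤ n a b := by positivity
    rw [abs_le]
    constructor <;> nlinarith
  have hdeg : ∀ j, (f.coeff j).totalDegree ≤ d := by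
    intro j
    rw [← mem_MvF_nat]
    exact (MvF (Fin m) L).mono (by omega) (hTD j)
  set Δ : MvPolynomial (Fin m) L := resultant f f.derivative d d with hΔ
  have hderdeg : f.derivative.natDegree ≤ d := (natDegree_derivative_le f).trans (by omega)
  have hΔ0 : Δ ≠ 0 := by
    have := resultant_ne_zero_of_irred f f.derivative hf hirr
      (not_dvd_of_natDegree_lt f _ hf hder (degree_derivative_lt hf.ne_zero)) d hderdeg
    rwa [hd] at this
  have hcoef : ∀ i, f.coeff i ∈ (MvF (Fin m) L).S d := fun i => mem_MvF_nat.2 (hdeg i)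
  have hΔdeg : Δ.totalDegree ≤ 2 * d ^ 2 := by
    have := (MvF (Fin m) L).resultant_mem f f.derivative d d (a := d) (b := d) hcoef ?_
    · rw [← mem_MvF_nat]
      convert this using 1
      push_cast; ring
    · intro i
      rw [coeff_derivative]
      have h0 : ((i : MvPolynomial (Fin m) L) + 1) ∈ (MvF (Fin m) L).S 0 := by
        have := MvF_C (σ := Fin m) ((i : L) + 1)
        simpa using this
      simpa using (MvF (Fin m) L).mul_mem (hcoef (i + 1)) h0
  have hgood : ∀ a ∈ V, MvPolynomial.eval a Δ ≠ 0 →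
      ∑ b ∈ V, |(n a b : ℝ) - q| ≤ q ^ m * (53 * d ^ 3 * Real.sqrt q + d * (2 ^ d * (2 * d ^ 2))) := by
    intro a ha hΔa
    have hsep : (f.map (MvPolynomial.eval a)).Separable := sep_of_disc _ f d hd1 hd hΔa
    obtain ⟨P, hP0, hPd, hP⟩ := bertini f d hd1 hf hirr hd hdeg a hsep
    have hg : ∀ b ∈ V, MvPolynomial.eval b P ≠ 0 → |(n a b : ℝ) - q| ≤ 53 * d ^ 3 * Real.sqrt q := by
      intro b hb hPb
      have hc := curve p k d 𝒦 hK hKc (f.map (line a b)) (hf.map _) (hP b hPb)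
        (by rw [hf.natDegree_map, hd]) hd1 ?_ ?_ ?_ (n a b) ?_ hM
      · have hs : (Nat.sqrt (p ^ k) : ℝ) ≤ Real.sqrt q := by
          have := Real.nat_sqrt_le_real_sqrt (a := p ^ k)
          push_cast at this
          exact this
        have h1 : (n a b : ℝ) ≤ q + 53 * d ^ 3 * Nat.sqrt (p ^ k) := by
          rw [hq]; exact_mod_cast hc.1
        have h2 : q ≤ n a b + 53 * d ^ 3 * Nat.sqrt (p ^ k) := by
          rw [hq]; exact_mod_cast hc.2
        have h3 : (53 * d ^ 3 * Nat.sqrt (p ^ k) : ℝ) ≤ 53 * d ^ 3 * Real.sqrt q := by gcongr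
        rw [abs_le]
        constructor <;> linarith
      · intro j
        rw [coeff_map]
        exact line_mem a b _ _ (hTD j)
      · intro h0
        have h1 := congrArg (Polynomial.map (evalRingHom (0 : L))) h0
        rw [← derivative_map, map_map, Polynomial.map_zero] at h1
        have h2 : (evalRingHom (0 : L)).comp (line a b) = MvPolynomial.eval a := by
          refine MvPolynomial.ringHom_ext ?_ ?_
          · intro c; simp [line]
          · intro i; simp [line]
        rw [h2] at h1
        rw [Separable, h1, isCoprime_zero_right] at hsep
        have h3 := (hf.map (MvPolynomial.eval a)).eq_one_of_isUnit hsep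
        have h4 := hf.natDegree_map (MvPolynomial.eval a)
        rw [h3, natDegree_one, hd] at h4
        omega
      · intro i j
        rw [coeff_map]
        have := line_frob (iterateFrobenius L p k) a b (fun i => hfrob _ ((hVmem a).1 ha i))
          (fun i => hfrob _ ((hVmem b).1 hb i)) (f.coeff j) (hfix j)
        have := congrArg (fun r => r.coeff i) this
        simp only [coeff_map, iterateFrobenius_def] at this
        exact this
      · have e1 : {P : L × L | P.1 ∈ 𝒦 ∧ P.2 ∈ 𝒦 ∧ ev P.1 P.2 (f.map (line a b)) = 0} =
            ((𝒦 ×ˢ 𝒦).filter (fun P => ev P.1 P.2 (f.map (line a b)) = 0) : Finset (L × L)) := by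
          ext P; simp [and_assoc]
        rw [hn, e1, Set.ncard_coe_finset, Finset.card_filter, Finset.sum_product]
        refine Finset.sum_congr rfl fun t _ => ?_
        simp only [hν, Finset.card_filter, line_ev]
    have hpt : ∀ b ∈ V, |(n a b : ℝ) - q| ≤ 53 * d ^ 3 * Real.sqrt q +
        (if MvPolynomial.eval b P = 0 then d * q else 0) := by
      intro b hb
      split_ifs with h
      · have := hbad a b
        have h9 : (0 : ℝ) ≤ 53 * d ^ 3 * Real.sqrt q := by positivity
        linarith
      · simpa using hg b hb h
    refine (Finset.sum_le_sum hpt).trans ?_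
    rw [Finset.sum_add_distrib, Finset.sum_const, nsmul_eq_mul, hVc, ← Finset.sum_filter,
      Finset.sum_const, nsmul_eq_mul]
    have h5 := sz P hP0 _ hPd 𝒦 hKpos
    rw [hqc] at h5
    have h6 : ((V.filter (fun b => MvPolynomial.eval b P = 0)).card : ℝ) * (d * q) ≤
        ((2 ^ d * (2 * d ^ 2) : ℕ) : ℝ) * q ^ m / q * (d * q) := by gcongr
    refine (add_le_add_right h6 _).trans (le_of_eq ?_)
    push_cast
    field_simp
  have hall : ∀ a ∈ V, ∑ b ∈ V, |(n a b : ℝ) - q| ≤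
      q ^ m * (53 * d ^ 3 * Real.sqrt q + d * (2 ^ d * (2 * d ^ 2))) +
        (if MvPolynomial.eval a Δ = 0 then q ^ m * (d * q) else 0) := by
    intro a ha
    split_ifs with h
    · have h1 : ∑ b ∈ V, |(n a b : ℝ) - q| ≤ V.card • (d * q) :=
        Finset.sum_le_card_nsmul _ _ _ fun b _ => hbad a b
      rw [nsmul_eq_mul, hVc] at h1
      have h9 : (0 : ℝ) ≤ q ^ m * (53 * d ^ 3 * Real.sqrt q + d * (2 ^ d * (2 * d ^ 2))) := by positivity
      linarith
    · simpa using hgood a ha h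
  have htot : ∑ a ∈ V, ∑ b ∈ V, |(n a b : ℝ) - q| ≤
      q ^ m * (q ^ m * (53 * d ^ 3 * Real.sqrt q + d * (2 ^ d * (2 * d ^ 2)) + d * (2 * d ^ 2))) := by
    refine (Finset.sum_le_sum hall).trans ?_
    rw [Finset.sum_add_distrib, Finset.sum_const, nsmul_eq_mul, hVc, ← Finset.sum_filter,
      Finset.sum_const, nsmul_eq_mul]
    have h5 := sz Δ hΔ0 _ hΔdeg 𝒦 hKpos
    rw [hqc] at h5
    have h6 : ((V.filter (fun b => MvPolynomial.eval b Δ = 0)).card : ℝ) * (q ^ m * (d * q)) ≤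
        ((2 * d ^ 2 : ℕ) : ℝ) * q ^ m / q * (q ^ m * (d * q)) := by gcongr
    refine (add_le_add_right h6 _).trans (le_of_eq ?_)
    push_cast
    field_simp
  have hqpos : 0 < q := by linarith
  have hlhs : q ^ m * (q * |(N : ℝ) - q ^ m|) ≤ ∑ a ∈ V, ∑ b ∈ V, |(n a b : ℝ) - q| := by
    have e1 : q ^ m * (q * ((N : ℝ) - q ^ m)) = ∑ a ∈ V, ∑ b ∈ V, ((n a b : ℝ) - q) := by
      have e2 : ((∑ b ∈ V, ∑ a ∈ V, n a b : ℕ) : ℝ) = ((V.card * (𝒦.card * N) : ℕ) : ℝ) := by rw [hsum]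
      push_cast at e2
      rw [Finset.sum_comm, hqc, hVc] at e2
      simp only [Finset.sum_sub_distrib, Finset.sum_const, nsmul_eq_mul]
      rw [e2, hVc]; ring
    have e3 : q ^ m * (q * |(N : ℝ) - q ^ m|) = |q ^ m * (q * ((N : ℝ) - q ^ m))| := by
      rw [abs_mul, abs_mul, abs_of_pos hqpos, abs_of_pos (pow_pos hqpos m)]
    rw [e3, e1]
    refine (Finset.abs_sum_le_sum_abs _ _).trans (Finset.sum_le_sum fun a _ => ?_)
    exact Finset.abs_sum_le_sum_abs _ _
  have h7 := le_of_mul_le_mul_left (hlhs.trans htot) (pow_pos hqpos m)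
  set s := Real.sqrt q with hs
  have hs1 : 1 ≤ s := Real.one_le_sqrt.2 hq1
  have hss : q = s * s := (Real.mul_self_sqrt hqpos.le).symm
  rw [le_div_iff₀ (by linarith)]
  have h8 : s * (|(N : ℝ) - q ^ m| * s) ≤
      s * ((53 * d ^ 3 + d * (2 ^ d * (2 * d ^ 2) + 2 * d ^ 2)) * q ^ m) := by
    calc s * (|(N : ℝ) - q ^ m| * s) = q * |(N : ℝ) - q ^ m| := by
          nth_rewrite 2 [hss]; ring
      _ ≤ _ := h7
      _ ≤ q ^ m * (53 * d ^ 3 * s + d * (2 ^ d * (2 * d ^ 2)) * s + d * (2 * d ^ 2) * s) := by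
          have g1 : (d : ℝ) * (2 ^ d * (2 * d ^ 2)) ≤ d * (2 ^ d * (2 * d ^ 2)) * s :=
            le_mul_of_one_le_right (by positivity) hs1
          have g2 : (d : ℝ) * (2 * d ^ 2) ≤ d * (2 * d ^ 2) * s :=
            le_mul_of_one_le_right (by positivity) hs1
          exact mul_le_mul_of_nonneg_left (by linarith) (by positivity)
      _ = _ := by ring
  exact le_of_mul_le_mul_left h8 (by linarith)

end average
end LW


open Polynomial

namespace LW

section shear

variable {L : Type*} [Field L] {m : ℕ}

/-- The substitution `X₀ ↦ v₀ Y`, `X_{i+1} ↦ X_i + v_{i+1} Y`. -/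
noncomputable def shear (v : Fin (m + 1) → L) :
    MvPolynomial (Fin (m + 1)) L →+* (MvPolynomial (Fin m) L)[X] :=
  MvPolynomial.eval₂Hom ((C : MvPolynomial (Fin m) L →+* _).comp MvPolynomial.C)
    (Fin.cases (C (MvPolynomial.C (v 0)) * X)
      (fun i => C (MvPolynomial.X i) + C (MvPolynomial.C (v i.succ)) * X))

lemma shear_C (v : Fin (m + 1) → L) (c : L) :
    shear v (MvPolynomial.C c) = C (MvPolynomial.C c) := by
  simp [shear]

lemma shear_X0 (v : Fin (m + 1) → L) :
    shear v (MvPolynomial.X 0) = C (MvPolynomial.C (v 0)) * X := by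
  simp [shear]

lemma shear_Xs (v : Fin (m + 1) → L) (i : Fin m) :
    shear v (MvPolynomial.X i.succ) =
      C (MvPolynomial.X i) + C (MvPolynomial.C (v i.succ)) * X := by
  simp [shear]

/-- The inverse substitution. -/
noncomputable def shearInv (v : Fin (m + 1) → L) :
    (MvPolynomial (Fin m) L)[X] →+* MvPolynomial (Fin (m + 1)) L :=
  eval₂RingHom (MvPolynomial.eval₂Hom MvPolynomial.C
    (fun i => MvPolynomial.X i.succ - MvPolynomial.C (v i.succ * (v 0)⁻¹) * MvPolynomial.X 0))
    (MvPolynomial.C (v 0)⁻¹ * MvPolynomial.X 0)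

lemma shear_inv_left (v : Fin (m + 1) → L) (h0 : v 0 ≠ 0) (f : MvPolynomial (Fin (m + 1)) L) :
    shearInv v (shear v f) = f := by
  have hC : MvPolynomial.C (σ := Fin (m + 1)) (v 0) * MvPolynomial.C (v 0)⁻¹ = 1 := by
    rw [← map_mul, mul_inv_cancel₀ h0, map_one]
  induction f using MvPolynomial.induction_on with
  | C a => simp [shear_C, shearInv]
  | add p q hp hq => rw [map_add, map_add, hp, hq]
  | mul_X p i hp =>
    rw [map_mul, map_mul, hp]
    congr 1
    refine Fin.cases ?_ (fun i => ?_) i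
    · rw [shear_X0]
      simp [shearInv, ← mul_assoc, hC]
    · rw [shear_Xs]
      simp [shearInv, ← mul_assoc]

lemma shear_inv_right (v : Fin (m + 1) → L) (h0 : v 0 ≠ 0) (f : (MvPolynomial (Fin m) L)[X]) :
    shear v (shearInv v f) = f := by
  have hC : (C (MvPolynomial.C (v 0)⁻¹ : MvPolynomial (Fin m) L)) * C (MvPolynomial.C (v 0)) = 1 := by
    rw [← map_mul, ← map_mul, inv_mul_cancel₀ h0, map_one, map_one]
  have hX : shear v (shearInv v X) = X := by
    simp only [shearInv, coe_eval₂RingHom, eval₂_X, map_mul, shear_C, shear_X0, ← mul_assoc, hC, one_mul]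
  have hCC : ∀ a, shear v (shearInv v (C a)) = C a := by
    intro a
    induction a using MvPolynomial.induction_on with
    | C a => simp [shear_C, shearInv]
    | add p q hp hq => rw [map_add, map_add, map_add, hp, hq]
    | mul_X p i hp =>
      rw [map_mul, map_mul, map_mul, hp]
      congr 1
      simp only [shearInv, coe_eval₂RingHom, eval₂_C, MvPolynomial.coe_eval₂Hom, MvPolynomial.eval₂_X,
        map_sub, map_mul, shear_C, shear_X0, shear_Xs]
      rw [mul_assoc, ← mul_assoc (C (MvPolynomial.C (v 0)⁻¹)), hC, one_mul, add_sub_cancel_right]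
  induction f using Polynomial.induction_on with
  | C a => exact hCC a
  | add p q hp hq => rw [map_add, map_add, hp, hq]
  | monomial n a h => rw [map_mul, map_mul, hCC, map_pow, map_pow, hX]

lemma shear_inj (v : Fin (m + 1) → L) (h0 : v 0 ≠ 0) : Function.Injective (shear v) :=
  Function.LeftInverse.injective (shear_inv_left v h0)

lemma shear_irr (v : Fin (m + 1) → L) (h0 : v 0 ≠ 0) (f : MvPolynomial (Fin (m + 1)) L)
    (hf : Irreducible f) : Irreducible (shear v f) := by
  let e : MvPolynomial (Fin (m + 1)) L ≃* (MvPolynomial (Fin m) L)[X] :=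
    { toFun := shear v, invFun := shearInv v, left_inv := shear_inv_left v h0,
      right_inv := shear_inv_right v h0, map_mul' := map_mul _ }
  exact (MulEquiv.irreducible_iff e).2 hf

lemma shear_mem (v : Fin (m + 1) → L) (f : MvPolynomial (Fin (m + 1)) L) (d : ℕ)
    (hf : f.totalDegree ≤ d) : shear v f ∈ ((MvF (Fin m) L).poly (-1)).S d := by
  have hX : ∀ c : L, C (MvPolynomial.C c) * X ∈ ((MvF (Fin m) L).poly (-1)).S 1 := by
    intro c
    have := ((MvF (Fin m) L).poly (-1)).mul_mem ((MvF (Fin m) L).poly_C (c := -1) (MvF_C c))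
      ((MvF (Fin m) L).poly_X (c := -1))
    simpa using this
  refine mv_hom_mem _ _ (fun c => ?_) (fun i => ?_) _ _ (mem_MvF_nat.2 hf)
  · rw [shear_C]; exact Filt.poly_C _ (MvF_C c)
  · refine Fin.cases ?_ (fun i => ?_) i
    · rw [shear_X0]; exact hX _
    · rw [shear_Xs]
      exact AddSubgroup.add_mem _ (Filt.poly_C _ (MvF_X i)) (hX _)

lemma shear_eval (v : Fin (m + 1) → L) (f : MvPolynomial (Fin (m + 1)) L) (a : Fin m → L) (y : L) :
    ((shear v f).map (MvPolynomial.eval a)).eval y =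
      MvPolynomial.eval (Fin.cons (v 0 * y) (fun i => a i + v i.succ * y)) f := by
  induction f using MvPolynomial.induction_on with
  | C a => simp [shear_C]
  | add p q hp hq => rw [map_add, Polynomial.map_add, eval_add, hp, hq, map_add]
  | mul_X p i hp =>
    rw [map_mul, Polynomial.map_mul, eval_mul, hp, map_mul]
    congr 1
    refine Fin.cases ?_ (fun i => ?_) i
    · simp [shear_X0]
    · simp [shear_Xs]

lemma shear_map (φ : L →+* L) (v : Fin (m + 1) → L) (hv : ∀ i, φ (v i) = v i)
    (f : MvPolynomial (Fin (m + 1)) L) :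
    (shear v f).map (MvPolynomial.map φ) = shear v (MvPolynomial.map φ f) := by
  induction f using MvPolynomial.induction_on with
  | C a => simp [shear_C]
  | add p q hp hq => rw [map_add, Polynomial.map_add, hp, hq, map_add, map_add]
  | mul_X p i hp =>
    rw [map_mul, Polynomial.map_mul, hp, map_mul, map_mul]
    congr 1
    rw [MvPolynomial.map_X]
    refine Fin.cases ?_ (fun i => ?_) i
    · simp [shear_X0, hv]
    · simp [shear_Xs, hv]

lemma shear_deriv (v : Fin (m + 1) → L) (f : MvPolynomial (Fin (m + 1)) L) :
    derivative (shear v f) = shear v (∑ i, MvPolynomial.C (v i) * MvPolynomial.pderiv i f) := by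
  induction f using MvPolynomial.induction_on with
  | C a => simp [shear_C]
  | add p q hp hq =>
    simp only [map_add, hp, hq, mul_add, Finset.sum_add_distrib]
  | mul_X p i hp =>
    have h1 : ∀ j, MvPolynomial.C (v j) * MvPolynomial.pderiv j (p * MvPolynomial.X i) =
        (MvPolynomial.C (v j) * MvPolynomial.pderiv j p) * MvPolynomial.X i +
          (if j = i then MvPolynomial.C (v i) * p else 0) := by
      intro j
      rw [MvPolynomial.pderiv_mul]
      split_ifs with h
      · subst h; rw [MvPolynomial.pderiv_X_self]; ring
      · rw [MvPolynomial.pderiv_X_of_ne (Ne.symm h)]; ring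
    simp_rw [h1]
    rw [Finset.sum_add_distrib, ← Finset.sum_mul, Finset.sum_ite_eq' , if_pos (Finset.mem_univ _),
      map_mul, derivative_mul, hp, map_add, map_mul, map_mul, shear_C]
    have h2 : derivative (shear v (MvPolynomial.X i)) = C (MvPolynomial.C (v i)) := by
      refine Fin.cases ?_ (fun i => ?_) i
      · simp [shear_X0]
      · simp [shear_Xs]
    rw [h2, mul_comm (shear v p)]

lemma shear_lead (v : Fin (m + 1) → L) (f : MvPolynomial (Fin (m + 1)) L) (d : ℕ) :
    MvPolynomial.eval 0 ((shear v f).coeff d) =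
      MvPolynomial.eval v (MvPolynomial.homogeneousComponent d f) := by
  classical
  have key : ∀ f : MvPolynomial (Fin (m + 1)) L, (shear v f).map (MvPolynomial.eval 0) =
      MvPolynomial.eval₂ C (fun i => C (v i) * X) f := by
    intro f
    induction f using MvPolynomial.induction_on with
    | C a => simp [shear_C]
    | add p q hp hq => rw [map_add, Polynomial.map_add, hp, hq, MvPolynomial.eval₂_add]
    | mul_X p i hp =>
      rw [map_mul, Polynomial.map_mul, hp, MvPolynomial.eval₂_mul]
      congr 1
      refine Fin.cases ?_ (fun i => ?_) i
      · simp [shear_X0]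
      · simp [shear_Xs]
  rw [← coeff_map, key]
  induction f using MvPolynomial.induction_on' with
  | add p q hp hq => rw [MvPolynomial.eval₂_add, coeff_add, hp, hq, map_add, map_add]
  | monomial s a =>
    rw [MvPolynomial.eval₂_monomial, MvPolynomial.homogeneousComponent_apply]
    have h3 : (s.prod fun i k => (C (v i) * X) ^ k) = C (s.prod fun i k => v i ^ k) * X ^ s.degree := by
      simp only [Finsupp.prod, mul_pow, Finset.prod_mul_distrib, Finset.prod_pow_eq_pow_sum,
        Finsupp.degree, map_prod, map_pow]
      rfl
    rw [h3, ← mul_assoc, ← C_mul, coeff_C_mul, coeff_X_pow]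
    by_cases ha : a = 0
    · simp [ha]
    rw [MvPolynomial.support_monomial, if_neg ha, Finset.filter_singleton]
    split_ifs with h1 h2 h2
    · simp [MvPolynomial.eval_monomial, Finsupp.prod_fintype]
    · exact absurd h1.symm h2
    · exact absurd h2.symm h1
    · simp

lemma exists_pderiv [IsAlgClosed L] (p : ℕ) [Fact p.Prime] [CharP L p] {σ : Type*}
    (f : MvPolynomial σ L) (hf : Irreducible f) : ∃ i, MvPolynomial.pderiv i f ≠ 0 := by
  by_contra hcon
  push Not at hcon
  have hp := (Fact.out : p.Prime)
  have h1 : ∀ s ∈ f.support, ∀ i, p ∣ s i := by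
    intro s hs i
    by_cases h0 : s i = 0
    · simp [h0]
    have h2 := MvPolynomial.coeff_pderiv (i := i) f (s - Finsupp.single i 1)
    rw [hcon i, MvPolynomial.coeff_zero, tsub_add_cancel_of_le
      (Finsupp.single_le_iff.2 (Nat.one_le_iff_ne_zero.2 h0))] at h2
    have h3 := (mul_eq_zero.1 h2.symm).resolve_left (MvPolynomial.mem_support_iff.1 hs)
    rw [Finsupp.tsub_apply, Finsupp.single_eq_same] at h3
    rw [← CharP.cast_eq_zero_iff L p]
    have h4 : s i = (s i - 1) + 1 := by omega
    rw [h4]; push_cast; exact h3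
  choose r hr using fun a : L => IsAlgClosed.exists_pow_nat_eq a hp.pos
  have h2 : f = (∑ s ∈ f.support, MvPolynomial.monomial
      (s.mapRange (fun k => k / p) (Nat.zero_div p)) (r (f.coeff s))) ^ p := by
    rw [sum_pow_char p]
    conv_lhs => rw [f.as_sum]
    refine Finset.sum_congr rfl fun s hs => ?_
    rw [MvPolynomial.monomial_pow, hr]
    have h5 : p • (s.mapRange (fun k => k / p) (Nat.zero_div p)) = s := by
      ext i
      simp [Nat.mul_div_cancel' (h1 s hs i)]
    rw [h5]
  rw [h2] at hf
  exact not_irreducible_pow hp.ne_one hf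

end shear
end LW


open Polynomial

namespace LW

section final

lemma exists_dir {L : Type*} [Field L] [IsAlgClosed L] (p d m : ℕ) [Fact p.Prime] [CharP L p]
    (𝒦 : Finset L) (h0 : 0 < 𝒦.card) (hq : d + 2 < 𝒦.card) (f : MvPolynomial (Fin (m + 1)) L)
    (hf : Irreducible f) (hd : f.totalDegree = d) :
    ∃ v : Fin (m + 1) → L, (∀ i, v i ∈ 𝒦) ∧ v 0 ≠ 0 ∧
      MvPolynomial.eval v (MvPolynomial.homogeneousComponent d f) ≠ 0 ∧
      (∑ i, MvPolynomial.C (v i) * MvPolynomial.pderiv i f) ≠ 0 := by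
  classical
  obtain ⟨i0, hi0⟩ := exists_pderiv p f hf
  obtain ⟨s, hs⟩ := MvPolynomial.ne_zero_iff.1 hi0
  obtain ⟨l, hl⟩ : ∃ l : MvPolynomial (Fin (m + 1)) L,
      l = ∑ i, MvPolynomial.C (MvPolynomial.coeff s (MvPolynomial.pderiv i f)) * MvPolynomial.X i :=
    ⟨_, rfl⟩
  have hl0 : l ≠ 0 := by
    intro h
    have h1 : MvPolynomial.eval (Pi.single i0 1) l = 0 := by rw [h, map_zero]
    rw [hl, map_sum] at h1
    simp only [map_mul, MvPolynomial.eval_C, MvPolynomial.eval_X, Pi.single_apply, mul_ite, mul_one,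
      mul_zero, Finset.sum_ite_eq', Finset.mem_univ, if_true] at h1
    exact hs h1
  have hld : l.totalDegree ≤ 1 := by
    rw [hl]
    refine MvPolynomial.totalDegree_finsetSum_le fun i _ => ?_
    refine (MvPolynomial.totalDegree_mul _ _).trans ?_
    simp
  have hh0 : MvPolynomial.homogeneousComponent d f ≠ 0 := by
    obtain ⟨t, ht, htd⟩ := Finset.exists_mem_eq_sup f.support
      (MvPolynomial.support_nonempty.2 hf.ne_zero) (fun s => s.degree)
    intro h
    have h1 := congrArg (MvPolynomial.coeff t) h
    have h2 : t.degree = d := by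
      rw [← hd, ← htd, MvPolynomial.totalDegree]
      rfl
    rw [MvPolynomial.coeff_homogeneousComponent, if_pos h2] at h1
    exact MvPolynomial.mem_support_iff.1 ht (by simpa using h1)
  have hhd : (MvPolynomial.homogeneousComponent d f).totalDegree ≤ d :=
    (MvPolynomial.homogeneousComponent_isHomogeneous d f).totalDegree_le
  obtain ⟨P, hP⟩ : ∃ P, P = MvPolynomial.X 0 * MvPolynomial.homogeneousComponent d f * l := ⟨_, rfl⟩
  have hP0 : P ≠ 0 := by
    rw [hP]; exact mul_ne_zero (mul_ne_zero (MvPolynomial.X_ne_zero 0) hh0) hl0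
  have hPd : P.totalDegree ≤ d + 2 := by
    rw [hP]
    refine (MvPolynomial.totalDegree_mul _ _).trans ?_
    have := MvPolynomial.totalDegree_mul (MvPolynomial.X 0) (MvPolynomial.homogeneousComponent d f)
    rw [MvPolynomial.totalDegree_X] at this
    omega
  have hsz := sz P hP0 (d + 2) hPd 𝒦 h0
  have hpos : (0 : ℝ) < 𝒦.card := by exact_mod_cast h0
  have hex : ∃ v ∈ (Fintype.piFinset fun _ : Fin (m + 1) => 𝒦), MvPolynomial.eval v P ≠ 0 := by
    by_contra hcon
    push Not at hcon
    rw [Finset.filter_true_of_mem hcon, Fintype.card_piFinset, Finset.prod_const, Finset.card_univ,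
      Fintype.card_fin, le_div_iff₀ hpos] at hsz
    push_cast at hsz
    have h3 : (0 : ℝ) < (𝒦.card : ℝ) ^ (m + 1) := by positivity
    have h4 : ((d : ℝ) + 2) < 𝒦.card := by exact_mod_cast hq
    nlinarith
  obtain ⟨v, hv, hvP⟩ := hex
  rw [hP, map_mul, map_mul, MvPolynomial.eval_X] at hvP
  refine ⟨v, fun i => Fintype.mem_piFinset.1 hv i, fun h => hvP (by rw [h]; ring),
    fun h => hvP (by rw [h]; ring), fun h => hvP ?_⟩
  have h1 := congrArg (MvPolynomial.coeff s) h
  rw [MvPolynomial.coeff_sum, MvPolynomial.coeff_zero] at h1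
  simp only [MvPolynomial.coeff_C_mul] at h1
  have h2 : MvPolynomial.eval v l = 0 := by
    rw [hl, map_sum, ← h1]
    refine Finset.sum_congr rfl fun i _ => ?_
    rw [map_mul, MvPolynomial.eval_C, MvPolynomial.eval_X, mul_comm]
  rw [h2, mul_zero]

lemma large {K L : Type*} [Field K] [Fintype K] [Field L] [IsAlgClosed L] (φ : K →+* L)
    (p k d m : ℕ) [Fact p.Prime] [CharP L p] (hc : Fintype.card K = p ^ k) (hd1 : 1 ≤ d)
    (f : MvPolynomial (Fin (m + 1)) K) (hd : f.totalDegree = d)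
    (hirr : Irreducible (MvPolynomial.map φ f)) (hM : 100 * d ^ 3 ≤ Nat.sqrt (p ^ k)) :
    |(Nat.card {x : Fin (m + 1) → K // MvPolynomial.eval x f = 0} : ℝ) - ((p : ℝ) ^ k) ^ m| ≤
      (53 * d ^ 3 + d * (2 ^ d * (2 * d ^ 2) + 2 * d ^ 2)) * ((p : ℝ) ^ k) ^ m /
        Real.sqrt ((p : ℝ) ^ k) := by
  classical
  obtain ⟨𝒦, h𝒦⟩ : ∃ 𝒦 : Finset L, 𝒦 = Finset.univ.image φ := ⟨_, rfl⟩
  have hKm : ∀ x, x ∈ 𝒦 ↔ ∃ y, φ y = x := fun x => by simp [h𝒦]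
  have hKc : 𝒦.card = p ^ k := by
    rw [h𝒦, Finset.card_image_of_injective _ φ.injective, Finset.card_univ, hc]
  have hq1 : 1 < p ^ k := hc ▸ Fintype.one_lt_card
  have hfr : ∀ y : K, φ y ^ (p ^ k) = φ y := fun y => by
    rw [← map_pow, ← hc, FiniteField.pow_card]
  have hK : ∀ x, x ∈ 𝒦 ↔ x ^ (p ^ k) = x := by
    have hne : (X ^ (p ^ k) - X : L[X]) ≠ 0 := FiniteField.X_pow_card_sub_X_ne_zero L hq1
    have hsub : 𝒦 ⊆ (X ^ (p ^ k) - X : L[X]).roots.toFinset := by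
      intro x hx
      obtain ⟨y, rfl⟩ := (hKm x).1 hx
      rw [Multiset.mem_toFinset, mem_roots hne]
      simp [IsRoot, hfr]
    have heq := Finset.eq_of_subset_of_card_le hsub (by
      rw [hKc]
      refine (Multiset.toFinset_card_le _).trans ((card_roots' _).trans ?_)
      rw [FiniteField.X_pow_card_sub_X_natDegree_eq L hq1])
    intro x
    rw [heq, Multiset.mem_toFinset, mem_roots hne]
    simp [IsRoot, sub_eq_zero]
  have hq2 : d + 2 < 𝒦.card := by
    rw [hKc]
    have h1 := Nat.sqrt_le_self (p ^ k)
    have h2 : d ≤ d ^ 3 := Nat.le_self_pow (by norm_num) d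
    omega
  obtain ⟨g, hg⟩ : ∃ g, g = MvPolynomial.map φ f := ⟨_, rfl⟩
  rw [← hg] at hirr
  have hgd : g.totalDegree = d := by
    rw [hg, ← hd]
    rw [MvPolynomial.totalDegree, MvPolynomial.totalDegree,
      MvPolynomial.support_map_of_injective f φ.injective]
  obtain ⟨v, hv𝒦, hv0, hvh, hvd⟩ := exists_dir p d m 𝒦 (by omega) hq2 g hirr hgd
  choose w hw using fun i => (hKm (v i)).1 (hv𝒦 i)
  have hw0 : w 0 ≠ 0 := fun h => hv0 (by rw [← hw, h, map_zero])
  obtain ⟨c, hcdef⟩ : ∃ c, c = MvPolynomial.eval v (MvPolynomial.homogeneousComponent d g) := ⟨_, rfl⟩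
  rw [← hcdef] at hvh
  have hmem := shear_mem v g d hgd.le
  have hlead : (shear v g).coeff d = MvPolynomial.C c := by
    have h1 := hmem d
    have h2 : ((shear v g).coeff d).totalDegree ≤ 0 := by
      rw [← mem_MvF_nat]; simpa using h1
    have h3 := MvPolynomial.totalDegree_eq_zero_iff_eq_C.1 (Nat.le_zero.1 h2)
    have h4 := shear_lead v g d
    rw [h3, MvPolynomial.eval_C, ← hcdef] at h4
    rw [h3, h4]
  have hnd : (shear v g).natDegree ≤ d := by
    rw [natDegree_le_iff_coeff_eq_zero]
    intro N hN
    by_contra h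
    obtain ⟨s, hs⟩ := MvPolynomial.ne_zero_iff.1 h
    have h1 := hmem N s hs
    omega
  have hcc : (C (MvPolynomial.C c⁻¹ : MvPolynomial (Fin m) L)) * C (MvPolynomial.C c) = 1 := by
    rw [← map_mul, ← map_mul, inv_mul_cancel₀ hvh, map_one, map_one]
  have hunit : IsUnit (C (MvPolynomial.C c⁻¹ : MvPolynomial (Fin m) L)) :=
    IsUnit.of_mul_eq_one _ hcc
  obtain ⟨F, hF⟩ : ∃ F, F = C (MvPolynomial.C c⁻¹) * shear v g := ⟨_, rfl⟩
  have hFd : F.natDegree ≤ d := by rw [hF]; exact (natDegree_C_mul_le _ _).trans hnd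
  have hF1 : F.coeff d = 1 := by
    rw [hF, coeff_C_mul, hlead, ← map_mul, inv_mul_cancel₀ hvh, map_one]
  have hFm : F.Monic := monic_of_natDegree_le_of_coeff_eq_one d hFd hF1
  have hFn : F.natDegree = d := le_antisymm hFd (le_natDegree_of_ne_zero (by rw [hF1]; exact one_ne_zero))
  have hFi : Irreducible F := by
    rw [hF, irreducible_isUnit_mul hunit]
    exact shear_irr v hv0 g hirr
  have hFT : F ∈ ((MvF (Fin m) L).poly (-1)).S d := by
    have := ((MvF (Fin m) L).poly (-1)).mul_mem ((MvF (Fin m) L).poly_C (c := -1) (MvF_C c⁻¹)) hmem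
    rw [zero_add] at this
    rw [hF]; exact this
  have hFder : derivative F ≠ 0 := by
    rw [hF, derivative_C_mul, shear_deriv]
    refine mul_ne_zero hunit.ne_zero ?_
    rw [Ne, map_eq_zero_iff _ (shear_inj v hv0)]
    exact hvd
  have hfrφ : ∀ y, iterateFrobenius L p k (φ y) = φ y := fun y => by
    rw [iterateFrobenius_def, hfr]
  have hgfr : MvPolynomial.map (iterateFrobenius L p k) g = g := by
    rw [hg, MvPolynomial.map_map]
    rw [show (iterateFrobenius L p k).comp φ = φ from RingHom.ext hfrφ]
  have hcfr : iterateFrobenius L p k c = c := by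
    have h1 : c = φ (MvPolynomial.eval w (MvPolynomial.homogeneousComponent d f)) := by
      have hvw : v = fun i => φ (w i) := funext fun i => (hw i).symm
      rw [hcdef, hg, hvw]
      have h2 : MvPolynomial.homogeneousComponent d (MvPolynomial.map φ f) =
          MvPolynomial.map φ (MvPolynomial.homogeneousComponent d f) := by
        ext s
        rw [MvPolynomial.coeff_homogeneousComponent, MvPolynomial.coeff_map, MvPolynomial.coeff_map,
          MvPolynomial.coeff_homogeneousComponent]
        split_ifs <;> simp
      rw [h2, MvPolynomial.eval_map]
      exact (MvPolynomial.eval₂_comp_left φ (RingHom.id K) w _ ).symm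
    rw [h1, hfrφ]
  have hfix : ∀ j, MvPolynomial.map (iterateFrobenius L p k) (F.coeff j) = F.coeff j := by
    intro j
    have h1 := shear_map (iterateFrobenius L p k) v (fun i => by rw [← hw, hfrφ]) g
    rw [hgfr] at h1
    have h2 := congrArg (fun P => P.coeff j) h1
    simp only [coeff_map] at h2
    rw [hF, coeff_C_mul, map_mul, h2, MvPolynomial.map_C, map_inv₀, hcfr]
  have hav := average p k d m 𝒦 hK hKc F hd1 hFm hFi hFn hFT hFder hfix hM
  have hcount : Nat.card {x : Fin (m + 1) → K // MvPolynomial.eval x f = 0} =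
      (((Fintype.piFinset fun _ : Fin m => 𝒦) ×ˢ 𝒦).filter
        (fun P => (F.map (MvPolynomial.eval P.1)).eval P.2 = 0)).card := by
    have hFe : ∀ (a : Fin m → K) (y : K),
        (F.map (MvPolynomial.eval fun i => φ (a i))).eval (φ y) = 0 ↔
          MvPolynomial.eval (Fin.cons (w 0 * y) (fun i => a i + w i.succ * y)) f = 0 := by
      intro a y
      rw [hF, Polynomial.map_mul, eval_mul, shear_eval]
      simp only [map_C, MvPolynomial.eval_C, eval_C, mul_eq_zero, inv_eq_zero, hvh, false_or]
      have h2 : (Fin.cons (v 0 * φ y) (fun i => φ (a i) + v i.succ * φ y) : Fin (m + 1) → L) =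
          fun i => φ ((Fin.cons (w 0 * y) (fun i => a i + w i.succ * y) : Fin (m + 1) → K) i) := by
        funext i
        refine Fin.cases ?_ (fun i => ?_) i
        · simp [hw]
        · simp [hw]
      have h3 : MvPolynomial.eval (Fin.cons (v 0 * φ y) (fun i => φ (a i) + v i.succ * φ y)) g =
          φ (MvPolynomial.eval (Fin.cons (w 0 * y) (fun i => a i + w i.succ * y)) f) := by
        rw [h2, hg, MvPolynomial.eval_map]
        exact (MvPolynomial.eval₂_comp_left φ (RingHom.id K) _ _ ).symm
      rw [h3, map_eq_zero_iff _ φ.injective]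
    rw [Nat.card_eq_fintype_card, Fintype.card_subtype]
    have hcons : ∀ x : Fin (m + 1) → K, (Fin.cons (w 0 * (x 0 / w 0)) (fun i : Fin m =>
        (x i.succ - w i.succ * (x 0 / w 0)) + w i.succ * (x 0 / w 0)) : Fin (m + 1) → K) = x := by
      intro x
      funext i
      refine Fin.cases ?_ (fun i => ?_) i
      · simp [mul_div_cancel₀ _ hw0]
      · simp
    refine Finset.card_bij (fun x _ => ((fun i : Fin m => φ (x i.succ - w i.succ * (x 0 / w 0))),
      φ (x 0 / w 0))) ?_ ?_ ?_
    · intro x hx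
      rw [Finset.mem_filter] at hx ⊢
      refine ⟨Finset.mem_product.2 ⟨Fintype.mem_piFinset.2 fun i => (hKm _).2 ⟨_, rfl⟩,
        (hKm _).2 ⟨_, rfl⟩⟩, ?_⟩
      rw [hFe, hcons]
      exact hx.2
    · intro x _ x' _ h
      have h1 := φ.injective (congrArg Prod.snd h)
      have h2 : ∀ i : Fin m, x i.succ - w i.succ * (x 0 / w 0) =
          x' i.succ - w i.succ * (x' 0 / w 0) :=
        fun i => φ.injective (congrFun (congrArg Prod.fst h) i)
      rw [← hcons x, ← hcons x']
      simp only [h1] at h2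
      simp only [h1, h2]
    · rintro ⟨a, y⟩ h
      rw [Finset.mem_filter, Finset.mem_product, Fintype.mem_piFinset] at h
      obtain ⟨⟨ha, hy⟩, h0⟩ := h
      choose a' ha' using fun i => (hKm _).1 (ha i)
      obtain ⟨y', hy'⟩ := (hKm _).1 hy
      simp only at ha' hy'
      obtain rfl : a = fun i => φ (a' i) := funext fun i => (ha' i).symm
      subst hy'
      refine ⟨Fin.cons (w 0 * y') (fun i => a' i + w i.succ * y'), ?_, ?_⟩
      · rw [Finset.mem_filter]
        exact ⟨Finset.mem_univ _, (hFe a' y').1 h0⟩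
      · simp [mul_div_cancel_left₀ _ hw0]
  rw [hcount]
  exact hav

end final
end LW

theorem lang_weil_hypersurface (n d : ℕ) (hn : 2 ≤ n) (hd : 1 ≤ d) :
    ∃ C : ℝ, 0 < C ∧
      ∀ (p : ℕ) [Fact p.Prime], ∀ k : ℕ, 1 ≤ k →
        ∀ f : MvPolynomial (Fin n) (GaloisField p k),
          f.totalDegree = d →
          Irreducible (MvPolynomial.map
            (algebraMap (GaloisField p k) (AlgebraicClosure (GaloisField p k))) f) →
          |(Nat.card {x : Fin n → GaloisField p k // MvPolynomial.eval x f = 0} : ℝ) -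
              ((p : ℝ) ^ k) ^ (n - 1)| ≤
            C * ((p : ℝ) ^ k) ^ (n - 1) / Real.sqrt ((p : ℝ) ^ k) := by
  obtain ⟨m, rfl⟩ : ∃ m, n = m + 1 := ⟨n - 1, by omega⟩
  rw [Nat.add_sub_cancel]
  obtain ⟨B, hB⟩ : ∃ B : ℝ, B = ((100 * (d : ℝ) ^ 3) ^ 2) ^ 2 := ⟨_, rfl⟩
  have hB0 : 0 ≤ B := by rw [hB]; positivity
  have hd0 : (1 : ℝ) ≤ d := by exact_mod_cast hd
  obtain ⟨A, hA⟩ : ∃ A : ℝ, A = 53 * (d : ℝ) ^ 3 + d * (2 ^ d * (2 * d ^ 2) + 2 * d ^ 2) := ⟨_, rfl⟩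
  have hA0 : 0 < A := by rw [hA]; positivity
  refine ⟨A + B, by linarith, ?_⟩
  intro p _ k hk f hfd hirr
  obtain ⟨q, hq⟩ : ∃ q : ℝ, q = (p : ℝ) ^ k := ⟨_, rfl⟩
  have hq1 : 1 ≤ q := by
    rw [hq]; exact one_le_pow₀ (by exact_mod_cast (Fact.out : p.Prime).one_le)
  have hs1 : 1 ≤ Real.sqrt q := Real.one_le_sqrt.2 hq1
  have : Fintype (GaloisField p k) := Fintype.ofFinite _
  have hcard : Fintype.card (GaloisField p k) = p ^ k := by
    rw [← Nat.card_eq_fintype_card]; exact GaloisField.card p k (by omega)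
  by_cases hM : 100 * d ^ 3 ≤ Nat.sqrt (p ^ k)
  · have : CharP (AlgebraicClosure (GaloisField p k)) p :=
      charP_of_injective_algebraMap
        (algebraMap (GaloisField p k) (AlgebraicClosure (GaloisField p k))).injective p
    have h := LW.large (algebraMap (GaloisField p k) (AlgebraicClosure (GaloisField p k)))
      p k d m hcard hd f hfd hirr hM
    refine h.trans ?_
    rw [← hA]
    gcongr
    linarith
  · rw [not_le, Nat.sqrt_lt'] at hM
    have hqB : q ^ 2 ≤ B := by
      have h1 : q ≤ (100 * (d : ℝ) ^ 3) ^ 2 := by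
        rw [hq]; exact_mod_cast hM.le
      rw [hB]
      gcongr
    have hN : (Nat.card {x : Fin (m + 1) → GaloisField p k // MvPolynomial.eval x f = 0} : ℝ) ≤
        q ^ (m + 1) := by
      have h1 := Finite.card_subtype_le (fun x : Fin (m + 1) → GaloisField p k =>
        MvPolynomial.eval x f = 0)
      rw [Nat.card_eq_fintype_card (α := Fin (m + 1) → GaloisField p k), Fintype.card_fun, hcard,
        Fintype.card_fin] at h1
      rw [hq]
      exact_mod_cast h1
    rw [← hq]
    have hqm : 1 ≤ q ^ m := one_le_pow₀ hq1
    have habs : |(Nat.card {x : Fin (m + 1) → GaloisField p k // MvPolynomial.eval x f = 0} : ℝ) -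
        q ^ m| ≤ q ^ (m + 1) := by
      rw [abs_le]
      have h0 : (0 : ℝ) ≤ Nat.card {x : Fin (m + 1) → GaloisField p k // MvPolynomial.eval x f = 0} :=
        Nat.cast_nonneg _
      have h2 : q ^ m ≤ q ^ (m + 1) := pow_le_pow_right₀ hq1 (by omega)
      constructor <;> linarith
    refine habs.trans ?_
    rw [le_div_iff₀ (by linarith)]
    have hsq : Real.sqrt q ≤ q := by
      rw [Real.sqrt_le_left (by linarith)]; nlinarith
    calc q ^ (m + 1) * Real.sqrt q ≤ q ^ (m + 1) * q := by gcongr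
      _ = q ^ 2 * q ^ m := by ring
      _ ≤ (A + B) * q ^ m := by gcongr; linarith
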